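/- arXiv:2503.02536 — 2 statements merged into one kernel-verified Lean document; each statement's English description precedes it below -/
import Mathlib

section
/- Assume m ≥ n+1 and that f_1,…,f_m satisfy the SNC hypothesis. Then there exist elements g_1,…,g_{n−1} of the ideal I_{m+1}(Q^s_{∖1}) ⊆ S that form a regular sequence on S (i.e., each g_k is a nonzerodivisor on S/(g_1,…,g_{k−1}), and (g_1,…,g_{n−1}) ≠ S). -/
open MvPolynomial

noncomputable section

/-- The polynomial ring `R = ℂ[x_1,…,x_n]`. -/
abbrev Rp (n : ℕ) := MvPolynomial (Fin n) ℂ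

/-- The polynomial ring `S = ℂ[s_1,…,s_m,x_1,…,x_n]`; `Sum.inl i ↦ s_i`, `Sum.inr j ↦ x_j`. -/
abbrev Sp (n m : ℕ) := MvPolynomial (Fin m ⊕ Fin n) ℂ

/-- The inclusion `R ⊆ S`. -/
def toS (n m : ℕ) : Rp n →ₐ[ℂ] Sp n m := rename Sum.inr

/-- Column index set for `Q_{∖1}`: diagonal columns `2,…,m` and the `n` Jacobian columns. -/
abbrev Col (n m : ℕ) := {k : Fin m // (k : ℕ) ≠ 0} ⊕ Fin n

/-- The SNC (strict normal crossing) hypothesis, via the Jacobian criterion. -/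
def SNC (n m : ℕ) (f : Fin m → Rp n) : Prop :=
  (∀ i, Irreducible (f i)) ∧
  ∀ I : Finset (Fin m), 1 ≤ I.card → I.card ≤ n →
    ∀ p : Fin n → ℂ, p ≠ 0 → (∀ i ∈ I, eval p (f i) = 0) →
      (Matrix.of fun (i : I) (j : Fin n) => eval p (pderiv j (f i.1))).rank = I.card

/-- The matrix `Q = (diag(f_1,…,f_m) | J_f)`. -/
def Qmat (n m : ℕ) (f : Fin m → Rp n) : Matrix (Fin m) (Fin m ⊕ Fin n) (Rp n) :=
  Matrix.of fun i => Sum.elim (fun k => if i = k then f i else 0) (fun j => pderiv j (f i))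

/-- The matrix `Q_{∖1}`, obtained from `Q` by deleting the first column. -/
def Q1 (n m : ℕ) (f : Fin m → Rp n) : Matrix (Fin m) (Col n m) (Rp n) :=
  Matrix.of fun i => Sum.elim (fun k => if i = (k : Fin m) then f i else 0)
    (fun j => pderiv j (f i))

/-- The matrix `Q^s_{∖1}`: `Q_{∖1}` (over `S`) with the row `(s_2,…,s_m,0,…,0)` appended. -/
def Qs1 (n m : ℕ) (f : Fin m → Rp n) : Matrix (Option (Fin m)) (Col n m) (Sp n m) :=
  Matrix.of fun i? c =>
    i?.elim (Sum.elim (fun k : {k : Fin m // (k : ℕ) ≠ 0} => (X (Sum.inl (k : Fin m)) : Sp n m)) (fun _ : Fin n => (0 : Sp n m)) c)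
      (fun i => toS n m (Q1 n m f i c))

/-- The ideal generated by all `k × k` minors of a matrix. -/
def minorsIdeal {A : Type*} [CommRing A] {ι κ : Type*} (k : ℕ) (M : Matrix ι κ A) : Ideal A :=
  Ideal.span {x | ∃ r : Fin k → ι, ∃ c : Fin k → κ,
    Function.Injective r ∧ Function.Injective c ∧ x = (M.submatrix r c).det}

/-- `h_j = Σ_i s_i·(Π_{k≠i} f_k)·∂f_i/∂x_j`. -/
def hpoly (n m : ℕ) (f : Fin m → Rp n) (j : Fin n) : Sp n m :=
  ∑ i, X (Sum.inl i) * toS n m (((Finset.univ.erase i).prod f) * pderiv j (f i))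

/-- The linear form `Σ_i d_i·s_i`. -/
def linForm (n m : ℕ) (d : Fin m → ℕ) : Sp n m := ∑ i, (d i : Sp n m) * X (Sum.inl i)

/-- The likelihood ideal `I_A`: contraction to `S` of the ideal `⟨h_1,…,h_n⟩` of `S_f`. -/
def IA (n m : ℕ) (f : Fin m → Rp n) : Ideal (Sp n m) :=
  (Ideal.span (Set.range fun j =>
      algebraMap (Sp n m) (Localization.Away (toS n m (∏ i, f i))) (hpoly n m f j))).comap
    (algebraMap (Sp n m) (Localization.Away (toS n m (∏ i, f i))))


open RingTheory.Sequence CategoryTheory Abelian in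
lemma hom_subsingleton_of_ext {R : Type} [CommRing R] (N : ModuleCat.{0} R) (bs : List R)
    (M : ModuleCat.{0} R) (reg : IsWeaklyRegular M bs)
    (hext : ∀ i ≤ bs.length, Subsingleton (Ext N M i)) :
    Subsingleton (N →ₗ[R] M ⧸ (Ideal.ofList bs • ⊤ : Submodule R M)) := by
  induction bs generalizing M with
  | nil =>
    have h0 : Subsingleton (N ⟶ M) := Ext.addEquiv₀.subsingleton_congr.mp (hext 0 (by simp))
    have h1 : Subsingleton (N →ₗ[R] M) := ModuleCat.homAddEquiv.symm.subsingleton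
    let e : (M ⧸ (Ideal.ofList ([] : List R) • ⊤ : Submodule R M)) ≃ₗ[R] M :=
      Submodule.quotEquivOfEqBot _ (by simp)
    exact (LinearEquiv.congrRight (M := N) e).toEquiv.subsingleton
  | cons b bs ih =>
    rw [isWeaklyRegular_cons_iff] at reg
    have h1 := ih (ModuleCat.of R (QuotSMulTop b M)) reg.2 (by
      intro i hi
      have zero1 := AddCommGrpCat.isZero_of_iff_subsingleton.mpr (hext i (by simp; omega))
      have zero2 := AddCommGrpCat.isZero_of_iff_subsingleton.mpr (hext (i + 1) (by simp; omega))
      exact AddCommGrpCat.subsingleton_of_isZero <| ShortComplex.Exact.isZero_of_both_zeros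
        ((Ext.covariant_sequence_exact₃' N reg.1.smulShortComplex_shortExact) i (i + 1) rfl)
        (zero1.eq_zero_of_src _) (zero2.eq_zero_of_tgt _))
    let e := Submodule.quotOfListConsSMulTopEquivQuotSMulTopInner M b bs
    exact (LinearEquiv.congrRight (M := N) e).toEquiv.subsingleton

open RingTheory.Sequence CategoryTheory Abelian in
/-- depth comparison -/
lemma length_le_of_socle {R : Type} [CommRing R] [IsNoetherianRing R] (J : Ideal R) (hJ : J ≠ ⊤)
    (as bs : List R) (ha : ∀ r ∈ as, r ∈ J) (rega : IsWeaklyRegular R as)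
    (regb : IsWeaklyRegular R bs) (z : R) (hz : z ∉ Ideal.ofList bs)
    (hJz : ∀ r ∈ J, r * z ∈ Ideal.ofList bs) : as.length ≤ bs.length := by
  by_contra hlt
  push Not at hlt
  have rega' : IsRegular R as := ⟨rega, by
    intro h
    apply hJ
    rw [eq_top_iff, show (⊤ : Ideal R) = Ideal.ofList as • ⊤ from h]
    simp only [smul_eq_mul, Ideal.mul_top]
    exact Ideal.span_le.mpr ha⟩
  have hext := ModuleCat.subsingleton_ext_of_exists_isRegular J (ModuleCat.of R (R ⧸ J))
    (by
      have : Module.support R (ModuleCat.of R (R ⧸ J)) = PrimeSpectrum.zeroLocus J := by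
        change Module.support R (R ⧸ J) = _
        rw [Module.support_eq_zeroLocus, Ideal.annihilator_quotient]
      exact this.subset) (ModuleCat.of R R)
    (by
      change J • (⊤ : Submodule R R) < ⊤
      simpa [lt_top_iff_ne_top] using hJ) as ha rega'
  have hs := hom_subsingleton_of_ext (ModuleCat.of R (R ⧸ J)) bs (ModuleCat.of R R) regb
    (fun i hi => hext i (by omega))
  let φ : (R ⧸ J) →ₗ[R] R ⧸ (Ideal.ofList bs • ⊤ : Submodule R R) :=
    Submodule.liftQ J ((LinearMap.toSpanSingleton R _ (Submodule.Quotient.mk z))) (by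
      intro r hr
      rw [LinearMap.mem_ker, LinearMap.toSpanSingleton_apply, ← Submodule.Quotient.mk_smul,
        Submodule.Quotient.mk_eq_zero]
      simpa using hJz r hr)
  have h0 : φ = 0 := hs.elim _ _
  have h1 : φ (Submodule.Quotient.mk 1) = 0 := by rw [h0]; rfl
  rw [Submodule.liftQ_apply, LinearMap.toSpanSingleton_apply, one_smul,
    Submodule.Quotient.mk_eq_zero] at h1
  exact hz (by simpa using h1)

open RingTheory.Sequence in
lemma exists_reg_polys {K : Type} [Field K] (h : ℕ) (p : Fin h → Polynomial K)
    (hp : ∀ i, (p i).Monic) :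
    ∃ rs : List (MvPolynomial (Fin h) K), rs.length = h ∧
      (∀ r ∈ rs, ∃ i, r = Polynomial.aeval (X i : MvPolynomial (Fin h) K) (p i)) ∧
      IsWeaklyRegular (MvPolynomial (Fin h) K) rs := by
  induction h with
  | zero => exact ⟨[], rfl, by simp, by simp⟩
  | succ h ih =>
    obtain ⟨rs, hlen, hmem, hreg⟩ := ih (fun i => p i.succ) (fun i => hp _)
    let A := MvPolynomial (Fin h) K
    let e := finSuccEquiv K h
    have h1 : IsWeaklyRegular (Polynomial A) (rs.map (algebraMap A (Polynomial A))) := hreg.of_flat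
    let q : Polynomial A := (p 0).map (algebraMap K A)
    have hq : q.Monic := (hp 0).map _
    have h2 : IsWeaklyRegular (Polynomial A) (rs.map (algebraMap A (Polynomial A)) ++ [q]) := by
      rw [isWeaklyRegular_append_iff]
      refine ⟨h1, ?_⟩
      rw [isWeaklyRegular_singleton_iff]
      rw [← Ideal.map_ofList, isSMulRegular_iff_right_eq_zero_of_smul]
      intro x hx
      obtain ⟨x, rfl⟩ := Submodule.Quotient.mk_surjective _ x
      rw [← Submodule.Quotient.mk_smul, Submodule.Quotient.mk_eq_zero] at hx
      rw [Submodule.Quotient.mk_eq_zero]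
      simp only [smul_eq_mul, Ideal.mul_top] at hx ⊢
      set a := Ideal.ofList rs
      have key : ∀ y : Polynomial A, y ∈ a.map (algebraMap A (Polynomial A)) ↔
          y.map (Ideal.Quotient.mk a) = 0 := by
        intro y
        rw [Polynomial.algebraMap_eq, Ideal.mem_map_C_iff, Polynomial.ext_iff]
        simp [Polynomial.coeff_map, Ideal.Quotient.eq_zero_iff_mem]
      rw [key] at hx ⊢
      rw [Polynomial.map_mul] at hx
      exact ((hq.map (Ideal.Quotient.mk a)).mul_right_eq_zero_iff).mp hx
    refine ⟨(rs.map (algebraMap A (Polynomial A)) ++ [q]).map e.symm, by simp [hlen], ?_, ?_⟩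
    · intro r hr
      rw [List.mem_map] at hr
      obtain ⟨r, hr, rfl⟩ := hr
      rw [List.mem_append, List.mem_map, List.mem_singleton] at hr
      rcases hr with ⟨r, hr, rfl⟩ | rfl
      · obtain ⟨i, rfl⟩ := hmem r hr
        refine ⟨i.succ, ?_⟩
        rw [AlgEquiv.symm_apply_eq, ← Polynomial.aeval_algebraMap_apply, ← AlgEquiv.coe_toAlgHom, 
          ← Polynomial.aeval_algHom_apply]
        simp [e, finSuccEquiv_X_succ]
      · refine ⟨0, ?_⟩
        rw [AlgEquiv.symm_apply_eq, ← AlgEquiv.coe_toAlgHom, ← Polynomial.aeval_algHom_apply]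
        simp only [AlgEquiv.coe_toAlgHom, e, finSuccEquiv_X_zero, q]
        rw [Polynomial.aeval_def, Polynomial.map, Polynomial.eval₂_eq_sum, Polynomial.eval₂_eq_sum]
        rfl
    · refine (AddEquiv.isWeaklyRegular_congr (e := e.symm.toAddEquiv) ?_).mp h2
      rw [List.forall₂_map_right_iff]
      rw [List.forall₂_same]
      intro x _ y
      simp

open RingTheory.Sequence in
lemma core_depth {D : Type} [CommRing D] [IsDomain D] [IsNoetherianRing D] (h : ℕ)
    (P : Ideal (MvPolynomial (Fin h) D)) [P.IsPrime] (hPD : ∀ d : D, C d ∈ P → d = 0)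
    (halg : ∀ i, ∃ q : Polynomial D, q ≠ 0 ∧
      Polynomial.aeval (X i : MvPolynomial (Fin h) D) q ∈ P)
    (rs : List (MvPolynomial (Fin h) D)) (reg : IsWeaklyRegular (MvPolynomial (Fin h) D) rs)
    (z : MvPolynomial (Fin h) D) (hP : ∀ x, x ∈ P ↔ x * z ∈ Ideal.ofList rs) :
    h ≤ rs.length := by
  let K := FractionRing D
  let B := MvPolynomial (Fin h) K
  let M := (nonZeroDivisors D).map (C : D →+* MvPolynomial (Fin h) D)
  let : Algebra (MvPolynomial (Fin h) D) B := MvPolynomial.algebraMvPolynomial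
  have : IsLocalization M B := MvPolynomial.isLocalization (nonZeroDivisors D) K
  have hdisj : Disjoint (M : Set (MvPolynomial (Fin h) D)) (P : Set _) := by
    rw [Set.disjoint_left]
    rintro _ ⟨d, hd, rfl⟩ hdP
    exact nonZeroDivisors.ne_zero hd (hPD d hdP)
  let J := P.map (algebraMap (MvPolynomial (Fin h) D) B)
  have hJp : J.IsPrime := IsLocalization.isPrime_of_isPrime_disjoint M B P inferInstance hdisj
  choose q hq0 hqP using halg
  have hqK : ∀ i, (q i).map (algebraMap D K) ≠ 0 := fun i =>
    (Polynomial.map_ne_zero_iff (IsFractionRing.injective D K)).mpr (hq0 i)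
  let p : Fin h → Polynomial K := fun i => (q i).map (algebraMap D K) *
    Polynomial.C ((q i).map (algebraMap D K)).leadingCoeff⁻¹
  obtain ⟨as, hlen, hmem, hreg⟩ := exists_reg_polys h p
    (fun i => Polynomial.monic_mul_leadingCoeff_inv (hqK i))
  have := length_le_of_socle J hJp.ne_top as (rs.map (algebraMap _ B)) (by
      intro r hr
      obtain ⟨i, rfl⟩ := hmem r hr
      change Polynomial.aeval _ ((q i).map (algebraMap D K) * _) ∈ J
      rw [map_mul]
      apply Ideal.mul_mem_right
      have h1 := Ideal.mem_map_of_mem (algebraMap (MvPolynomial (Fin h) D) B) (hqP i)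
      convert h1 using 1
      rw [Polynomial.aeval_map_algebraMap, ← Polynomial.aeval_algebraMap_apply]
      congr 2
      exact (map_X (algebraMap D K) i).symm) hreg (reg.of_isLocalization B M) (algebraMap _ B z) (by
      rw [← Ideal.map_ofList]
      intro hz
      rw [IsLocalization.algebraMap_mem_map_algebraMap_iff M B] at hz
      obtain ⟨m, hm, hmz⟩ := hz
      exact Set.disjoint_left.mp hdisj hm ((hP m).mpr hmz)) (by
      intro r hr
      rw [← Ideal.map_ofList]
      let L : Ideal B := Submodule.comap (LinearMap.toSpanSingleton B B
        (algebraMap (MvPolynomial (Fin h) D) B z)) ((Ideal.ofList rs).map (algebraMap _ B))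
      have hJL : J ≤ L := by
        rw [Ideal.map_le_iff_le_comap]
        intro y hy
        rw [Ideal.mem_comap, Submodule.mem_comap, LinearMap.toSpanSingleton_apply, smul_eq_mul, ← map_mul]
        exact Ideal.mem_map_of_mem _ ((hP y).mp hy)
      exact hJL hr)
  rw [hlen, List.length_map] at this
  exact this

lemma exists_tb_index {F A ι : Type} [Field F] [CommRing A] [IsDomain A] [Algebra F A]
    (x : ι → A) [Algebra.IsAlgebraic (Algebra.adjoin F (Set.range x)) A] :
    ∃ T : Set ι, IsTranscendenceBasis F (fun t : T => x t) := by
  obtain ⟨t, hts, htb⟩ := exists_isTranscendenceBasis_subset (R := F) (Set.range x)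
  obtain ⟨T, hT1, hT2⟩ := Set.SurjOn.exists_bijOn_subset
    (f := x) (s := Set.univ) (t := t) (fun a ha => by
      obtain ⟨i, hi⟩ := hts ha
      exact ⟨i, trivial, hi⟩)
  refine ⟨T, (isTranscendenceBasis_image hT2.injOn).mpr ?_⟩
  rw [hT2.image_eq]
  exact htb

open RingTheory.Sequence in
lemma assoc_trdeg {F σ : Type} [Field F] [Finite σ]
    (P : Ideal (MvPolynomial σ F)) [P.IsPrime]
    (rs : List (MvPolynomial σ F)) (reg : IsWeaklyRegular (MvPolynomial σ F) rs)
    (z : MvPolynomial σ F) (hP : ∀ x, x ∈ P ↔ x * z ∈ Ideal.ofList rs) :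
    ∃ T : Set σ, AlgebraicIndependent F (fun t : T => Ideal.Quotient.mk P (X (t : σ))) ∧
      Nat.card σ ≤ rs.length + Nat.card T := by
  classical
  let x : σ → MvPolynomial σ F ⧸ P := fun i => Ideal.Quotient.mk P (X i)
  have hadj : Algebra.adjoin F (Set.range x) = ⊤ := by
    rw [Algebra.adjoin_range_eq_range_aeval, AlgHom.range_eq_top]
    intro y
    obtain ⟨y, rfl⟩ := Ideal.Quotient.mk_surjective y
    refine ⟨y, ?_⟩
    have : aeval x = Ideal.Quotient.mkₐ F P := by
      ext i; simp [x]
    rw [this]; rfl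
  have : Algebra.IsAlgebraic (Algebra.adjoin F (Set.range x)) (MvPolynomial σ F ⧸ P) := by
    rw [hadj]
    exact ⟨fun y => isAlgebraic_algebraMap (⟨y, trivial⟩ : (⊤ : Subalgebra F _))⟩
  obtain ⟨T, hT⟩ := exists_tb_index (F := F) x
  refine ⟨T, hT.1, ?_⟩
  let h := Nat.card (Tᶜ : Set σ)
  have hcard : Nat.card σ = h + Nat.card T := by
    have e0 := Nat.card_congr (Equiv.Set.sumCompl T)
    rw [Nat.card_sum] at e0
    omega
  let e : Fin h ⊕ T ≃ σ :=
    ((Equiv.sumCongr (Finite.equivFin (Tᶜ : Set σ)).symm (Equiv.refl T)).trans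
      (Equiv.sumComm _ _)).trans (Equiv.Set.sumCompl T)
  have heT : ∀ t : T, e (Sum.inr t) = t := fun t => rfl
  let D := MvPolynomial T F
  let Φ : MvPolynomial σ F ≃ₐ[F] MvPolynomial (Fin h) D :=
    (renameEquiv F e.symm).trans (sumAlgEquiv F (Fin h) T)
  have hΦC : ∀ d : D, Φ.symm (C d) = rename (fun t : T => (t : σ)) d := by
    intro d
    have : (Φ.symm : MvPolynomial (Fin h) D →ₐ[F] MvPolynomial σ F).comp
      (IsScalarTower.toAlgHom F D (MvPolynomial (Fin h) D)) = rename (fun t : T => (t : σ)) := by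
      ext t : 1
      change rename e ((sumAlgEquiv F (Fin h) T).symm (C (X t))) = _
      rw [sumAlgEquiv_symm_C_X, rename_X, rename_X, heT]
    exact DFunLike.congr_fun this d
  let P' : Ideal (MvPolynomial (Fin h) D) := P.comap Φ.symm
  have hP' : P'.IsPrime := Ideal.comap_isPrime _ _
  have hmk : ∀ d : D, Ideal.Quotient.mk P (rename (fun t : T => (t : σ)) d) =
      aeval (fun t : T => x t) d := by
    intro d
    have : (Ideal.Quotient.mkₐ F P).comp (rename (fun t : T => (t : σ))) =
      aeval (fun t : T => x t) := by
      ext t; simp [x]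
    exact DFunLike.congr_fun this d
  have hmemmap : ∀ y, y ∈ Ideal.ofList (rs.map Φ) ↔ Φ.symm y ∈ Ideal.ofList rs := by
    intro y
    have h1 : Ideal.ofList (rs.map Φ) = (Ideal.ofList rs).map (RingHomClass.toRingHom Φ) := by
      rw [Ideal.map_ofList]; rfl
    have h2 : Ideal.ofList rs =
        (Ideal.ofList (rs.map Φ)).map (RingHomClass.toRingHom Φ.symm) := by
      rw [Ideal.map_ofList, List.map_map]
      congr 1
      conv_lhs => rw [← List.map_id rs]
      apply List.map_congr_left
      intro a _
      exact (Φ.symm_apply_apply a).symm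
    constructor
    · intro hy
      rw [h2]
      exact Ideal.mem_map_of_mem (RingHomClass.toRingHom Φ.symm) hy
    · intro hy
      rw [h1]
      have := Ideal.mem_map_of_mem (RingHomClass.toRingHom Φ) hy
      rwa [show (RingHomClass.toRingHom Φ) (Φ.symm y) = y from Φ.apply_symm_apply y] at this
  have := core_depth h P' (by
      intro d hd
      have hd : Φ.symm (C d) ∈ P := hd
      rw [hΦC, ← Ideal.Quotient.eq_zero_iff_mem, hmk] at hd
      exact (algebraicIndependent_iff.mp hT.1) d hd) (by
      intro i
      have := hT.isAlgebraic
      obtain ⟨q, hq0, hq⟩ := this.isAlgebraic (x (e (Sum.inl i)))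
      let ε := hT.1.aevalEquiv
      refine ⟨q.map (ε.symm : _ →+* D), ?_, ?_⟩
      · exact (Polynomial.map_ne_zero_iff ε.symm.injective).mpr hq0
      · change Φ.symm _ ∈ P
        rw [← Ideal.Quotient.eq_zero_iff_mem, ← hq]
        rw [Polynomial.aeval_def, Polynomial.eval₂_map]
        change ((Ideal.Quotient.mk P).comp (RingHomClass.toRingHom Φ.symm)) _ = _
        rw [Polynomial.hom_eval₂, Polynomial.aeval_def]
        congr 1
        · ext y
          obtain ⟨y, rfl⟩ := ε.surjective y
          simp only [RingHom.comp_apply]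
          change Ideal.Quotient.mk P (Φ.symm (C (ε.symm (ε y)))) = _
          rw [AlgEquiv.symm_apply_apply, hΦC, hmk]
          rfl
        · change Ideal.Quotient.mk P (rename e ((sumAlgEquiv F (Fin h) T).symm (X i))) = Ideal.Quotient.mk P (X _)
          rw [sumAlgEquiv_symm_X, rename_X])
    (rs.map Φ) (by
      refine (AddEquiv.isWeaklyRegular_congr (e := Φ.toAddEquiv) ?_).mp reg
      rw [List.forall₂_map_right_iff, List.forall₂_same]
      intro x _ y
      simp) (Φ z) (by
      intro y
      rw [hmemmap, map_mul, AlgEquiv.symm_apply_apply, ← hP]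
      rfl)
  rw [List.length_map] at this
  omega

open RingTheory.Sequence in
lemma exists_regular_of_trdeg {F σ : Type} [Field F] [Finite σ]
    (I : Ideal (MvPolynomial σ F)) (k : ℕ)
    (hI : ∀ P : Ideal (MvPolynomial σ F), P.IsPrime → I ≤ P → ∀ T : Set σ,
      AlgebraicIndependent F (fun t : T => Ideal.Quotient.mk P (X (t : σ))) →
      k + Nat.card T ≤ Nat.card σ) (j : ℕ) (hj : j ≤ k) :
    ∃ rs : List (MvPolynomial σ F), rs.length = j ∧ (∀ r ∈ rs, r ∈ I) ∧
      IsWeaklyRegular (MvPolynomial σ F) rs := by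
  induction j with
  | zero => exact ⟨[], rfl, by simp, by simp⟩
  | succ j ih =>
    obtain ⟨rs, hlen, hmem, hreg⟩ := ih (by omega)
    let S := MvPolynomial σ F
    let M := S ⧸ (Ideal.ofList rs • ⊤ : Submodule S S)
    by_cases hs : Subsingleton ((S ⧸ I) →ₗ[S] M)
    · obtain ⟨r, hr, hrM⟩ := IsSMulRegular.subsingleton_linearMap_iff.mp hs
      rw [Ideal.annihilator_quotient] at hr
      refine ⟨rs ++ [r], by simp [hlen], ?_, ?_⟩
      · intro y hy
        rw [List.mem_append, List.mem_singleton] at hy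
        rcases hy with hy | rfl
        exacts [hmem _ hy, hr]
      · rw [isWeaklyRegular_append_iff, isWeaklyRegular_singleton_iff]
        exact ⟨hreg, hrM⟩
    · exfalso
      rw [not_subsingleton_iff_nontrivial] at hs
      obtain ⟨φ, hφ⟩ := exists_ne (0 : (S ⧸ I) →ₗ[S] M)
      let w : M := φ (Submodule.Quotient.mk 1)
      have hw : w ≠ 0 := by
        intro hw
        apply hφ
        ext
        exact hw
      obtain ⟨P, hP, hle⟩ := exists_le_isAssociatedPrime_of_isNoetherianRing S w hw
      obtain ⟨hPp, u, hu⟩ := isAssociatedPrime_iff.mp hP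
      obtain ⟨z, rfl⟩ := Submodule.Quotient.mk_surjective _ u
      have hz : ∀ x, x ∈ P ↔ x * z ∈ Ideal.ofList rs := by
        intro x
        rw [hu, Submodule.mem_colon_singleton, Submodule.mem_bot, ← Submodule.Quotient.mk_smul,
          Submodule.Quotient.mk_eq_zero, smul_eq_mul, smul_eq_mul, Ideal.mul_top]
      obtain ⟨T, hT, hc⟩ := assoc_trdeg P rs hreg z hz
      have := hI P hPp (by
        intro y hy
        apply hle
        rw [Submodule.mem_colon_singleton, Submodule.mem_bot, ← map_smul, ← Submodule.Quotient.mk_smul,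
          (Submodule.Quotient.mk_eq_zero I).mpr (by simpa using hy), map_zero]) T hT
      omega

lemma exists_vecMul_zero {K ρ κ : Type} [Field K] [Fintype ρ] [Fintype κ] [DecidableEq ρ]
    (M : Matrix ρ κ K) (N : ℕ) (hN : Fintype.card ρ = N)
    (hM : ∀ r : Fin N → ρ, ∀ c : Fin N → κ, Function.Injective r → Function.Injective c →
      (M.submatrix r c).det = 0) : ∃ v : ρ → K, v ≠ 0 ∧ Matrix.vecMul v M = 0 := by
  classical
  by_contra hcon
  push Not at hcon
  have hli : LinearIndependent K M.row := by
    rw [← Matrix.vecMul_injective_iff]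
    intro v w hvw
    by_contra hne
    refine hcon (v - w) (sub_ne_zero.mpr hne) ?_
    rw [Matrix.sub_vecMul]
    exact sub_eq_zero.mpr hvw
  have hrank : M.rank = Fintype.card ρ := hli.rank_matrix
  rw [Matrix.rank_eq_finrank_span_cols] at hrank
  obtain ⟨κ', a, ha, hspan, hli'⟩ := exists_linearIndependent' K M.col
  have : Finite κ' := Finite.of_injective a ha
  have : Fintype κ' := Fintype.ofFinite κ'
  have hc : Fintype.card κ' = N := by
    rw [← finrank_span_eq_card hli', hspan, hrank, hN]
  let e := (Fintype.equivFinOfCardEq hc).symm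
  let r := (Fintype.equivFinOfCardEq hN).symm
  have h0 := hM r (a ∘ e) r.injective (ha.comp e.injective)
  have hu : LinearIndependent K (M.submatrix r (a ∘ e)).col := by
    have h1 : LinearIndependent K (fun i => (LinearEquiv.funCongrLeft K K r) ((M.col ∘ a ∘ e) i)) :=
      (hli'.comp e e.injective).map' (LinearEquiv.funCongrLeft K K r).toLinearMap
        (LinearEquiv.ker _)
    exact h1
  rw [Matrix.linearIndependent_cols_iff_isUnit, Matrix.isUnit_iff_isUnit_det, h0] at hu
  exact not_isUnit_zero hu

lemma euler_aeval {n : ℕ} {K : Type} [Field K] [Algebra ℂ K] (p : Fin n → K) (g : Rp n) (d : ℕ)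
    (hg : g.IsHomogeneous d) :
    ∑ j, aeval p (pderiv j g) * p j = d * aeval p g := by
  have := congrArg (aeval p) hg.sum_X_mul_pderiv
  simp only [map_sum, map_mul, aeval_X, nsmul_eq_mul, map_natCast] at this
  rw [← this]
  exact Finset.sum_congr rfl fun _ _ => mul_comm _ _

lemma radical_of_zeroLocus {n : ℕ} (I : Ideal (Rp n))
    (h : ∀ q : Fin n → ℂ, (∀ g ∈ I, aeval q g = 0) → q = 0) (j : Fin n) :
    ∃ N : ℕ, (X j : Rp n) ^ N ∈ I := by
  have : (X j : Rp n) ∈ I.radical := by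
    rw [← vanishingIdeal_zeroLocus_eq_radical (K := ℂ), mem_vanishingIdeal_iff]
    intro q hq
    rw [h q hq]
    simp
  exact this

lemma snc_field {n m : ℕ} {f : Fin m → Rp n} (hsnc : SNC n m f) {K : Type} [Field K] [Algebra ℂ K]
    (p : Fin n → K) (hp : p ≠ 0) (I : Finset (Fin m)) (hI : I.card ≤ n)
    (hfI : ∀ i ∈ I, aeval p (f i) = 0) (c : I → K)
    (hc : ∀ j, ∑ i, c i * aeval p (pderiv j (f i.1)) = 0) : c = 0 := by
  classical
  by_contra hcne
  have hI1 : 1 ≤ I.card := by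
    by_contra h
    have : I = ∅ := by simpa using h
    subst this
    exact hcne (Subsingleton.elim _ _)
  let J : Matrix I (Fin n) (Rp n) := Matrix.of fun i j => pderiv j (f i.1)
  let A : Ideal (Rp n) := Ideal.span ((f '' I) ∪ {x | ∃ r : Fin I.card → I, ∃ c : Fin I.card → Fin n,
    Function.Injective r ∧ Function.Injective c ∧ x = (J.submatrix r c).det})
  have hA0 : ∀ q : Fin n → ℂ, (∀ g ∈ A, aeval q g = 0) → q = 0 := by
    intro q hq
    by_contra hq0
    have h1 := hsnc.2 I hI1 hI q hq0 (fun i hi => by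
      rw [← coe_aeval_eq_eval]
      exact hq _ (Ideal.subset_span (Or.inl ⟨i, hi, rfl⟩)))
    obtain ⟨v, hv, hv0⟩ := exists_vecMul_zero (J.map (aeval q)) I.card (by simp) (by
      intro r c hr hc
      have := hq _ (Ideal.subset_span (Or.inr ⟨r, c, hr, hc, rfl⟩))
      rw [AlgHom.map_det] at this
      exact this)
    have h2 : LinearIndependent ℂ (J.map (aeval q)).row := by
      rw [linearIndependent_iff_card_eq_finrank_span, Set.finrank,
        ← Matrix.rank_eq_finrank_span_row, Fintype.card_coe, ← h1]
      rfl
    rw [← Matrix.vecMul_injective_iff] at h2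
    exact hv (h2 (by simpa using hv0))
  apply hp
  funext j
  obtain ⟨N, hN⟩ := radical_of_zeroLocus A hA0 j
  have hle : A ≤ RingHom.ker (aeval p : Rp n →ₐ[ℂ] K) := by
    rw [Ideal.span_le]
    rintro _ (⟨i, hi, rfl⟩ | ⟨r, c', hr, hc', rfl⟩)
    · exact hfI i hi
    · change aeval p _ = 0
      rw [AlgHom.map_det, ← Matrix.exists_vecMul_eq_zero_iff]
      have hrb : Function.Bijective r := by
        rw [Fintype.bijective_iff_injective_and_card]
        exact ⟨hr, by simp⟩
      refine ⟨c ∘ r, ?_, ?_⟩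
      · intro h0
        apply hcne
        funext i
        obtain ⟨k, rfl⟩ := hrb.2 i
        exact congrFun h0 k
      · funext k
        refine Eq.trans ?_ (hc (c' k))
        exact Fintype.sum_bijective r hrb _ _ (fun i => rfl)
  have h3 : aeval p ((X j : Rp n) ^ N) = 0 := hle hN
  rw [map_pow, aeval_X] at h3
  exact eq_zero_of_pow_eq_zero h3

lemma card_zero_lt {n m : ℕ} {f : Fin m → Rp n} {d : Fin m → ℕ} (hsnc : SNC n m f)
    (hfh : ∀ i, (f i).IsHomogeneous (d i)) {K : Type} [Field K] [Algebra ℂ K]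
    (p : Fin n → K) (hp : p ≠ 0) (I : Finset (Fin m))
    (hfI : ∀ i ∈ I, aeval p (f i) = 0) : I.card < n := by
  classical
  by_contra hlt
  push Not at hlt
  obtain ⟨I', hI', hcard⟩ := Finset.exists_subset_card_eq hlt
  let e : Fin n ≃ I' := (I'.equivFinOfCardEq hcard).symm
  let M : Matrix (Fin n) (Fin n) K := Matrix.of fun i j => aeval p (pderiv j (f (e i).1))
  have hdet : M.det = 0 := by
    rw [← Matrix.exists_mulVec_eq_zero_iff]
    refine ⟨p, hp, ?_⟩
    funext i
    have := euler_aeval p (f (e i).1) _ (hfh _)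
    rw [hfI _ (hI' (e i).2), mul_zero] at this
    exact this
  rw [← Matrix.exists_vecMul_eq_zero_iff] at hdet
  obtain ⟨v, hv, hv0⟩ := hdet
  have := snc_field hsnc p hp I' hcard.le (fun i hi => hfI i (hI' hi)) (v ∘ e.symm) (by
    intro j
    refine Eq.trans ?_ (congrFun hv0 j)
    exact Fintype.sum_equiv e.symm _ _ (fun i => by simp [M]))
  apply hv
  funext i
  simpa using congrFun this (e i)

lemma aeval_scale {n : ℕ} {K : Type} [Field K] [Algebra ℂ K] (p : Fin n → K) (t : K) (g : Rp n)
    (d : ℕ) (hg : g.IsHomogeneous d) :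
    aeval (fun i => p i * t) g = t ^ d * aeval p g := by
  rw [aeval_def, aeval_def, eval₂_eq', eval₂_eq', Finset.mul_sum]
  refine Finset.sum_congr rfl fun e he => ?_
  have h1 := hg (mem_support_iff.mp he)
  rw [show (Finsupp.weight 1) e = ∑ i, e i by simp [Finsupp.weight_apply, Finsupp.sum_fintype]] at h1
  rw [← h1, ← Finset.prod_pow_eq_pow_sum]
  simp only [mul_pow, Finset.prod_mul_distrib]
  ring

lemma isAlgebraic_coord {n m : ℕ} (hm : n + 1 ≤ m) {f : Fin m → Rp n} {d : Fin m → ℕ}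
    (hsnc : SNC n m f) (hd : ∀ i, 1 ≤ d i)
    (hfh : ∀ i, (f i).IsHomogeneous (d i)) {K : Type} [Field K] [Algebra ℂ K]
    (p : Fin n → K) (j : Fin n) :
    IsAlgebraic (Algebra.adjoin ℂ (Set.range fun i => aeval p (f i))) (p j) := by
  classical
  have hnull : ∀ j : Fin n, ∃ N : ℕ, (X j : Rp n) ^ N ∈ Ideal.span (Set.range f) := by
    apply radical_of_zeroLocus
    intro q hq
    by_contra hq0
    have := card_zero_lt hsnc hfh q hq0 Finset.univ
      (fun i _ => hq _ (Ideal.subset_span ⟨i, rfl⟩))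
    rw [Finset.card_univ, Fintype.card_fin] at this
    omega
  let A := Algebra.adjoin ℂ (Set.range fun i => aeval p (f i))
  have hint : p j ∈ (integralClosure (Subring.closure (A : Set K)) K).toSubring := by
    rw [← iInf_valuationSubring_superset, Subring.mem_iInf]
    rintro ⟨V, hV⟩
    change p j ∈ V
    have : Nonempty (Fin n) := ⟨j⟩
    obtain ⟨k, hk⟩ := Finite.exists_max (fun i => V.valuation (p i))
    by_cases hk1 : V.valuation (p k) ≤ 1
    · rw [← V.valuation_le_one_iff]
      exact (hk j).trans hk1
    exfalso
    push Not at hk1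
    have hpk : p k ≠ 0 := by
      intro h0
      rw [h0, map_zero] at hk1
      exact not_lt_of_ge zero_le_one hk1
    have hinv : V.valuation (p k)⁻¹ < 1 := by
      rw [map_inv₀]
      exact inv_lt_one_of_one_lt₀ hk1
    let V' : Subalgebra ℂ K := { V.toSubring with
      algebraMap_mem' := fun r => hV (A.algebraMap_mem r) }
    let q : Fin n → K := fun i => p i * (p k)⁻¹
    have hqV : ∀ i, q i ∈ V' := by
      intro i
      change q i ∈ V
      rw [← V.valuation_le_one_iff, map_mul, map_inv₀]
      exact mul_inv_le_one_of_le₀ (hk i) zero_le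
    have hgV : ∀ g : Rp n, aeval q g ∈ V' := by
      intro g
      have h1 : Algebra.adjoin ℂ (Set.range q) ≤ V' := by
        rw [Algebra.adjoin_le_iff]
        rintro _ ⟨i, rfl⟩
        exact hqV i
      apply h1
      rw [Algebra.adjoin_range_eq_range_aeval]
      exact ⟨g, rfl⟩
    obtain ⟨N, hN⟩ := hnull k
    have hall : ∀ g ∈ Ideal.span (Set.range f), V.valuation (aeval q g) < 1 := by
      intro g hg
      induction hg using Submodule.span_induction with
      | mem x hx =>
        obtain ⟨i, rfl⟩ := hx
        have h2 : aeval q (f i) = (p k)⁻¹ ^ (d i) * aeval p (f i) := by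
          exact aeval_scale p _ _ _ (hfh i)
        rw [h2, map_mul, map_pow]
        have h3 : V.valuation (aeval p (f i)) ≤ 1 := by
          rw [V.valuation_le_one_iff]
          exact hV (Algebra.subset_adjoin ⟨i, rfl⟩)
        exact mul_lt_one_of_lt_of_le (pow_lt_one₀ zero_le hinv (by have := hd i; omega)) h3
      | zero => simp
      | add x y _ _ hx hy =>
        rw [map_add]
        exact Valuation.map_add_lt _ hx hy
      | smul a x _ hx =>
        rw [smul_eq_mul, map_mul, map_mul]
        refine mul_lt_one_of_nonneg_of_lt_one_right ?_ zero_le hx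
        rw [V.valuation_le_one_iff]
        exact hgV a
    have h4 := hall _ hN
    rw [map_pow, aeval_X] at h4
    simp [q, hpk] at h4
  have hcl : Subring.closure (A : Set K) = A.toSubring := Subring.closure_eq A.toSubring
  rw [hcl] at hint
  have : IsIntegral A (p j) := hint
  exact this.isAlgebraic

open scoped IntermediateField.algebraAdjoinAdjoin TensorProduct in
lemma exists_derivations {L E : Type} [Field L] [Algebra ℂ L] [DecidableEq E] (y : E → L)
    (hy : IsTranscendenceBasis ℂ y) (i : E) :
    ∃ D : Derivation ℂ L L, ∀ k, D (y k) = if i = k then 1 else 0 := by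
  let A := Algebra.adjoin ℂ (Set.range y)
  let G := IntermediateField.adjoin ℂ (Set.range y)
  have h1 : Algebra.FormallyEtale A G := .of_isLocalization (nonZeroDivisors _)
  have halg : Algebra.IsAlgebraic G L := hy.isAlgebraic_field
  have h2 : Algebra.FormallyEtale G L := .of_isSeparable _ _
  have h3 : Algebra.FormallyEtale A L := .comp _ G _
  let ε := hy.1.aevalEquiv
  have hε : ∀ a : A, aeval y (ε.symm a) = (a : L) := by
    intro a
    conv_rhs => rw [← ε.apply_symm_apply a]
    rfl
  let δ0 : A →ₗ[ℂ] L := (aeval y).toLinearMap ∘ₗ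
    (pderiv i : Derivation ℂ (MvPolynomial E ℂ) _).toLinearMap ∘ₗ ε.symm.toLinearMap
  have hδ0 : ∀ a, δ0 a = aeval y (pderiv i (ε.symm a)) := fun a => rfl
  let δ : Derivation ℂ A L := Derivation.mk' δ0 (by
    intro a b
    rw [hδ0, hδ0, hδ0, map_mul, Derivation.leibniz, map_add, smul_eq_mul, smul_eq_mul, map_mul,
      map_mul, hε, hε]
    rfl)
  let φ : Ω[L⁄ℂ] →ₗ[L] L := (LinearMap.liftBaseChange L δ.liftKaehlerDifferential) ∘ₗ
    (KaehlerDifferential.tensorKaehlerEquivOfFormallyEtale ℂ A L).symm.toLinearMap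
  refine ⟨φ.compDer (KaehlerDifferential.D ℂ L), fun k => ?_⟩
  let yk : A := ⟨y k, Algebra.subset_adjoin ⟨k, rfl⟩⟩
  have hyk : y k = algebraMap A L yk := rfl
  have hek : ε.symm yk = X k := by
    rw [AlgEquiv.symm_apply_eq]
    apply Subtype.ext
    change y k = aeval y (X k)
    rw [aeval_X]
  change LinearMap.liftBaseChange L δ.liftKaehlerDifferential
    ((KaehlerDifferential.tensorKaehlerEquivOfFormallyEtale ℂ A L).symm (KaehlerDifferential.D ℂ L (y k))) = _
  rw [hyk, KaehlerDifferential.tensorKaehlerEquivOfFormallyEtale_symm_D_algebraMap,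
    LinearMap.liftBaseChange_tmul, one_smul, Derivation.liftKaehlerDifferential_comp_D]
  change δ0 yk = _
  rw [hδ0, hek, pderiv_X]
  by_cases h : i = k
  · subst h; simp
  · simp [h, Ne.symm h]

lemma derivation_aeval {n : ℕ} {L : Type} [Field L] [Algebra ℂ L] (D : Derivation ℂ L L)
    (p : Fin n → L) (g : Rp n) : D (aeval p g) = ∑ j, aeval p (pderiv j g) * D (p j) := by
  induction g using MvPolynomial.induction_on with
  | C a => simp
  | add g h hg hh => simp [hg, hh, add_mul, Finset.sum_add_distrib]
  | mul_X g k hg =>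
    rw [map_mul, aeval_X, Derivation.leibniz, hg]
    simp only [Derivation.leibniz, pderiv_X, map_add, smul_eq_mul, map_mul, aeval_X, add_mul,
      Finset.sum_add_distrib, Finset.mul_sum]
    congr 1
    · rw [Finset.sum_eq_single k]
      · simp
      · intro b _ hb
        simp [hb.symm]
      · simp
    · refine Finset.sum_congr rfl fun j _ => by ring

lemma exists_right_inv {n m : ℕ} {f : Fin m → Rp n} {L : Type} [Field L] [Algebra ℂ L]
    (p : Fin n → L)
    [Algebra.IsAlgebraic (Algebra.adjoin ℂ (Set.range fun i => aeval p (f i))) L] :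
    ∃ E : Set (Fin m), IsTranscendenceBasis ℂ (fun t : E => aeval p (f t)) ∧
      ∃ W : Fin n → E → L, ∀ i k : E,
        ∑ j, aeval p (pderiv j (f k)) * W j i = if i = k then 1 else 0 := by
  classical
  obtain ⟨E, hE⟩ := exists_tb_index (F := ℂ) (fun i => aeval p (f i))
  refine ⟨E, hE, ?_⟩
  choose D hD using exists_derivations _ hE
  refine ⟨fun j i => D i (p j), fun i k => ?_⟩
  rw [← hD i k]
  exact (derivation_aeval (D i) p (f k)).symm

open AlgebraicIndependent in
lemma mem_cl_iff {K : Type} [Field K] [Algebra ℂ K] (s : Set K) (x : K) :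
    x ∈ (matroid ℂ K).closure s ↔ IsAlgebraic (Algebra.adjoin ℂ s) x := by
  rw [matroid_closure_eq]
  exact Subalgebra.mem_algebraicClosure _ _

lemma isAlgebraic_adjoin_map {L K : Type} [Field K] [Algebra ℂ K] [Field L] [Algebra ℂ L]
    (φ : L →ₐ[ℂ] K) (s : Set L) (x : L) (hx : IsAlgebraic (Algebra.adjoin ℂ s) x) :
    IsAlgebraic (Algebra.adjoin ℂ (φ '' s)) (φ x) := by
  let ψ : Algebra.adjoin ℂ s →ₐ[ℂ] Algebra.adjoin ℂ (φ '' s) :=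
    (φ.comp (Algebra.adjoin ℂ s).val).codRestrict _ (fun y => by
      rw [← AlgHom.map_adjoin]
      exact ⟨y, y.2, rfl⟩)
  refine hx.ringHom_of_comp_eq ψ φ (fun a b hab => ?_) rfl
  exact Subtype.ext (φ.injective (congrArg Subtype.val hab))

open scoped IntermediateField.algebraAdjoinAdjoin in
lemma isAlgebraic_of_adjoin_top {L : Type} [Field L] [Algebra ℂ L] (s : Set L)
    (h : IntermediateField.adjoin ℂ s = ⊤) (z : L) : IsAlgebraic (Algebra.adjoin ℂ s) z := by
  have hz : z ∈ IntermediateField.adjoin ℂ s := h ▸ IntermediateField.mem_top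
  have : Algebra.IsAlgebraic (Algebra.adjoin ℂ s) (IntermediateField.adjoin ℂ s) :=
    IsLocalization.isAlgebraic _ (nonZeroDivisors _)
  have h1 := this.isAlgebraic ⟨z, hz⟩
  exact h1.algebraMap (A := L)

open AlgebraicIndependent in
lemma exists_EW {n m : ℕ} (hm : n + 1 ≤ m) {f : Fin m → Rp n} {d : Fin m → ℕ}
    (hsnc : SNC n m f) (hd : ∀ i, 1 ≤ d i)
    (hfh : ∀ i, (f i).IsHomogeneous (d i)) {K : Type} [Field K] [Algebra ℂ K]
    (p : Fin n → K) :
    ∃ E : Set (Fin m), (∀ j, p j ∈ (matroid ℂ K).closure ((fun i => aeval p (f i)) '' E)) ∧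
      ∃ W : Fin n → E → K,
        (∀ j i, W j i ∈ (matroid ℂ K).closure ((fun i => aeval p (f i)) '' E)) ∧
        ∀ i k : E, ∑ j, aeval p (pderiv j (f k)) * W j i = if i = k then 1 else 0 := by
  classical
  let L := IntermediateField.adjoin ℂ (Set.range p)
  let p' : Fin n → L := fun j => ⟨p j, IntermediateField.subset_adjoin _ _ ⟨j, rfl⟩⟩
  have htop : IntermediateField.adjoin ℂ (Set.range p') = ⊤ := by
    apply IntermediateField.lift_injective
    rw [IntermediateField.lift_adjoin, IntermediateField.lift_top, ← Set.range_comp]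
    rfl
  have hp' : ∀ g : Rp n, L.val (aeval p' g) = aeval p g := by
    intro g
    rw [comp_aeval_apply]
    rfl
  have halg : Algebra.IsAlgebraic (Algebra.adjoin ℂ (Set.range fun i => aeval p' (f i))) L := by
    rw [← matroid_spanning_iff, Matroid.spanning_iff_ground_subset_closure]
    intro z _
    have h1 : z ∈ (matroid ℂ L).closure (Set.range p') :=
      (mem_cl_iff _ _).mpr (isAlgebraic_of_adjoin_top _ htop z)
    refine (matroid ℂ L).closure_subset_closure_of_subset_closure ?_ h1
    rintro _ ⟨j, rfl⟩
    exact (mem_cl_iff _ _).mpr (isAlgebraic_coord hm hsnc hd hfh p' j)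
  obtain ⟨E, hE, W, hW⟩ := exists_right_inv p' (f := f)
  have hcl : ∀ z : L, (z : K) ∈ (matroid ℂ K).closure ((fun i => aeval p (f i)) '' E) := by
    intro z
    rw [mem_cl_iff]
    have h1 := isAlgebraic_adjoin_map L.val _ z (hE.isAlgebraic.isAlgebraic z)
    have h2 : L.val '' Set.range (fun t : E => aeval p' (f t)) =
        (fun i => aeval p (f i)) '' E := by
      rw [← Set.range_comp, Set.image_eq_range]
      congr 1
      funext t
      exact hp' _
    rw [h2] at h1
    exact h1
  refine ⟨E, fun j => hcl (p' j), fun j i => W j i, fun j i => hcl _, fun i k => ?_⟩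
  have := congrArg L.val (hW i k)
  rw [map_sum] at this
  simp only [map_mul, hp'] at this
  rw [show (L.val (if i = k then 1 else 0)) = if i = k then 1 else 0 by split_ifs <;> simp] at this
  exact this

open AlgebraicIndependent in
lemma exists_B {n m : ℕ} (hm : n + 1 ≤ m) {f : Fin m → Rp n} {d : Fin m → ℕ}
    (hsnc : SNC n m f) (hd : ∀ i, 1 ≤ d i)
    (hfh : ∀ i, (f i).IsHomogeneous (d i)) {K : Type} [Field K] [Algebra ℂ K]
    (a : Fin m → K) (p : Fin n → K)
    (hmin : ∀ r : Fin (m + 1) → Option (Fin m), ∀ c : Fin (m + 1) → Col n m,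
      Function.Injective r → Function.Injective c →
      (((Qs1 n m f).map (aeval (Sum.elim a p))).submatrix r c).det = 0) :
    ∃ B : Set K, B.encard ≤ m + 1 ∧ (∀ i, a i ∈ (matroid ℂ K).closure B) ∧
      (∀ j, p j ∈ (matroid ℂ K).closure B) := by
  classical
  have hmem : ∀ s : Set K, ∀ x ∈ s, x ∈ (matroid ℂ K).closure s := fun s x hx =>
    (matroid ℂ K).subset_closure s (Set.subset_univ _) hx
  by_cases hp : p = 0
  · refine ⟨Set.range a, ?_, fun i => hmem _ _ ⟨i, rfl⟩, fun j => ?_⟩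
    · rw [← Set.image_univ]
      refine (Set.encard_image_le _ _).trans ?_
      rw [Set.encard_univ, ENat.card_eq_coe_fintype_card, Fintype.card_fin]
      exact_mod_cast Nat.le_succ m
    · rw [mem_cl_iff, hp]
      exact isAlgebraic_zero
  obtain ⟨v, hv, hv0⟩ := exists_vecMul_zero _ (m + 1) (by simp) hmin
  have hk : ∀ k : Fin m, (k : ℕ) ≠ 0 → v none * a k + v (some k) * aeval p (f k) = 0 := by
    intro k hk0
    have := congrFun hv0 (Sum.inl ⟨k, hk0⟩)
    simpa [Matrix.vecMul, dotProduct, Fintype.sum_option, Qs1, Q1, toS, aeval_rename,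
      apply_ite] using this
  have hj : ∀ j, ∑ i, v (some i) * aeval p (pderiv j (f i)) = 0 := by
    intro j
    have := congrFun hv0 (Sum.inr j)
    simpa [Matrix.vecMul, dotProduct, Fintype.sum_option, Qs1, Q1, toS, aeval_rename] using this
  have hv0' : v none ≠ 0 := by
    intro h0
    have hcy : ∀ k : Fin m, (k : ℕ) ≠ 0 → v (some k) * aeval p (f k) = 0 := by
      intro k hk0
      have := hk k hk0
      rwa [h0, zero_mul, zero_add] at this
    have heul : ∑ i, v (some i) * (d i * aeval p (f i)) = 0 := by
      have h1 : ∑ j, (∑ i, v (some i) * aeval p (pderiv j (f i))) * p j = 0 := by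
        simp [hj]
      rw [← h1]
      simp only [← euler_aeval p (f _) _ (hfh _), Finset.mul_sum, Finset.sum_mul]
      rw [Finset.sum_comm]
      refine Finset.sum_congr rfl fun j _ => Finset.sum_congr rfl fun i _ => by ring
    have hall : ∀ i, v (some i) * aeval p (f i) = 0 := by
      intro i
      by_cases hi : (i : ℕ) ≠ 0
      · exact hcy i hi
      push Not at hi
      rw [Finset.sum_eq_single i] at heul
      · have hd0 : (d i : K) ≠ 0 := by
          have : CharZero K := charZero_of_injective_algebraMap (algebraMap ℂ K).injective
          have := hd i
          exact_mod_cast (by omega : d i ≠ 0)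
        have h2 : (d i : K) * (v (some i) * aeval p (f i)) = 0 := by rw [← heul]; ring
        exact (mul_eq_zero.mp h2).resolve_left hd0
      · intro b _ hb
        have h3 := hcy b (fun h => hb (Fin.ext (by omega)))
        rw [← mul_zero (d b : K), ← h3]; ring
      · simp
    let Z : Finset (Fin m) := Finset.univ.filter fun i => aeval p (f i) = 0
    have hZ : ∀ i ∈ Z, aeval p (f i) = 0 := fun i hi => (Finset.mem_filter.mp hi).2
    have hnZ : ∀ i, i ∉ Z → v (some i) = 0 := by
      intro i hi
      refine (mul_eq_zero.mp (hall i)).resolve_right fun h => hi ?_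
      simp [Z, h]
    have hc0 := snc_field hsnc p hp Z (card_zero_lt hsnc hfh p hp Z hZ).le hZ
      (fun i => v (some i.1)) (by
        intro j
        rw [← hj j, Finset.sum_coe_sort Z (fun i => v (some i) * aeval p (pderiv j (f i)))]
        refine Finset.sum_subset (Finset.subset_univ _) fun i _ hi => ?_
        rw [hnZ i hi, zero_mul])
    apply hv
    funext o
    cases o with
    | none => exact h0
    | some i =>
      by_cases hi : i ∈ Z
      · exact congrFun hc0 ⟨i, hi⟩
      · exact hnZ i hi
  let c : Fin m → K := fun i => v (some i) / v none
  have hc : ∀ k : Fin m, (k : ℕ) ≠ 0 → a k = - (c k * aeval p (f k)) := by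
    intro k hk0
    have := hk k hk0
    simp only [c]
    field_simp
    linear_combination this
  have hcj : ∀ j, ∑ i, c i * aeval p (pderiv j (f i)) = 0 := by
    intro j
    have h1 : ∑ i, c i * aeval p (pderiv j (f i)) =
        (∑ i, v (some i) * aeval p (pderiv j (f i))) / v none := by
      rw [Finset.sum_div]
      refine Finset.sum_congr rfl fun i _ => by simp only [c]; ring
    rw [h1, hj, zero_div]
  obtain ⟨E, hpE, W, hWE, hW⟩ := exists_EW hm hsnc hd hfh p
  let i0 : Fin m := ⟨0, by omega⟩
  let y : Fin m → K := fun i => aeval p (f i)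
  let B : Set K := {a i0} ∪ ((y '' E) ∪ (c '' Eᶜ))
  have hsub : (matroid ℂ K).closure (y '' E) ⊆ (matroid ℂ K).closure B :=
    (matroid ℂ K).closure_subset_closure (fun x hx => Or.inr (Or.inl hx))
  let R : Subalgebra ℂ K :=
    (Subalgebra.algebraicClosure (Algebra.adjoin ℂ B) K).restrictScalars ℂ
  have hR : ∀ x, x ∈ R ↔ x ∈ (matroid ℂ K).closure B := by
    intro x
    rw [mem_cl_iff]
    exact Subalgebra.mem_algebraicClosure _ _
  have hpR : ∀ g : Rp n, aeval p g ∈ R := by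
    intro g
    have h1 : Algebra.adjoin ℂ (Set.range p) ≤ R := by
      rw [Algebra.adjoin_le_iff]
      rintro _ ⟨i, rfl⟩
      exact (hR _).mpr (hsub (hpE i))
    apply h1
    rw [Algebra.adjoin_range_eq_range_aeval]
    exact ⟨g, rfl⟩
  have hWR : ∀ j i, W j i ∈ R := fun j i => (hR _).mpr (hsub (hWE j i))
  have hcE : ∀ k, k ∉ E → c k ∈ R := fun k hkE =>
    (hR _).mpr (hmem _ _ (Or.inr (Or.inr ⟨k, hkE, rfl⟩)))
  have hcR : ∀ k, c k ∈ R := by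
    intro i
    by_cases hi : i ∈ E
    · let u : Fin m → K := fun k => ∑ j, aeval p (pderiv j (f k)) * W j ⟨i, hi⟩
      have h1 : ∑ k, c k * u k = 0 := by
        have h2 : ∑ j, (∑ k, c k * aeval p (pderiv j (f k))) * W j ⟨i, hi⟩ = 0 := by
          simp [hcj]
        rw [← h2]
        simp only [u, Finset.mul_sum, Finset.sum_mul]
        rw [Finset.sum_comm]
        refine Finset.sum_congr rfl fun j _ => Finset.sum_congr rfl fun k _ => by ring
      rw [← Finset.add_sum_erase _ _ (Finset.mem_univ i)] at h1
      have h3 : u i = 1 := by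
        have := hW ⟨i, hi⟩ ⟨i, hi⟩
        rwa [if_pos rfl] at this
      rw [h3, mul_one] at h1
      rw [eq_neg_of_add_eq_zero_left h1]
      refine R.neg_mem (R.sum_mem fun k hk => ?_)
      by_cases hkE : k ∈ E
      · have h4 : u k = 0 := by
          have := hW ⟨i, hi⟩ ⟨k, hkE⟩
          rwa [if_neg (fun h => Finset.ne_of_mem_erase hk (congrArg Subtype.val h).symm)] at this
        rw [h4, mul_zero]
        exact R.zero_mem
      · exact R.mul_mem (hcE k hkE) (R.sum_mem fun j _ => R.mul_mem (hpR _) (hWR _ _))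
    · exact hcE i hi
  refine ⟨B, ?_, fun i => ?_, fun j => hsub (hpE j)⟩
  · have hcard : E.encard + Eᶜ.encard = m := by
      rw [Set.encard_add_encard_compl, Set.encard_univ, ENat.card_eq_coe_fintype_card,
        Fintype.card_fin]
    calc B.encard ≤ ({a i0} : Set K).encard + ((y '' E) ∪ (c '' Eᶜ)).encard :=
          Set.encard_union_le _ _
      _ ≤ 1 + ((y '' E).encard + (c '' Eᶜ).encard) :=
          add_le_add (by simp) (Set.encard_union_le _ _)
      _ ≤ 1 + (E.encard + Eᶜ.encard) := by
          gcongr <;> exact Set.encard_image_le _ _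
      _ = m + 1 := by rw [hcard, add_comm]
  · by_cases hi : (i : ℕ) ≠ 0
    · rw [← hR, hc i hi]
      exact R.neg_mem (R.mul_mem (hcR i) (hpR _))
    · push Not at hi
      apply hmem
      left
      rw [show i = i0 from Fin.ext hi]
      rfl

open AlgebraicIndependent in
lemma trdeg_bound {n m : ℕ} (hm : n + 1 ≤ m) {f : Fin m → Rp n} {d : Fin m → ℕ}
    (hsnc : SNC n m f) (hd : ∀ i, 1 ≤ d i)
    (hfh : ∀ i, (f i).IsHomogeneous (d i)) (P : Ideal (Sp n m)) (hP : P.IsPrime)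
    (hle : minorsIdeal (m + 1) (Qs1 n m f) ≤ P) (T : Set (Fin m ⊕ Fin n))
    (hT : AlgebraicIndependent ℂ (fun t : T => Ideal.Quotient.mk P (X (t : Fin m ⊕ Fin n)))) :
    Nat.card T ≤ m + 1 := by
  let K := FractionRing (Sp n m ⧸ P)
  let φ : Sp n m →ₐ[ℂ] K := (IsScalarTower.toAlgHom ℂ (Sp n m ⧸ P) K).comp (Ideal.Quotient.mkₐ ℂ P)
  let a : Fin m → K := fun i => φ (X (Sum.inl i))
  let p : Fin n → K := fun j => φ (X (Sum.inr j))
  have hφ : φ = aeval (Sum.elim a p) := by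
    ext t
    cases t <;> simp [a, p]
  obtain ⟨B, hB, haB, hpB⟩ := exists_B hm hsnc hd hfh a p (by
    intro r c hr hc
    have h1 : φ ((Qs1 n m f).submatrix r c).det = 0 := by
      have h2 : ((Qs1 n m f).submatrix r c).det ∈ P :=
        hle (Ideal.subset_span ⟨r, c, hr, hc, rfl⟩)
      change algebraMap (Sp n m ⧸ P) K (Ideal.Quotient.mk P _) = 0
      rw [Ideal.Quotient.eq_zero_iff_mem.mpr h2, map_zero]
    rw [hφ, AlgHom.map_det] at h1
    exact h1)
  have hT' : AlgebraicIndependent ℂ (fun t : T => φ (X (t : Fin m ⊕ Fin n))) :=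
    hT.map' (f := IsScalarTower.toAlgHom ℂ (Sp n m ⧸ P) K)
      (IsFractionRing.injective (Sp n m ⧸ P) K)
  have hind : (matroid ℂ K).Indep (Set.range fun t : T => φ (X (t : Fin m ⊕ Fin n))) := by
    rw [matroid_indep_iff]
    exact hT'.coe_range
  have hsub : (Set.range fun t : T => φ (X (t : Fin m ⊕ Fin n))) ⊆ (matroid ℂ K).closure B := by
    rintro _ ⟨⟨t, ht⟩, rfl⟩
    cases t with
    | inl i => exact haB i
    | inr j => exact hpB j
  have h1 := hind.encard_le_eRk_of_subset hsub
  rw [Matroid.eRk_closure_eq] at h1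
  have h2 := (h1.trans ((matroid ℂ K).eRk_le_encard B)).trans hB
  have h2 := hT'.injective.encard_range.trans h2
  rw [ENat.card_eq_coe_natCard] at h2
  exact_mod_cast h2

lemma minors_eval_zero {n m : ℕ} {f : Fin m → Rp n} :
    minorsIdeal (m + 1) (Qs1 n m f) ≤
      RingHom.ker (aeval (fun _ => 0) : Sp n m →ₐ[ℂ] ℂ) := by
  rw [minorsIdeal, Ideal.span_le]
  rintro _ ⟨r, c, hr, hc, rfl⟩
  change aeval _ _ = 0
  rw [AlgHom.map_det]
  have hrb : Function.Bijective r := by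
    rw [Fintype.bijective_iff_injective_and_card]
    exact ⟨hr, by simp⟩
  obtain ⟨k, hk⟩ := hrb.2 none
  apply Matrix.det_eq_zero_of_row_eq_zero k
  intro l
  simp only [AlgHom.mapMatrix_apply, Matrix.map_apply, Matrix.submatrix_apply, hk, Qs1,
    Matrix.of_apply, Option.elim_none]
  cases c l <;> simp

/-- `I_{m+1}(Q^s_{∖1})` contains a regular sequence of length `n−1`. -/
theorem minors_contain_regular_sequence (n m : ℕ) (hn : 2 ≤ n) (hm : n + 1 ≤ m)
    (f : Fin m → Rp n) (d : Fin m → ℕ)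
    (hf0 : ∀ i, f i ≠ 0) (hfh : ∀ i, (f i).IsHomogeneous (d i)) (hd : ∀ i, 1 ≤ d i)
    (hsnc : SNC n m f) :
    ∃ g : Fin (n - 1) → Sp n m,
      (∀ k, g k ∈ minorsIdeal (m + 1) (Qs1 n m f)) ∧
      (∀ k : Fin (n - 1), ∀ x : Sp n m,
        g k * x ∈ Ideal.span {y | ∃ j : Fin (n - 1), j < k ∧ y = g j} →
          x ∈ Ideal.span {y | ∃ j : Fin (n - 1), j < k ∧ y = g j}) ∧
      Ideal.span (Set.range g) ≠ ⊤ := by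
  obtain ⟨rs, hlen, hmem, hreg⟩ := exists_regular_of_trdeg
    (minorsIdeal (m + 1) (Qs1 n m f)) (n - 1) (by
      intro P hP hle T hT
      have := trdeg_bound hm hsnc hd hfh P hP hle T hT
      rw [Nat.card_eq_fintype_card (α := Fin m ⊕ Fin n), Fintype.card_sum, Fintype.card_fin,
        Fintype.card_fin]
      omega) (n - 1) le_rfl
  have hgm : ∀ k : Fin (n - 1), rs[(k : ℕ)]'(by omega) ∈ minorsIdeal (m + 1) (Qs1 n m f) :=
    fun k => hmem _ (List.getElem_mem _)
  refine ⟨fun k => rs[(k : ℕ)]'(by omega), hgm, ?_, ?_⟩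
  · intro k x hx
    have hs : Ideal.span {y | ∃ j : Fin (n - 1), j < k ∧ y = rs[(j : ℕ)]'(by omega)} =
        Ideal.ofList (rs.take k) := by
      rw [Ideal.ofList]
      congr 1
      ext y
      simp only [Set.mem_ofPred_eq, List.mem_take_iff_getElem]
      constructor
      · rintro ⟨j, hj, rfl⟩
        exact ⟨j, by have := j.2; have : (j : ℕ) < k := hj; omega, rfl⟩
      · rintro ⟨j, hj, rfl⟩
        exact ⟨⟨j, by omega⟩, show j < (k : ℕ) by omega, rfl⟩
    rw [hs] at hx ⊢
    have h1 := hreg.regular_mod_prev k (by omega)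
    have h2 : ∀ z : Sp n m, (Submodule.Quotient.mk z :
        Sp n m ⧸ (Ideal.ofList (rs.take k) • ⊤ : Submodule (Sp n m) (Sp n m))) = 0 ↔
        z ∈ Ideal.ofList (rs.take k) := by
      intro z
      rw [Submodule.Quotient.mk_eq_zero, smul_eq_mul, Ideal.mul_top]
    rw [← h2]
    apply h1
    simp only [smul_zero]
    rw [← Submodule.Quotient.mk_smul, h2]
    exact hx
  · intro htop
    have h1 : Ideal.span (Set.range fun k : Fin (n - 1) => rs[(k : ℕ)]'(by omega)) ≤
        RingHom.ker (aeval (fun _ => 0) : Sp n m →ₐ[ℂ] ℂ) := by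
      rw [Ideal.span_le]
      rintro _ ⟨k, rfl⟩
      exact minors_eval_zero (hgm k)
    rw [htop] at h1
    have h2 : (aeval (fun _ => 0) : Sp n m →ₐ[ℂ] ℂ) 1 = 0 := h1 trivial
    simp at h2
end
end

section
/- Assume m ≥ n+1 and that f_1,…,f_m satisfy the SNC hypothesis. Define the pre-likelihood ideal I_0 ⊆ S as the ideal generated by all elements Σ_{i=1}^m s_i·a_i, where (a_1,…,a_m,b_1,…,b_n) ∈ R^m × R^n ranges over all solutions of the equations f_i·a_i + Σ_{j=1}^n b_j·∂f_i/∂x_j = 0 for i = 1,…,m (i.e., over the kernel of Q). Then I_0 = I_A; that is, every SNC arrangement is gentle. -/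
open MvPolynomial

noncomputable section

/-- The pre-likelihood ideal `I_0`, generated by the elements `Σ_i s_i·a_i` where
`(a, b)` ranges over the kernel of `Q`. -/
def preI (n m : ℕ) (f : Fin m → Rp n) : Ideal (Sp n m) :=
  Ideal.span {P | ∃ a : Fin m → Rp n, ∃ b : Fin n → Rp n,
    (∀ i, f i * a i + ∑ j, b j * pderiv j (f i) = 0) ∧
    P = ∑ i, X (Sum.inl i) * toS n m (a i)}

section PartA
variable {S : Type*} [CommRing S] {V : Type*} [AddCommGroup V] [Module S V]

/-- Contraction by a functional. -/
def exCon (φ : Module.Dual S V) : ExteriorAlgebra S V →ₗ[S] ExteriorAlgebra S V :=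
  CliffordAlgebra.contractLeft φ

lemma exCon_mul (φ : Module.Dual S V) (v : V) (w : ExteriorAlgebra S V) :
    exCon φ (ExteriorAlgebra.ι S v * w) = φ v • w - ExteriorAlgebra.ι S v * exCon φ w :=
  CliffordAlgebra.contractLeft_ι_mul (Q := 0) φ v w

lemma exCon_zero (φ : Module.Dual S V) {w : ExteriorAlgebra S V} (hw : w ∈ ⋀[S]^0 V) :
    exCon φ w = 0 := by
  rw [ExteriorAlgebra.exteriorPower, pow_zero, Submodule.mem_one] at hw
  obtain ⟨r, rfl⟩ := hw
  exact CliffordAlgebra.contractLeft_algebraMap (Q := 0) φ r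

lemma ex_mul_mem (v : V) {q : ℕ} {w : ExteriorAlgebra S V} (hw : w ∈ ⋀[S]^q V) :
    ExteriorAlgebra.ι S v * w ∈ ⋀[S]^(q+1) V := by
  rw [ExteriorAlgebra.exteriorPower, pow_succ']
  exact Submodule.mul_mem_mul ⟨v, rfl⟩ hw

lemma ex_succ_induction {q : ℕ} {p : ExteriorAlgebra S V → Prop}
    (h1 : ∀ v : V, ∀ w ∈ ⋀[S]^q V, p (ExteriorAlgebra.ι S v * w))
    (h2 : ∀ x y, p x → p y → p (x + y)) {w : ExteriorAlgebra S V}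
    (hw : w ∈ ⋀[S]^(q+1) V) : p w := by
  rw [ExteriorAlgebra.exteriorPower, pow_succ'] at hw
  refine Submodule.mul_induction_on hw ?_ h2
  rintro _ ⟨v, rfl⟩ w hw
  exact h1 v w hw

lemma exCon_mem (φ : Module.Dual S V) {q : ℕ} : ∀ {w : ExteriorAlgebra S V},
    w ∈ ⋀[S]^(q+1) V → exCon φ w ∈ ⋀[S]^q V := by
  induction q with
  | zero =>
    intro w hw
    refine ex_succ_induction (p := fun w => exCon φ w ∈ ⋀[S]^0 V) ?_ ?_ hw
    · intro v w hw
      rw [exCon_mul, exCon_zero φ hw, mul_zero, sub_zero]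
      exact Submodule.smul_mem _ _ hw
    · intro x y hx hy
      rw [map_add]; exact Submodule.add_mem _ hx hy
  | succ q ih =>
    intro w hw
    refine ex_succ_induction (p := fun w => exCon φ w ∈ ⋀[S]^(q+1) V) ?_ ?_ hw
    · intro v w hw
      rw [exCon_mul]
      exact Submodule.sub_mem _ (Submodule.smul_mem _ _ hw) (ex_mul_mem v (ih hw))
    · intro x y hx hy
      rw [map_add]; exact Submodule.add_mem _ hx hy

lemma ex_anticomm (u v : V) (w : ExteriorAlgebra S V) :
    ExteriorAlgebra.ι S u * (ExteriorAlgebra.ι S v * w) =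
      - (ExteriorAlgebra.ι S v * (ExteriorAlgebra.ι S u * w)) := by
  rw [eq_neg_iff_add_eq_zero, ← mul_assoc, ← mul_assoc, ← add_mul,
    ExteriorAlgebra.ι_add_mul_swap, zero_mul]

lemma ex_sq (u : V) (w : ExteriorAlgebra S V) :
    ExteriorAlgebra.ι S u * (ExteriorAlgebra.ι S u * w) = 0 := by
  rw [← mul_assoc, ExteriorAlgebra.ι_sq_zero, zero_mul]

/-- degree `q` part of the ideal generated by the first `h` rows. -/
def exL (ρ : ℕ → V) : ℕ → ℕ → Submodule S (ExteriorAlgebra S V)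
  | 0, _ => ⊥
  | _ + 1, 0 => ⊥
  | h + 1, q + 1 => exL ρ h (q+1) ⊔ (⋀[S]^q V).map (LinearMap.mulLeft S (ExteriorAlgebra.ι S (ρ h)))

lemma exL_zero_right (ρ : ℕ → V) (h : ℕ) : exL (S := S) ρ h 0 = ⊥ := by
  cases h <;> rfl

lemma mem_exL_succ (ρ : ℕ → V) (h q : ℕ) (w : ExteriorAlgebra S V) :
    w ∈ exL ρ (h+1) (q+1) ↔ ∃ l ∈ exL ρ h (q+1), ∃ η ∈ ⋀[S]^q V,
      w = l + ExteriorAlgebra.ι S (ρ h) * η := by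
  rw [exL, Submodule.mem_sup]
  constructor
  · rintro ⟨l, hl, _, ⟨η, hη, rfl⟩, rfl⟩
    exact ⟨l, hl, η, hη, rfl⟩
  · rintro ⟨l, hl, η, hη, rfl⟩
    exact ⟨l, hl, _, ⟨η, hη, rfl⟩, rfl⟩

lemma exL_le (ρ : ℕ → V) (h q : ℕ) : exL (S := S) ρ h q ≤ exL ρ (h+1) q := by
  cases q with
  | zero => rw [exL_zero_right]; exact bot_le
  | succ q => rw [exL.eq_3]; exact le_sup_left

lemma exL_mul_mem (ρ : ℕ → V) (v : V) (q : ℕ) : ∀ (h : ℕ) (w : ExteriorAlgebra S V),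
    w ∈ exL ρ h q → ExteriorAlgebra.ι S v * w ∈ exL ρ h (q+1) := by
  intro h
  induction h with
  | zero =>
    intro w hw
    have : w = 0 := by cases q <;> exact (Submodule.mem_bot S).1 hw
    subst this; simp
  | succ h ih =>
    intro w hw
    cases q with
    | zero =>
      have : w = 0 := (Submodule.mem_bot S).1 hw
      subst this; simp
    | succ q =>
      obtain ⟨l, hl, η, hη, rfl⟩ := (mem_exL_succ ρ h q w).1 hw
      refine (mem_exL_succ ρ h (q+1) _).2 ⟨_, ih l hl, - (ExteriorAlgebra.ι S v * η), ?_, ?_⟩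
      · exact Submodule.neg_mem _ (ex_mul_mem v hη)
      · rw [mul_add, ex_anticomm v]; simp

lemma exL_con_mem (ρ : ℕ → V) (φ : Module.Dual S V) (q : ℕ) : ∀ (h : ℕ) 
    (w : ExteriorAlgebra S V), (∀ i < h, φ (ρ i) = 0) →
    w ∈ exL ρ h (q+1) → exCon φ w ∈ exL ρ h q := by
  intro h
  induction h with
  | zero =>
    intro w _ hw
    have : w = 0 := (Submodule.mem_bot S).1 hw
    subst this; simp
  | succ h ih =>
    intro w hφ hw
    obtain ⟨l, hl, η, hη, rfl⟩ := (mem_exL_succ ρ h q w).1 hw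
    have h1 := ih l (fun i hi => hφ i (by omega)) hl
    rw [map_add, exCon_mul, hφ h (by omega), zero_smul, zero_sub]
    cases q with
    | zero =>
      rw [exCon_zero φ hη, mul_zero, neg_zero, add_zero]
      exact exL_le _ _ _ h1
    | succ q =>
      refine (mem_exL_succ ρ h q _).2 ⟨_, h1, - exCon φ η, ?_, by simp⟩
      exact Submodule.neg_mem _ (exCon_mem φ hη)

/-- `δ` is good with respect to the rows `ρ 0, …, ρ (G-1)`. -/
def exGood (ρ : ℕ → V) (G : ℕ) (δ : S) : Prop :=
  ∀ h < G, ∃ φ : Module.Dual S V, (∀ i < h, φ (ρ i) = 0) ∧ φ (ρ h) = δ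

lemma exb_mul_mem (𝔟 : Ideal S) (v : V) (q : ℕ) (w : ExteriorAlgebra S V)
    (hw : w ∈ 𝔟 • (⋀[S]^q V)) : ExteriorAlgebra.ι S v * w ∈ 𝔟 • (⋀[S]^(q+1) V) := by
  refine Submodule.smul_induction_on hw ?_ ?_
  · intro r hr n hn
    rw [mul_smul_comm]
    exact Submodule.smul_mem_smul hr (ex_mul_mem v hn)
  · intro x y hx hy
    rw [mul_add]; exact Submodule.add_mem _ hx hy

lemma exb_con_mem (𝔟 : Ideal S) (φ : Module.Dual S V) (q : ℕ) (w : ExteriorAlgebra S V)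
    (hw : w ∈ 𝔟 • (⋀[S]^(q+1) V)) : exCon φ w ∈ 𝔟 • (⋀[S]^q V) := by
  refine Submodule.smul_induction_on hw ?_ ?_
  · intro r hr n hn
    rw [map_smul]
    exact Submodule.smul_mem_smul hr (exCon_mem φ hn)
  · intro x y hx hy
    rw [map_add]; exact Submodule.add_mem _ hx hy

lemma ex_torsion (ρ : ℕ → V) (G : ℕ) (δ : S) (hδ : exGood ρ G δ) (𝔟 : Ideal S) (q h : ℕ)
    (hh : h < G) (w : ExteriorAlgebra S V) (hw : w ∈ ⋀[S]^q V)
    (h1 : ExteriorAlgebra.ι S (ρ h) * w ∈ exL ρ h (q+1) ⊔ 𝔟 • (⋀[S]^(q+1) V)) :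
    δ • w ∈ exL ρ (h+1) q ⊔ 𝔟 • (⋀[S]^q V) := by
  obtain ⟨φ, hφ, rfl⟩ := hδ h hh
  obtain ⟨l, hl, b, hb, hlb⟩ := Submodule.mem_sup.1 h1
  have h2 := congrArg (exCon φ) hlb
  rw [exCon_mul, map_add, eq_comm, sub_eq_iff_eq_add] at h2
  rw [h2]
  refine Submodule.add_mem _ (Submodule.add_mem _ (Submodule.mem_sup_left ?_)
    (Submodule.mem_sup_right (exb_con_mem 𝔟 φ q b hb))) (Submodule.mem_sup_left ?_)
  · exact exL_le _ _ _ (exL_con_mem ρ φ q h l hφ hl)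
  · cases q with
    | zero => rw [exCon_zero φ hw, mul_zero]; exact Submodule.zero_mem _
    | succ q =>
      exact (mem_exL_succ ρ h q _).2 ⟨0, Submodule.zero_mem _, _, exCon_mem φ hw, by simp⟩

/-- Regular sequences modulo an ideal. -/
def exReg : Ideal S → List S → Prop
  | _, [] => True
  | 𝔟, a :: l => (∀ u, a * u ∈ 𝔟 → u ∈ 𝔟) ∧ exReg (𝔟 ⊔ Ideal.span {a}) l

lemma free_smul_top_mem {M : Type*} [AddCommGroup M] [Module S M] [Module.Free S M]
    (𝔟 : Ideal S) (x : M) :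
    x ∈ 𝔟 • (⊤ : Submodule S M) ↔ ∀ i, (Module.Free.chooseBasis S M).repr x i ∈ 𝔟 := by
  set b := Module.Free.chooseBasis S M
  constructor
  · intro hx i
    refine Submodule.smul_induction_on hx ?_ ?_
    · intro r hr n _
      rw [map_smul]
      exact 𝔟.mul_mem_right _ hr
    · intro x y hx hy
      rw [map_add]; exact 𝔟.add_mem hx hy
  · intro hx
    rw [← b.linearCombination_repr x]
    refine Submodule.sum_mem _ fun i _ => Submodule.smul_mem_smul (hx i) trivial

lemma ex_free [Module.Free S V] (𝔟 : Ideal S) (a : S) (ha : ∀ u, a * u ∈ 𝔟 → u ∈ 𝔟) (q : ℕ)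
    (w : ExteriorAlgebra S V) (hw : w ∈ ⋀[S]^q V) (h1 : a • w ∈ 𝔟 • (⋀[S]^q V)) :
    w ∈ 𝔟 • (⋀[S]^q V) := by
  have key := Submodule.mem_smul_top_iff 𝔟 (⋀[S]^q V) ⟨w, hw⟩
  have key2 := Submodule.mem_smul_top_iff 𝔟 (⋀[S]^q V) (a • ⟨w, hw⟩)
  rw [← key, free_smul_top_mem]
  intro i
  apply ha
  have := (free_smul_top_mem 𝔟 _).1 (key2.2 h1) i
  rw [map_smul] at this
  exact this

/-- The statement of the claim in degree `q`. -/
def exClaim (ρ : ℕ → V) (G q : ℕ) : Prop :=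
  ∀ (𝔟 : Ideal S) (l : List S), l.length = q + 1 → (∀ a ∈ l, exGood ρ G a) → exReg 𝔟 l →
    ∀ h < G, ∀ w ∈ ⋀[S]^q V,
      ExteriorAlgebra.ι S (ρ h) * w ∈ exL ρ h (q+1) ⊔ 𝔟 • (⋀[S]^(q+1) V) →
      w ∈ exL ρ (h+1) q ⊔ 𝔟 • (⋀[S]^q V)

lemma ex_sub (ρ : ℕ → V) (G q : ℕ) (hC : exClaim (S := S) ρ G q) (𝔟 : Ideal S) (a : S) (l : List S)
    (hl : l.length = q + 1) (hg : ∀ a ∈ l, exGood ρ G a) (hr : exReg (𝔟 ⊔ Ideal.span {a}) l) :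
    ∀ h ≤ G, ∀ w ∈ exL ρ h (q+1), w ∈ (𝔟 ⊔ Ideal.span {a}) • (⋀[S]^(q+1) V) →
      ∃ w' ∈ exL ρ h (q+1), w - a • w' ∈ 𝔟 • (⋀[S]^(q+1) V) := by
  intro h
  induction h with
  | zero =>
    intro _ w hw _
    have : w = 0 := (Submodule.mem_bot S).1 hw
    subst this
    exact ⟨0, Submodule.zero_mem _, by simp⟩
  | succ h ih =>
    intro hG w hw hwb
    obtain ⟨l0, hl0, η, hη, rfl⟩ := (mem_exL_succ ρ h q w).1 hw
    have h1 : ExteriorAlgebra.ι S (ρ h) * η ∈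
        exL ρ h (q+1) ⊔ (𝔟 ⊔ Ideal.span {a}) • (⋀[S]^(q+1) V) := by
      have := Submodule.sub_mem _ (Submodule.mem_sup_right (S := exL ρ h (q+1)) hwb)
        (Submodule.mem_sup_left (T := (𝔟 ⊔ Ideal.span {a}) • (⋀[S]^(q+1) V)) hl0)
      simpa using this
    have h2 := hC _ l hl hg hr h (by omega) η hη h1
    obtain ⟨l1, hl1, b, hb, rfl⟩ := Submodule.mem_sup.1 h2
    rw [Submodule.sup_smul] at hb
    obtain ⟨b1, hb1, b2, hb2, rfl⟩ := Submodule.mem_sup.1 hb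
    rw [Submodule.ideal_span_singleton_smul] at hb2
    obtain ⟨ζ, hζ, rfl⟩ := hb2
    replace hζ : ζ ∈ ⋀[S]^q V := hζ
    -- `ρ_h * l1 ∈ exL h (q+1)`
    have h3 : ExteriorAlgebra.ι S (ρ h) * l1 ∈ exL ρ h (q+1) := by
      cases q with
      | zero =>
        have : l1 = 0 := (Submodule.mem_bot S).1 hl1
        subst this; simp
      | succ q =>
        obtain ⟨l2, hl2, θ, hθ, rfl⟩ := (mem_exL_succ ρ h q l1).1 hl1
        rw [mul_add, ex_sq, add_zero]
        exact exL_mul_mem ρ _ _ _ _ hl2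
    have hb1' := exb_mul_mem 𝔟 (ρ h) q b1 hb1
    have hζ' := ex_mul_mem (ρ h) hζ
    have h4 : l0 + ExteriorAlgebra.ι S (ρ h) * l1 ∈ (𝔟 ⊔ Ideal.span {a}) • (⋀[S]^(q+1) V) := by
      have e : l0 + ExteriorAlgebra.ι S (ρ h) * l1 =
        (l0 + ExteriorAlgebra.ι S (ρ h) * (l1 + (b1 + a • ζ))) -
          (ExteriorAlgebra.ι S (ρ h) * b1 + a • (ExteriorAlgebra.ι S (ρ h) * ζ)) := by
        rw [mul_add, mul_add, mul_smul_comm]; abel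
      rw [e]
      refine Submodule.sub_mem _ hwb (Submodule.add_mem _ ?_ ?_)
      · exact Submodule.smul_mono_left le_sup_left hb1'
      · exact Submodule.smul_mem_smul (Ideal.mem_sup_right (Ideal.mem_span_singleton_self a)) hζ'
    obtain ⟨w', hw', hww⟩ := ih (by omega) _ (Submodule.add_mem _ hl0 h3) h4
    refine ⟨w' + ExteriorAlgebra.ι S (ρ h) * ζ, (mem_exL_succ ρ h q _).2 ⟨w', hw', ζ, hζ, rfl⟩, ?_⟩
    have e : l0 + ExteriorAlgebra.ι S (ρ h) * (l1 + (b1 + a • ζ)) -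
        a • (w' + ExteriorAlgebra.ι S (ρ h) * ζ) =
        (l0 + ExteriorAlgebra.ι S (ρ h) * l1 - a • w') + ExteriorAlgebra.ι S (ρ h) * b1 := by
      rw [mul_add, mul_add, mul_smul_comm, smul_add]; abel
    change l0 + ExteriorAlgebra.ι S (ρ h) * (l1 + (b1 + a • ζ)) -
        a • (w' + ExteriorAlgebra.ι S (ρ h) * ζ) ∈ _
    rw [e]
    exact Submodule.add_mem _ hww hb1'

lemma exL_le_deg (ρ : ℕ → V) (q : ℕ) : ∀ h, exL (S := S) ρ h q ≤ ⋀[S]^q V := by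
  intro h
  induction h with
  | zero => cases q <;> exact bot_le
  | succ h ih =>
    cases q with
    | zero => exact bot_le
    | succ q =>
      intro w hw
      obtain ⟨l, hl, η, hη, rfl⟩ := (mem_exL_succ ρ h q w).1 hw
      exact Submodule.add_mem _ (ih hl) (ex_mul_mem _ hη)

/-- Nontorsion, given the claim in one degree less. -/
lemma ex_nontorsion_aux [Module.Free S V] (ρ : ℕ → V) (G q : ℕ)
    (hC : ∀ q', q = q' + 1 → exClaim (S := S) ρ G q') (𝔟 : Ideal S)
    (a : S) (l : List S) (hl : l.length = q) (hg : ∀ a ∈ l, exGood ρ G a)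
    (hr : exReg 𝔟 (a :: l)) (h : ℕ) (hh : h ≤ G) (w : ExteriorAlgebra S V) (hw : w ∈ ⋀[S]^q V)
    (h1 : a • w ∈ exL ρ h q ⊔ 𝔟 • (⋀[S]^q V)) : w ∈ exL ρ h q ⊔ 𝔟 • (⋀[S]^q V) := by
  cases q with
  | zero =>
    rw [exL_zero_right, bot_sup_eq] at h1 ⊢
    exact ex_free 𝔟 a hr.1 0 w hw h1
  | succ q =>
    obtain ⟨lam, hlam, b, hb, hlb⟩ := Submodule.mem_sup.1 h1
    have h2 : lam ∈ (𝔟 ⊔ Ideal.span {a}) • (⋀[S]^(q+1) V) := by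
      rw [eq_sub_of_add_eq hlb]
      exact Submodule.sub_mem _
        (Submodule.smul_mem_smul (Ideal.mem_sup_right (Ideal.mem_span_singleton_self a)) hw)
        (Submodule.smul_mono_left le_sup_left hb)
    obtain ⟨w', hw', hww⟩ := ex_sub ρ G q (hC q rfl) 𝔟 a l hl hg hr.2 h hh lam hlam h2
    have h3 : w - w' ∈ 𝔟 • (⋀[S]^(q+1) V) := by
      refine ex_free 𝔟 a hr.1 (q+1) _ (Submodule.sub_mem _ hw (exL_le_deg ρ _ _ hw')) ?_
      have e : a • (w - w') = (lam - a • w') + b := by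
        rw [smul_sub, ← hlb]; abel
      rw [e]
      exact Submodule.add_mem _ hww hb
    have e : w = w' + (w - w') := by abel
    rw [e]
    exact Submodule.add_mem _ (Submodule.mem_sup_left hw') (Submodule.mem_sup_right h3)

lemma ex_claim [Module.Free S V] (ρ : ℕ → V) (G q : ℕ) : exClaim (S := S) ρ G q := by
  induction q with
  | zero =>
    intro 𝔟 l hl hg hr h hh w hw h1
    match l, hl with
    | a :: l, hl =>
      exact ex_nontorsion_aux ρ G 0 (fun q' hq' => by omega) 𝔟 a l (by simpa using hl)
        (fun b hb => hg b (by simp [hb])) hr (h+1) hh w hw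
        (ex_torsion ρ G a (hg a (by simp)) 𝔟 0 h hh w hw h1)
  | succ q ih =>
    intro 𝔟 l hl hg hr h hh w hw h1
    match l, hl with
    | a :: l, hl =>
      exact ex_nontorsion_aux ρ G (q+1) (fun q' hq' => by
          obtain rfl : q = q' := by omega
          exact ih) 𝔟 a l (by simpa using hl)
        (fun b hb => hg b (by simp [hb])) hr (h+1) hh w hw
        (ex_torsion ρ G a (hg a (by simp)) 𝔟 (q+1) h hh w hw h1)

/-- The product `ρ_h ρ_{h+1} ⋯ ρ_{h+r-1}`. -/
def exPr (ρ : ℕ → V) : ℕ → ℕ → ExteriorAlgebra S V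
  | _, 0 => 1
  | h, r + 1 => ExteriorAlgebra.ι S (ρ h) * exPr ρ (h+1) r

lemma exPr_mul_mem (ρ : ℕ → V) (q : ℕ) (w : ExteriorAlgebra S V) (hw : w ∈ ⋀[S]^q V) :
    ∀ r h, exPr ρ h r * w ∈ ⋀[S]^(q + r) V := by
  intro r
  induction r with
  | zero => intro h; simpa [exPr] using hw
  | succ r ih =>
    intro h
    rw [exPr, mul_assoc]
    exact ex_mul_mem _ (ih (h+1))

lemma ex_chain (ρ : ℕ → V) (G : ℕ) (δ : S) (hδ : exGood ρ G δ) (𝔟 : Ideal S) (q : ℕ) 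
    (w : ExteriorAlgebra S V) (hw : w ∈ ⋀[S]^q V) :
    ∀ r h k : ℕ, h + r = G → 
      (δ ^ k) • (exPr ρ h r * w) ∈ exL ρ h (q + r) ⊔ 𝔟 • (⋀[S]^(q+r) V) →
      ∃ K, (δ ^ K) • w ∈ exL ρ G q ⊔ 𝔟 • (⋀[S]^q V) := by
  intro r
  induction r with
  | zero =>
    intro h k hG h1
    obtain rfl : h = G := by omega
    exact ⟨k, by simpa [exPr] using h1⟩
  | succ r ih =>
    intro h k hG h1
    refine ih (h+1) (k+1) (by omega) ?_
    rw [pow_succ', mul_smul]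
    refine ex_torsion ρ G δ hδ 𝔟 (q+r) h (by omega) _ 
      (Submodule.smul_mem _ _ (exPr_mul_mem ρ q w hw r (h+1))) ?_
    rw [exPr, mul_assoc] at h1
    rw [mul_smul_comm]
    exact h1

lemma exPr_mul_row (ρ : ℕ → V) : ∀ r h i, h ≤ i → i < h + r → ∀ w, 
    exPr ρ h r * (ExteriorAlgebra.ι S (ρ i) * w) = 0 := by
  intro r
  induction r with
  | zero => intro h i h1 h2; omega
  | succ r ih =>
    intro h i h1 h2 w
    rw [exPr, mul_assoc]
    rcases Nat.eq_or_lt_of_le h1 with rfl | h3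
    · have : ∀ r g (w : ExteriorAlgebra S V), ∃ w', exPr ρ g r * (ExteriorAlgebra.ι S (ρ h) * w) =
          ExteriorAlgebra.ι S (ρ h) * w' := by
        intro r
        induction r with
        | zero => intro g w; exact ⟨w, by simp [exPr]⟩
        | succ r ih =>
          intro g w
          obtain ⟨w', hw'⟩ := ih (g+1) w
          rw [exPr, mul_assoc, hw', ex_anticomm]
          exact ⟨- (ExteriorAlgebra.ι S (ρ g) * w'), by simp⟩
      obtain ⟨w', hw'⟩ := this r (h+1) w
      rw [hw', ex_sq]
    · rw [ih (h+1) i h3 (by omega), mul_zero]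

lemma exPr_mul_L (ρ : ℕ → V) (G q : ℕ) : ∀ h ≤ G, ∀ w ∈ exL (S := S) ρ h q, exPr ρ 0 G * w = 0 := by
  intro h
  induction h with
  | zero =>
    intro _ w hw
    have : w = 0 := by cases q <;> exact (Submodule.mem_bot S).1 hw
    subst this; simp
  | succ h ih =>
    intro hG w hw
    cases q with
    | zero =>
      have : w = 0 := (Submodule.mem_bot S).1 hw
      subst this; simp
    | succ q =>
      obtain ⟨l, hl, η, hη, rfl⟩ := (mem_exL_succ ρ h q w).1 hw
      rw [mul_add, ih (by omega) l hl, exPr_mul_row ρ G 0 h (by omega) (by omega), add_zero]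

/-- The ideal of values `top (ρ_0 ⋯ ρ_{G-1} ω)`. -/
def exI (ρ : ℕ → V) (G p : ℕ) (top : ExteriorAlgebra S V →ₗ[S] S) : Ideal S :=
  (⋀[S]^p V).map (top ∘ₗ LinearMap.mulLeft S (exPr ρ 0 G))

lemma mem_exI (ρ : ℕ → V) (G p : ℕ) (top : ExteriorAlgebra S V →ₗ[S] S) (u : S) :
    u ∈ exI ρ G p top ↔ ∃ w ∈ ⋀[S]^p V, top (exPr ρ 0 G * w) = u := by
  rfl

lemma exPr_eq_ιMulti (ρ : ℕ → V) : ∀ r h, exPr (S := S) ρ h r = 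
    ExteriorAlgebra.ιMulti S r (fun i => ρ (h + i)) := by
  intro r
  induction r with
  | zero => intro h; simp [exPr]
  | succ r ih =>
    intro h
    rw [exPr, ExteriorAlgebra.ιMulti_succ_apply, ih]
    congr 2
    ext i
    simp [Matrix.vecTail, add_assoc, add_comm 1]

lemma exI_good (ρ : ℕ → V) (G p : ℕ) (top : ExteriorAlgebra S V →ₗ[S] S) (u : S)
    (hu : u ∈ exI ρ G p top) : exGood ρ G u := by
  obtain ⟨w, _, rfl⟩ := (mem_exI ρ G p top u).1 hu
  intro h hh
  refine ⟨top ∘ₗ LinearMap.mulRight S w ∘ₗ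
    ((ExteriorAlgebra.ιMulti S G).toMultilinearMap.toLinearMap (fun i => ρ i) ⟨h, hh⟩), ?_, ?_⟩
  · intro i hi
    have : (ExteriorAlgebra.ιMulti S G) (Function.update (fun i : Fin G => ρ i) ⟨h, hh⟩ (ρ i)) = 0 := by
      apply AlternatingMap.map_eq_zero_of_eq _ _ (i := ⟨h, hh⟩) (j := ⟨i, by omega⟩)
      · rw [Function.update_self, Function.update_of_ne]
        intro h; simp at h; omega
      · intro h; simp at h; omega
    simp [this]
  · have : Function.update (fun i : Fin G => ρ i) ⟨h, hh⟩ (ρ h) = fun i : Fin G => ρ i := by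
      rw [Function.update_eq_self_iff]
    simp [exPr_eq_ιMulti]

/-- Final saturation statement of Part A. -/
theorem ex_saturation [Module.Free S V] (ρ : ℕ → V) (G p : ℕ) (top : ExteriorAlgebra S V →ₗ[S] S)
    (htop : ∀ w ∈ ⋀[S]^(p+G) V, ∀ 𝔟 : Ideal S, top w ∈ 𝔟 → w ∈ 𝔟 • (⋀[S]^(p+G) V))
    (f : S) (l : List S) (hl : l.length = p + 1) (hli : ∀ a ∈ l, a ∈ exI ρ G p top)
    (hf : ∀ u, f * u = 0 → u = 0) (hr : exReg (Ideal.span {f}) l) (u : S) 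
    (hu : f * u ∈ exI ρ G p top) : u ∈ exI ρ G p top := by
  have hg : ∀ a ∈ l, exGood ρ G a := fun a ha => exI_good ρ G p top a (hli a ha)
  obtain ⟨w, hw, hwu⟩ := (mem_exI ρ G p top _).1 hu
  match l, hl with
  | a :: l, hl =>
    obtain ⟨K, hK⟩ := ex_chain ρ G a (hg a (by simp)) (Ideal.span {f}) p w hw G 0 0 (by simp) (by
      rw [pow_zero, one_smul]
      refine Submodule.mem_sup_right (htop _ (exPr_mul_mem ρ p w hw G 0) _ ?_)
      rw [hwu]
      exact Ideal.mul_mem_right _ _ (Ideal.mem_span_singleton_self f))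
    have h1 : w ∈ exL ρ G p ⊔ Ideal.span {f} • (⋀[S]^p V) := by
      clear hwu
      induction K with
      | zero => simpa using hK
      | succ K ih =>
        apply ih
        rw [pow_succ', mul_smul] at hK
        exact ex_nontorsion_aux ρ G p (fun q _ => ex_claim ρ G q) (Ideal.span {f}) a l
          (by simpa using hl) (fun b hb => hg b (by simp [hb])) hr G le_rfl _ 
          (Submodule.smul_mem _ _ hw) hK
    obtain ⟨l1, hl1, b, hb, rfl⟩ := Submodule.mem_sup.1 h1
    rw [Submodule.ideal_span_singleton_smul] at hb
    obtain ⟨w', hw', rfl⟩ := hb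
    refine (mem_exI ρ G p top _).2 ⟨w', hw', ?_⟩
    rw [mul_add, exPr_mul_L ρ G p G le_rfl l1 hl1, zero_add] at hwu
    change top (exPr ρ 0 G * (f • w')) = f * u at hwu
    rw [mul_smul_comm, map_smul, smul_eq_mul] at hwu
    have := hf (top (exPr ρ 0 G * w') - u) (by rw [mul_sub, hwu, sub_self])
    exact sub_eq_zero.1 this

end PartA

section PartB
open CategoryTheory Abelian

/-- multiplication by `a` on `S/𝔟`, as a short complex. -/
abbrev bComplex {S : Type} [CommRing S] (𝔟 : Ideal S) (a : S) : ShortComplex (ModuleCat.{0} S) :=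
  ShortComplex.mk (X₁ := ModuleCat.of S (S ⧸ 𝔟)) (X₂ := ModuleCat.of S (S ⧸ 𝔟))
    (X₃ := ModuleCat.of S (S ⧸ (𝔟 ⊔ Ideal.span {a}))) (a • 𝟙 _)
    (ModuleCat.ofHom (Submodule.factor (le_sup_left : 𝔟 ≤ 𝔟 ⊔ Ideal.span {a}))) (by
      ext
      change Ideal.Quotient.mk (𝔟 ⊔ Ideal.span {a}) (a * 1) = 0
      rw [mul_one]
      exact Ideal.Quotient.eq_zero_iff_mem.2
        (Ideal.mem_sup_right (Ideal.mem_span_singleton_self a)))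

lemma bComplex_shortExact {S : Type} [CommRing S] (𝔟 : Ideal S) (a : S)
    (ha : ∀ u, a * u ∈ 𝔟 → u ∈ 𝔟) : (bComplex 𝔟 a).ShortExact where
  exact := by
    rw [ShortComplex.moduleCat_exact_iff]
    intro x hx
    change S ⧸ 𝔟 at x
    obtain ⟨x, rfl⟩ := Ideal.Quotient.mk_surjective x
    have hx' : x ∈ 𝔟 ⊔ Ideal.span {a} := Ideal.Quotient.eq_zero_iff_mem.1 hx
    obtain ⟨b, hb, c, hc, rfl⟩ := Submodule.mem_sup.1 hx'
    obtain ⟨r, rfl⟩ := Ideal.mem_span_singleton'.1 hc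
    refine ⟨(Ideal.Quotient.mk 𝔟 r : S ⧸ 𝔟), ?_⟩
    change a • (Ideal.Quotient.mk 𝔟 r) = Ideal.Quotient.mk 𝔟 (b + r * a)
    change Ideal.Quotient.mk 𝔟 (a * r) = Ideal.Quotient.mk 𝔟 (b + r * a)
    rw [Ideal.Quotient.eq]
    have : a * r - (b + r * a) = -b := by ring
    rw [this]; exact neg_mem hb
  mono_f := by
    rw [ModuleCat.mono_iff_injective]
    intro x y hxy
    change S ⧸ 𝔟 at x y
    obtain ⟨x, rfl⟩ := Ideal.Quotient.mk_surjective x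
    obtain ⟨y, rfl⟩ := Ideal.Quotient.mk_surjective y
    change Ideal.Quotient.mk 𝔟 (a * x) = Ideal.Quotient.mk 𝔟 (a * y) at hxy
    rw [Ideal.Quotient.eq, ← mul_sub] at hxy
    exact Ideal.Quotient.eq.2 (ha _ hxy)
  epi_g := by
    rw [ModuleCat.epi_iff_surjective]
    exact Submodule.factor_surjective (le_sup_left : 𝔟 ≤ 𝔟 ⊔ Ideal.span {a})

/-- Vanishing of `Ext^i(S/𝔓, S/𝔟)` for `i < c`. -/
def EV {S : Type} [CommRing S] (𝔓 𝔟 : Ideal S) (c : ℕ) : Prop :=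
  ∀ i < c, ∀ x : Ext (ModuleCat.of S (S ⧸ 𝔓)) (ModuleCat.of S (S ⧸ 𝔟)) i, x = 0

lemma EV_up {S : Type} [CommRing S] (𝔓 𝔟 : Ideal S) (c : ℕ) (a : S)
    (ha : ∀ u, a * u ∈ 𝔟 → u ∈ 𝔟) (haP : a ∈ 𝔓) (h : EV 𝔓 (𝔟 ⊔ Ideal.span {a}) c) :
    EV 𝔓 𝔟 (c + 1) := by
  intro i hi x
  have hS := bComplex_shortExact 𝔟 a ha
  have h0 : x.comp (Ext.mk₀ (bComplex 𝔟 a).f) (add_zero i) = 0 := by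
    change x.comp (Ext.mk₀ (a • 𝟙 _)) (add_zero i) = 0
    rw [← Ext.smul_eq_comp_mk₀]
    have e : (Ext.mk₀ (a • 𝟙 (ModuleCat.of S (S ⧸ 𝔓)))).comp x (zero_add i) = a • x := by
      rw [Ext.mk₀_smul, Ext.smul_comp, Ext.mk₀_id_comp]
    rw [← e]
    have : a • 𝟙 (ModuleCat.of S (S ⧸ 𝔓)) = 0 := by
      ext
      change Ideal.Quotient.mk 𝔓 (a * 1) = 0
      rw [mul_one]
      exact Ideal.Quotient.eq_zero_iff_mem.2 haP
    rw [this, Ext.mk₀_zero, Ext.zero_comp]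
  cases i with
  | zero =>
    have : Mono (bComplex 𝔟 a).f := hS.mono_f
    have := Ext.postcomp_mk₀_injective_of_mono (ModuleCat.of S (S ⧸ 𝔓)) (bComplex 𝔟 a).f
    apply this
    rw [map_zero]
    exact h0
  | succ i =>
    obtain ⟨x3, rfl⟩ := Ext.covariant_sequence_exact₁ _ hS x h0 rfl
    rw [h i (by omega) x3, Ext.zero_comp]

lemma EV_down {S : Type} [CommRing S] (𝔓 𝔟 : Ideal S) (c : ℕ) (a : S)
    (ha : ∀ u, a * u ∈ 𝔟 → u ∈ 𝔟) (h : EV 𝔓 𝔟 (c + 1)) :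
    EV 𝔓 (𝔟 ⊔ Ideal.span {a}) c := by
  intro i hi x
  have hS := bComplex_shortExact 𝔟 a ha
  obtain ⟨x2, rfl⟩ := Ext.covariant_sequence_exact₃ _ hS x rfl (h (i+1) (by omega) _)
  rw [h i (by omega) x2, Ext.zero_comp]

lemma EV_one {S : Type} [CommRing S] (𝔓 𝔟 : Ideal S) (h : EV 𝔓 𝔟 1) (u : S)
    (hu : ∀ r ∈ 𝔓, r * u ∈ 𝔟) : u ∈ 𝔟 := by
  let φ : (S ⧸ 𝔓) →ₗ[S] (S ⧸ 𝔟) := Submodule.liftQ 𝔓 (LinearMap.toSpanSingleton S _ 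
    (Ideal.Quotient.mk 𝔟 u)) (by
      intro r hr
      change r • (Ideal.Quotient.mk 𝔟 u) = 0
      change Ideal.Quotient.mk 𝔟 (r * u) = 0
      exact Ideal.Quotient.eq_zero_iff_mem.2 (hu r hr))
  have h1 := h 0 (by omega) (Ext.mk₀ (ModuleCat.ofHom φ))
  rw [Ext.mk₀_eq_zero_iff] at h1
  have h2 : φ (Ideal.Quotient.mk 𝔓 1) = 0 := by
    have := congrArg ModuleCat.Hom.hom h1
    change φ = 0 at this
    rw [this]; rfl
  change (1 : S) • (Ideal.Quotient.mk 𝔟 u) = 0 at h2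
  rw [one_smul] at h2
  exact Ideal.Quotient.eq_zero_iff_mem.1 h2

/-- the linear ideal of a point on a set of coordinates -/
def ptId {σ : Type} (p : σ → ℂ) (T : Finset σ) : Ideal (MvPolynomial σ ℂ) :=
  Ideal.span ((fun i => X i - C (p i)) '' (T : Set σ))

lemma ptId_insert {σ : Type} [DecidableEq σ] (p : σ → ℂ) (T : Finset σ) (i : σ) :
    ptId p (insert i T) = ptId p T ⊔ Ideal.span {X i - C (p i)} := by
  rw [ptId, ptId, ← Ideal.span_union, Finset.coe_insert, Set.image_insert_eq, Set.union_singleton]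

lemma ptId_reg {σ : Type} [DecidableEq σ] (p : σ → ℂ) (T : Finset σ) (i : σ) (hi : i ∉ T)
    (u : MvPolynomial σ ℂ) (hu : (X i - C (p i)) * u ∈ ptId p T) : u ∈ ptId p T := by
  let φ : MvPolynomial σ ℂ →ₐ[ℂ] MvPolynomial σ ℂ := 
    aeval (fun j => if j ∈ T then C (p j) else X j)
  have h1 : ∀ P, P - φ P ∈ ptId p T := by
    intro P
    induction P using MvPolynomial.induction_on with
    | C a => simp [φ]
    | add P Q hP hQ =>
      have : P + Q - φ (P + Q) = (P - φ P) + (Q - φ Q) := by rw [map_add]; ring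
      rw [this]; exact add_mem hP hQ
    | mul_X P j hP =>
      have : P * X j - φ (P * X j) = (P - φ P) * X j + φ P * (X j - φ (X j)) := by
        rw [map_mul]; ring
      rw [this]
      refine add_mem (Ideal.mul_mem_right _ _ hP) (Ideal.mul_mem_left _ _ ?_)
      by_cases hj : j ∈ T
      · simp only [φ, aeval_X, hj, if_true]
        exact Ideal.subset_span ⟨j, hj, rfl⟩
      · simp [φ, hj]
  have h2 : ∀ P ∈ ptId p T, φ P = 0 := by
    intro P hP
    have : ptId p T ≤ RingHom.ker φ := by
      rw [ptId, Ideal.span_le]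
      rintro _ ⟨j, hj, rfl⟩
      have hj' : j ∈ T := hj
      simp [φ, hj', RingHom.mem_ker]
    exact this hP
  have h3 := h2 _ hu
  rw [map_mul, mul_eq_zero] at h3
  rcases h3 with h3 | h3
  · exfalso
    have h4 : φ (X i - C (p i)) = X i - C (p i) := by
      simp [φ, hi, MvPolynomial.algebraMap_eq]
    rw [h4] at h3
    have := congrArg (eval (fun _ => p i + 1)) h3
    simp at this
  · have := h1 u
    rwa [h3, sub_zero] at this

lemma EV_point {σ : Type} [Fintype σ] (p : σ → ℂ) (𝔓 : Ideal (MvPolynomial σ ℂ))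
    (hP : ∀ i, X i - C (p i) ∈ 𝔓) : EV 𝔓 ⊥ (Fintype.card σ) := by
  classical
  have key : ∀ T : Finset σ, ∀ c, EV 𝔓 (ptId p T) c → EV 𝔓 (ptId p ∅) (c + T.card) := by
    intro T
    induction T using Finset.induction_on with
    | empty => intro c hc; simpa using hc
    | insert i T hi ih =>
      intro c hc
      rw [Finset.card_insert_of_notMem hi, ← add_assoc, add_right_comm]
      apply ih
      rw [ptId_insert] at hc
      exact EV_up 𝔓 _ c _ (ptId_reg p T i hi) (hP i) hc
  have := key Finset.univ 0 (fun i hi => by omega)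
  simpa [ptId] using this

end PartB

section PartB2

/-- `Ass' 𝔟 𝔮` : `𝔮` is a prime of the form `(𝔟 : u)`. -/
def AssP {S : Type} [CommRing S] (𝔟 𝔮 : Ideal S) : Prop :=
  IsAssociatedPrime 𝔮 (S ⧸ 𝔟)

lemma mem_colon_quot {S : Type} [CommRing S] (𝔟 : Ideal S) (u r : S) :
    r ∈ (⊥ : Submodule S (S ⧸ 𝔟)).colon {Ideal.Quotient.mk 𝔟 u} ↔ r * u ∈ 𝔟 := by
  rw [Submodule.mem_colon_singleton, Submodule.mem_bot]
  change Ideal.Quotient.mk 𝔟 (r * u) = 0 ↔ _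
  exact Ideal.Quotient.eq_zero_iff_mem

lemma AssP.exists {S : Type} [CommRing S] [IsNoetherianRing S] {𝔟 𝔮 : Ideal S} (h : AssP 𝔟 𝔮) :
    𝔮.IsPrime ∧ ∃ u, ∀ r, r ∈ 𝔮 ↔ r * u ∈ 𝔟 := by
  obtain ⟨h1, x, hx⟩ := isAssociatedPrime_iff.1 h
  obtain ⟨u, rfl⟩ := Ideal.Quotient.mk_surjective x
  refine ⟨h1, u, fun r => ?_⟩
  rw [hx]
  exact mem_colon_quot 𝔟 u r

lemma exists_AssP {S : Type} [CommRing S] [IsNoetherianRing S] (𝔟 : Ideal S) (u : S) (hu : u ∉ 𝔟) :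
    ∃ 𝔮, AssP 𝔟 𝔮 ∧ ∀ r, r * u ∈ 𝔟 → r ∈ 𝔮 := by
  obtain ⟨P, hP, h2⟩ := exists_le_isAssociatedPrime_of_isNoetherianRing S
    (Ideal.Quotient.mk 𝔟 u) (fun h => hu (Ideal.Quotient.eq_zero_iff_mem.1 h))
  exact ⟨P, hP, fun r hr => h2 ((mem_colon_quot 𝔟 u r).2 hr)⟩

lemma exists_regular {S : Type} [CommRing S] [IsNoetherianRing S] (𝔟 J : Ideal S)
    (hJ : ∀ 𝔮, AssP 𝔟 𝔮 → ¬ J ≤ 𝔮) : ∃ a ∈ J, ∀ u, a * u ∈ 𝔟 → u ∈ 𝔟 := by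
  by_contra hcon
  push Not at hcon
  have hfin : (associatedPrimes S (S ⧸ 𝔟)).Finite := associatedPrimes.finite S (S ⧸ 𝔟)
  obtain ⟨P, hP, hP2⟩ := (J.subset_union_prime_finite hfin (f := id) 0 0
      (fun _ h _ _ ↦ h.isPrime)).1 (by
    intro a ha
    obtain ⟨u, hu, hu2⟩ := hcon a ha
    obtain ⟨𝔮, h𝔮, h2⟩ := exists_AssP 𝔟 u hu2
    rw [Set.mem_iUnion₂]
    exact ⟨𝔮, h𝔮, h2 a hu⟩)
  exact hJ P hP hP2

lemma lemU {S : Type} [CommRing S] [IsNoetherianRing S] (𝔟 𝔮 𝔓 : Ideal S) (h𝔮 : AssP 𝔟 𝔮) 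
    (hP : 𝔓 ≠ ⊤) (hqP : 𝔮 ≤ 𝔓) (y : S) (hyP : y ∈ 𝔓) (hy : ∀ u, y * u ∈ 𝔟 → u ∈ 𝔟) :
    ∃ 𝔮', AssP (𝔟 ⊔ Ideal.span {y}) 𝔮' ∧ 𝔮 ≤ 𝔮' ∧ y ∈ 𝔮' := by
  obtain ⟨hprime, u, hu⟩ := h𝔮.exists
  have main : ∃ v, v ∉ 𝔟 ⊔ Ideal.span {y} ∧ ∀ r ∈ 𝔮, r * v ∈ 𝔟 := by
    by_contra hcon
    push Not at hcon
    let H : Ideal S := 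
      { carrier := {v | ∀ r ∈ 𝔮, r * v ∈ 𝔟}
        add_mem' := by
          intro a b ha hb r hr
          rw [mul_add]; exact add_mem (ha r hr) (hb r hr)
        zero_mem' := by intro r _; simp
        smul_mem' := by
          intro c v hv r hr
          have : r * (c • v) = c * (r * v) := by simp; ring
          rw [this]; exact Ideal.mul_mem_left _ _ (hv r hr) }
    have hH : ∀ v, v ∈ H ↔ ∀ r ∈ 𝔮, r * v ∈ 𝔟 := fun v => Iff.rfl
    let N : Submodule S (S ⧸ 𝔟) := Submodule.map (Submodule.mkQ 𝔟) H
    obtain ⟨r, hr1, hr2⟩ := Submodule.exists_sub_one_mem_and_smul_eq_zero_of_fg_of_le_smul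
      (Ideal.span {y}) N (IsNoetherian.noetherian N) (by
        rintro _ ⟨v, hv, rfl⟩
        have h1 : v ∈ 𝔟 ⊔ Ideal.span {y} := by
          by_contra h2
          obtain ⟨r, hr, hr'⟩ := hcon v h2
          exact hr' (hv r hr)
        obtain ⟨b, hb, c, hc, rfl⟩ := Submodule.mem_sup.1 h1
        obtain ⟨w, rfl⟩ := Ideal.mem_span_singleton'.1 hc
        have hw : w ∈ H := by
          rw [hH]
          intro r hr
          apply hy
          have h3 : r * (b + w * y) ∈ 𝔟 := hv r hr
          have : y * (r * w) = r * (b + w * y) - r * b := by ring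
          rw [this]
          exact sub_mem h3 (Ideal.mul_mem_left _ _ hb)
        have e : Submodule.mkQ 𝔟 (b + w * y) = y • Submodule.mkQ 𝔟 w := by
          rw [map_add, ← map_smul]
          have : Submodule.mkQ 𝔟 b = 0 := (Submodule.Quotient.mk_eq_zero 𝔟).2 hb
          rw [this, zero_add, smul_eq_mul, mul_comm]
        rw [e]
        exact Submodule.smul_mem_smul (Ideal.mem_span_singleton_self y) ⟨w, hw, rfl⟩)
    have h4 : r * u ∈ 𝔟 := by
      have := hr2 (Submodule.mkQ 𝔟 u) ⟨u, fun r hr => (hu r).1 hr, rfl⟩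
      rw [← map_smul] at this
      exact (Submodule.Quotient.mk_eq_zero 𝔟).1 this
    have h5 : r ∈ 𝔓 := hqP ((hu r).2 h4)
    have h6 : r - 1 ∈ 𝔓 := (Ideal.span_singleton_le_iff_mem 𝔓).2 hyP hr1
    apply hP
    rw [Ideal.eq_top_iff_one]
    have : (1 : S) = r - (r - 1) := by ring
    rw [this]
    exact sub_mem h5 h6
  obtain ⟨v, hv1, hv2⟩ := main
  obtain ⟨𝔮', h1, h2⟩ := exists_AssP _ v hv1
  refine ⟨𝔮', h1, fun r hr => h2 r (Ideal.mem_sup_left (hv2 r hr)), h2 y ?_⟩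
  exact Ideal.mem_sup_right (Ideal.mul_mem_right _ _ (Ideal.mem_span_singleton_self y))

/-- there are `c` algebraically independent elements modulo `𝔮` -/
def TD {S : Type} [CommRing S] [Algebra ℂ S] (𝔮 : Ideal S) (c : ℕ) : Prop :=
  ∃ (ι : Type) (_ : Fintype ι) (z : ι → S ⧸ 𝔮), Fintype.card ι = c ∧ AlgebraicIndependent ℂ z

lemma TD_zero {S : Type} [CommRing S] [Algebra ℂ S] (𝔮 : Ideal S) (h : 𝔮.IsPrime) : TD 𝔮 0 := by
  refine ⟨Empty, inferInstance, Empty.elim, rfl, ?_⟩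
  have : Nontrivial (S ⧸ 𝔮) := Ideal.Quotient.nontrivial_iff.2 h.ne_top
  rw [algebraicIndependent_empty_type_iff]
  exact (algebraMap ℂ (S ⧸ 𝔮)).injective

lemma TD_succ {S : Type} [CommRing S] [Algebra ℂ S] (𝔮 𝔮' : Ideal S) (h : 𝔮.IsPrime)
    (hle : 𝔮 ≤ 𝔮') (y : S) (hy : y ∈ 𝔮') (hy' : y ∉ 𝔮) (c : ℕ) (hc : TD 𝔮' c) :
    TD 𝔮 (c + 1) := by
  obtain ⟨ι, hι, z, hcard, hz⟩ := hc
  let φ : (S ⧸ 𝔮) →ₐ[ℂ] (S ⧸ 𝔮') := Ideal.Quotient.factorₐ ℂ hle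
  have hφ : Function.Surjective φ := Ideal.Quotient.factor_surjective hle
  choose w hw using fun i => hφ (z i)
  have hφw : φ ∘ w = z := funext hw
  have hwi : AlgebraicIndependent ℂ w := AlgebraicIndependent.of_comp φ (by rw [hφw]; exact hz)
  refine ⟨Option ι, inferInstance, fun o => o.elim (Ideal.Quotient.mk 𝔮 y) w, by simp [hcard], ?_⟩
  rw [hwi.option_iff_transcendental]
  rintro ⟨p, hp, hp0⟩
  have hdom : IsDomain (S ⧸ 𝔮) := Ideal.Quotient.isDomain 𝔮
  have hX : Polynomial.X - Polynomial.C (0 : Algebra.adjoin ℂ (Set.range w)) = Polynomial.X := by simp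
  obtain ⟨q, hq1, hq2⟩ := Polynomial.exists_eq_pow_rootMultiplicity_mul_and_not_dvd p hp 0
  rw [hX] at hq1 hq2
  rw [hq1, map_mul, map_pow, Polynomial.aeval_X, mul_eq_zero] at hp0
  have hyne : (Ideal.Quotient.mk 𝔮 y) ≠ 0 := fun h => hy' (Ideal.Quotient.eq_zero_iff_mem.1 h)
  replace hp0 := hp0.resolve_left (pow_ne_zero _ hyne)
  rw [Polynomial.X_dvd_iff] at hq2
  apply hq2
  have hφy : φ (Ideal.Quotient.mk 𝔮 y) = 0 := Ideal.Quotient.eq_zero_iff_mem.2 hy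
  have h1 : φ (q.coeff 0 : S ⧸ 𝔮) = 0 := by
    have h2 := congrArg φ hp0
    rw [map_zero, Polynomial.aeval_def, Polynomial.eval₂_eq_sum_range, map_sum,
      Finset.sum_range_succ', Finset.sum_eq_zero, zero_add] at h2
    · simpa using h2
    · intro i _
      rw [map_mul, map_pow, hφy]; simp
  have h3 : ∀ t ∈ Algebra.adjoin ℂ (Set.range w), ∃ P : MvPolynomial _ ℂ, aeval w P = t := by
    intro t ht
    rw [Algebra.adjoin_range_eq_range_aeval] at ht
    exact ht
  obtain ⟨P, hP⟩ := h3 _ (q.coeff 0).2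
  have h4 : aeval z P = 0 := by
    rw [← h1, ← hP]
    change _ = φ (aeval w P)
    rw [← hφw, ← AlgHom.comp_apply, MvPolynomial.comp_aeval]
    rfl
  have h5 : P = 0 := hz.eq_zero_of_aeval_eq_zero P h4
  apply Subtype.ext
  rw [← hP, h5]; simp

/-- `CI j 𝔟`: `𝔟` is generated by a regular sequence of length `j`. -/
inductive CI {S : Type} [CommRing S] : ℕ → Ideal S → Prop
  | zero : CI 0 ⊥
  | succ (j : ℕ) (𝔟 : Ideal S) (a : S) : CI j 𝔟 → (∀ u, a * u ∈ 𝔟 → u ∈ 𝔟) →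
      CI (j + 1) (𝔟 ⊔ Ideal.span {a})

lemma EV_CI {σ : Type} [Fintype σ] (𝔓 : Ideal (MvPolynomial σ ℂ)) (h𝔓 : 𝔓.IsMaximal) (j : ℕ)
    (𝔟 : Ideal (MvPolynomial σ ℂ)) (h : CI j 𝔟) : ∀ c, j + c = Fintype.card σ → EV 𝔓 𝔟 c := by
  induction h with
  | zero =>
    intro c hc
    obtain ⟨p, hp⟩ := isMaximal_iff_eq_vanishingIdeal_singleton.1 h𝔓
    have := EV_point p 𝔓 (fun i => by
      rw [hp, mem_vanishingIdeal_singleton_iff]; simp)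
    rw [← hc, zero_add] at this
    exact this
  | succ j 𝔟 a h1 h2 ih =>
    intro c hc
    exact EV_down 𝔓 𝔟 c a h2 (ih (c+1) (by omega))

lemma dim_lemma {σ : Type} [Fintype σ] (c : ℕ) : ∀ (j : ℕ) (𝔟 𝔮 : Ideal (MvPolynomial σ ℂ)),
    CI j 𝔟 → j + c = Fintype.card σ → AssP 𝔟 𝔮 → TD 𝔮 c := by
  induction c with
  | zero => intro j 𝔟 𝔮 _ _ h; exact TD_zero 𝔮 h.exists.1
  | succ c ih =>
    intro j 𝔟 𝔮 hCI hj h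
    obtain ⟨hq, u, hu⟩ := h.exists
    obtain ⟨𝔓, h𝔓, hq𝔓⟩ := Ideal.exists_le_maximal 𝔮 hq.ne_top
    obtain ⟨y, hy, hyr⟩ := exists_regular 𝔟 𝔓 (by
      intro 𝔮' h' hle
      obtain ⟨hq', u', hu'⟩ := h'.exists
      have e : 𝔓 = 𝔮' := h𝔓.eq_of_le hq'.ne_top hle
      have hEV := EV_CI 𝔓 h𝔓 j 𝔟 hCI (c+1) hj
      have := EV_one 𝔓 𝔟 (fun i hi => hEV i (by omega)) u' (fun r hr => (hu' r).1 (e ▸ hr))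
      apply hq'.ne_top
      rw [Ideal.eq_top_iff_one, hu', one_mul]
      exact this)
    obtain ⟨𝔮', h1, h2, h3⟩ := lemU 𝔟 𝔮 𝔓 h h𝔓.ne_top hq𝔓 y hy hyr
    refine TD_succ 𝔮 𝔮' hq h2 y h3 ?_ c (ih (j+1) _ 𝔮' (CI.succ j 𝔟 y hCI hyr) (by omega) h1)
    intro hy'
    have h4 := hyr u ((hu y).1 hy')
    apply hq.ne_top
    rw [Ideal.eq_top_iff_one, hu, one_mul]
    exact h4

/-- Existence of a regular sequence in `J` modulo `f`. -/
lemma exists_regular_list {σ : Type} [Fintype σ] (J : Ideal (MvPolynomial σ ℂ))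
    (f : MvPolynomial σ ℂ) (m : ℕ)
    (hJ : ∀ 𝔮 : Ideal (MvPolynomial σ ℂ), 𝔮.IsPrime → f ∈ 𝔮 → J ≤ 𝔮 → ∀ c, TD 𝔮 c → c ≤ m) :
    ∀ r j : ℕ, ∀ 𝔟, CI j 𝔟 → f ∈ 𝔟 → j + r + m ≤ Fintype.card σ →
      ∃ l : List (MvPolynomial σ ℂ), l.length = r ∧ (∀ a ∈ l, a ∈ J) ∧ exReg 𝔟 l := by
  intro r
  induction r with
  | zero => intro j 𝔟 _ _ _; exact ⟨[], rfl, by simp, trivial⟩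
  | succ r ih =>
    intro j 𝔟 hCI hf hj
    obtain ⟨a, ha, har⟩ := exists_regular 𝔟 J (by
      intro 𝔮 h hle
      obtain ⟨hq, u, hu⟩ := h.exists
      have h1 := dim_lemma (Fintype.card σ - j) j 𝔟 𝔮 hCI (by omega) h
      have h2 := hJ 𝔮 hq ((hu f).2 (Ideal.mul_mem_right _ _ hf)) hle _ h1
      omega)
    obtain ⟨l, hl1, hl2, hl3⟩ := ih (j+1) _ (CI.succ j 𝔟 a hCI har) (Ideal.mem_sup_left hf) (by omega)
    refine ⟨a :: l, by simp [hl1], ?_, har, hl3⟩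
    intro b hb
    rcases List.mem_cons.1 hb with rfl | hb
    · exact ha
    · exact hl2 b hb

lemma exists_regular_list' {σ : Type} [Fintype σ] (J : Ideal (MvPolynomial σ ℂ))
    (f : MvPolynomial σ ℂ) (hf0 : f ≠ 0) (m r : ℕ)
    (hJ : ∀ 𝔮 : Ideal (MvPolynomial σ ℂ), 𝔮.IsPrime → f ∈ 𝔮 → J ≤ 𝔮 → ∀ c, TD 𝔮 c → c ≤ m) 
    (h : 1 + r + m ≤ Fintype.card σ) :
    ∃ l : List (MvPolynomial σ ℂ), l.length = r ∧ (∀ a ∈ l, a ∈ J) ∧ exReg (Ideal.span {f}) l := by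
  have h1 : CI 1 (⊥ ⊔ Ideal.span {f}) := CI.succ 0 ⊥ f CI.zero (by
    intro u hu
    have : f * u = 0 := hu
    exact (mul_eq_zero.1 this).resolve_left hf0)
  rw [bot_sup_eq] at h1
  exact exists_regular_list J f m hJ r 1 _ h1 (Ideal.mem_span_singleton_self f) h

end PartB2

section PartC1

open scoped IntermediateField.algebraAdjoinAdjoin in
theorem exists_dual_derivation {L : Type} [Field L] [Algebra ℂ L] {ι : Type} {z : ι → L}
    (hz : AlgebraicIndependent ℂ z) (i : ι) :
    ∃ D : Derivation ℂ L L, D (z i) = 1 ∧ ∀ j, j ≠ i → D (z j) = 0 := by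
  classical
  have : CharZero L := charZero_of_injective_algebraMap (algebraMap ℂ L).injective
  obtain ⟨s, hs1, hs⟩ := exists_isTranscendenceBasis_superset hz.to_subtype_range
  have hind := hs.1
  let v : s → L := Subtype.val
  change AlgebraicIndependent ℂ v at hind
  let A := Algebra.adjoin ℂ (Set.range v)
  let F := IntermediateField.adjoin ℂ (Set.range v)
  have h1 : Algebra.FormallyEtale A F := .of_isLocalization (nonZeroDivisors A)
  have h2 : Algebra.IsAlgebraic F L := by
    have := hs.isAlgebraic_field
    exact this
  have h3 : Algebra.FormallyEtale F L := Algebra.FormallyEtale.of_isSeparable F L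
  have : Algebra.FormallyEtale A L := .comp A F L
  let e : MvPolynomial s ℂ ≃ₐ[ℂ] A := hind.aevalEquiv
  have hzs : ∀ j, z j ∈ s := fun j => hs1 ⟨j, rfl⟩
  let t : s := ⟨z i, hzs i⟩
  have he : ∀ u : s, (e (X u) : L) = u := by
    intro u
    have := hind.algebraMap_aevalEquiv (X u)
    rw [aeval_X] at this
    exact this
  let dA : Derivation ℂ A L := Derivation.mk'
    ((Algebra.linearMap A L).restrictScalars ℂ ∘ₗ e.toLinearMap ∘ₗ
      (pderiv t).toLinearMap ∘ₗ e.symm.toLinearMap) (by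
      intro a b
      have hb : ∀ (a : A) (l : L), a • l = (a : L) * l := fun a l => Algebra.smul_def a l
      simp [Algebra.smul_def])
  have hdA : ∀ u : s, dA (e (X u)) = if u = t then 1 else 0 := by
    intro u
    change algebraMap A L (e (pderiv t (e.symm (e (X u))))) = _
    rw [AlgEquiv.symm_apply_apply, pderiv_X, Pi.single_apply]
    split_ifs <;> simp_all
  let T : TensorProduct A L (Ω[A⁄ℂ]) →ₗ[L] L :=
    LinearMap.liftBaseChange L dA.liftKaehlerDifferential
  let T' := T ∘ₗ (KaehlerDifferential.tensorKaehlerEquivOfFormallyEtale ℂ A L).symm.toLinearMap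
  let D : Derivation ℂ L L := T'.compDer (KaehlerDifferential.D ℂ L)
  have hD : ∀ a : A, D (algebraMap A L a) = dA a := by
    intro a
    change T ((KaehlerDifferential.tensorKaehlerEquivOfFormallyEtale ℂ A L).symm
      (KaehlerDifferential.D ℂ L (algebraMap A L a))) = _
    rw [KaehlerDifferential.tensorKaehlerEquivOfFormallyEtale_symm_D_algebraMap]
    simp [T]
  have hDz : ∀ j, D (z j) = if z j = z i then 1 else 0 := by
    intro j
    have h := hD (e (X ⟨z j, hzs j⟩))
    rw [hdA] at h
    have h' : algebraMap A L (e (X ⟨z j, hzs j⟩)) = z j := he _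
    rw [h'] at h
    rw [h]
    simp [t]
  refine ⟨D, by simp [hDz], fun j hj => ?_⟩
  rw [hDz, if_neg]
  exact fun h => hj (hz.injective h)

end PartC1

section PartC2

variable {L : Type} [Field L] [Algebra ℂ L]

lemma lin_isotropic {κ : Type} [Fintype κ] (U : Submodule L ((κ → L) × (κ → L)))
    (hU : ∀ u ∈ U, ∀ v ∈ U, ∑ k, u.1 k * v.2 k = ∑ k, v.1 k * u.2 k) :
    Module.finrank L U ≤ Fintype.card κ := by
  classical
  let B : LinearMap.BilinForm L ((κ → L) × (κ → L)) :=
    LinearMap.mk₂ L (fun u v => ∑ k, u.1 k * v.2 k - ∑ k, v.1 k * u.2 k)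
      (by intro a b c; simp [add_mul, mul_add, Finset.sum_add_distrib]; ring)
      (by intro r a b; simp [Finset.mul_sum, mul_sub, mul_assoc, mul_left_comm])
      (by intro a b c; simp [add_mul, mul_add, Finset.sum_add_distrib]; ring)
      (by intro r a b; simp [Finset.mul_sum, mul_sub, mul_assoc, mul_left_comm])
  have hB : ∀ u v, B u v = ∑ k, u.1 k * v.2 k - ∑ k, v.1 k * u.2 k := fun _ _ => rfl
  have hrefl : B.IsRefl := by
    intro u v h
    rw [hB] at h ⊢
    rw [← neg_sub, h, neg_zero]
  have hnd : B.Nondegenerate := by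
    refine hrefl.nondegenerate_iff_separatingLeft.2 ?_
    intro u hu
    ext k
    · have := hu (0, Pi.single k 1)
      simpa [hB, Pi.single_apply] using this
    · have := hu (Pi.single k 1, 0)
      simpa [hB, Pi.single_apply] using this
  have h1 := LinearMap.BilinForm.finrank_orthogonal hnd U
  have h2 : U ≤ B.orthogonal U := by
    intro u hu v hv
    change B v u = 0
    rw [hB, hU v hv u hu, sub_self]
  have h3 := Submodule.finrank_mono h2
  have h4 : Module.finrank L ((κ → L) × (κ → L)) = Fintype.card κ + Fintype.card κ := by simp
  have h5 := Submodule.finrank_le U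
  omega

/-- the linear family of derivations spanned by the dual derivations -/
lemma exists_der_family {ι : Type} [Fintype ι] {z : ι → L} (hz : AlgebraicIndependent ℂ z) :
    ∃ T : (ι → L) →ₗ[L] Derivation ℂ L L, Function.Injective T := by
  classical
  choose D hD1 hD2 using exists_dual_derivation hz
  refine ⟨Fintype.linearCombination L D, ?_⟩
  rw [injective_iff_map_eq_zero]
  intro a ha
  ext i
  let ev : Derivation ℂ L L →ₗ[L] L :=
    { toFun := fun D => D (z i), map_add' := fun _ _ => rfl, map_smul' := fun _ _ => rfl }
  have := congrArg ev ha
  rw [Fintype.linearCombination_apply, map_sum, Finset.sum_eq_single i] at this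
  · simpa [hD1, ev] using this
  · intro j _ hj
    simp [hD2 j i hj.symm, ev]
  · simp

lemma der_bound_inj {ι : Type} [Fintype ι] {z : ι → L} (hz : AlgebraicIndependent ℂ z)
    {κ : Type} [Fintype κ] (y : κ → L)
    (hy : ∀ D : Derivation ℂ L L, (∀ k, D (y k) = 0) → D = 0) :
    Fintype.card ι ≤ Fintype.card κ := by
  obtain ⟨T, hT⟩ := exists_der_family hz
  let Ψ : Derivation ℂ L L →ₗ[L] (κ → L) :=
    { toFun := fun D k => D (y k), map_add' := fun _ _ => rfl, map_smul' := fun _ _ => rfl }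
  have h : Function.Injective (Ψ ∘ₗ T) := by
    rw [injective_iff_map_eq_zero]
    intro a ha
    apply hT
    rw [map_zero]
    exact hy _ (fun k => congrFun ha k)
  simpa using LinearMap.finrank_le_finrank_of_injective h

theorem der_bound {ι : Type} [Fintype ι] {z : ι → L} (hz : AlgebraicIndependent ℂ z)
    {κ : Type} [Fintype κ] (c y : κ → L) (s0 : L)
    (h1 : ∀ D : Derivation ℂ L L, ∑ k, c k * D (y k) = 0)
    (h2 : ∀ D : Derivation ℂ L L, (∀ k, D (c k) = 0) → (∀ k, D (y k) = 0) → D s0 = 0 → D = 0) :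
    Fintype.card ι ≤ Fintype.card κ + 1 := by
  obtain ⟨T, hT⟩ := exists_der_family hz
  let Φ : Derivation ℂ L L →ₗ[L] ((κ → L) × (κ → L)) :=
    { toFun := fun D => (fun k => D (c k), fun k => D (y k))
      map_add' := fun _ _ => rfl, map_smul' := fun _ _ => rfl }
  let e : Derivation ℂ L L →ₗ[L] L :=
    { toFun := fun D => D s0, map_add' := fun _ _ => rfl, map_smul' := fun _ _ => rfl }
  have hiso := lin_isotropic (LinearMap.range (Φ ∘ₗ T)) (by
    rintro _ ⟨a, rfl⟩ _ ⟨b, rfl⟩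
    change ∑ k, (T a) (c k) * (T b) (y k) = ∑ k, (T b) (c k) * (T a) (y k)
    have e1 := congrArg (T a) (h1 (T b))
    have e2 := congrArg (T b) (h1 (T a))
    have e3 := h1 ⁅T a, T b⁆
    simp only [map_sum, Derivation.leibniz, smul_eq_mul, map_zero, Derivation.commutator_apply,
      mul_sub, Finset.sum_sub_distrib, Finset.sum_add_distrib] at e1 e2 e3
    simp only [mul_comm ((T b) (y _)), mul_comm ((T a) (y _))] at e1 e2
    linear_combination e1 - e2 - e3)
  have hker : Module.finrank L (LinearMap.ker (Φ ∘ₗ T)) ≤ 1 := by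
    have : Function.Injective ((e ∘ₗ T).domRestrict (LinearMap.ker (Φ ∘ₗ T))) := by
      rw [injective_iff_map_eq_zero]
      rintro ⟨a, ha⟩ hb
      apply Subtype.ext
      apply hT
      change T a = T 0
      rw [map_zero]
      have ha' : Φ (T a) = 0 := ha
      exact h2 _ (fun k => congrFun (congrArg Prod.fst ha') k)
        (fun k => congrFun (congrArg Prod.snd ha') k) hb
    simpa using LinearMap.finrank_le_finrank_of_injective this
  have := LinearMap.finrank_range_add_finrank_ker (Φ ∘ₗ T)
  rw [Module.finrank_fintype_fun_eq_card] at this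
  omega

end PartC2

section PartC3

lemma homComp_mul {σ : Type} (h f : MvPolynomial σ ℂ) (d e : ℕ) (hf : f.IsHomogeneous d) :
    homogeneousComponent e (h * f) =
      if d ≤ e then homogeneousComponent (e - d) h * f else 0 := by
  induction h using MvPolynomial.induction_on' with
  | monomial u a =>
    have hu : (monomial u a : MvPolynomial σ ℂ).IsHomogeneous u.degree :=
      isHomogeneous_monomial a rfl
    rw [homogeneousComponent_of_mem (hu.mul hf), homogeneousComponent_of_mem hu]
    by_cases h : d ≤ e
    · rw [if_pos h]
      by_cases h' : e = u.degree + d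
      · rw [if_pos h', if_pos (by omega)]
      · rw [if_neg h', if_neg (by omega), zero_mul]
    · rw [if_neg h, if_neg (by omega)]
  | add p q hp hq =>
    rw [add_mul, map_add, hp, hq]
    split_ifs
    · rw [map_add, add_mul]
    · rw [add_zero]

lemma X_pow_mem {n m : ℕ} (f : Fin m → Rp n)
    (hz : ∀ p : Fin n → ℂ, (∀ k, eval p (f k) = 0) → p = 0) (j : Fin n) :
    ∃ N, (X j : Rp n) ^ N ∈ Ideal.span (Set.range f) := by
  have : (X j : Rp n) ∈ (Ideal.span (Set.range f)).radical := by
    rw [← vanishingIdeal_zeroLocus_eq_radical (K := ℂ), mem_vanishingIdeal_iff]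
    intro p hp
    rw [zeroLocus_span] at hp
    have : p = 0 := hz p (fun k => by simpa using hp _ ⟨k, rfl⟩)
    simp [this]
  exact this

theorem int_X {n m : ℕ} (f : Fin m → Rp n) (d : Fin m → ℕ)
    (hfh : ∀ i, (f i).IsHomogeneous (d i)) (hd : ∀ i, 1 ≤ d i)
    (hz : ∀ p : Fin n → ℂ, (∀ k, eval p (f k) = 0) → p = 0) (P : Rp n) :
    IsIntegral (Algebra.adjoin ℂ (Set.range f)) P := by
  classical
  choose N hN using X_pow_mem f hz
  let A := Algebra.adjoin ℂ (Set.range f)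
  let T : Set (Fin n →₀ ℕ) := {α | ∀ j, α j ≤ N j}
  have hT : T.Finite := by
    have : T = Set.Iic (Finsupp.equivFunOnFinite.symm N) := by
      ext α; rfl
    rw [this]; exact Set.finite_Iic _
  let M : Submodule A (Rp n) := Submodule.span A ((fun α => monomial α (1:ℂ)) '' T)
  have hfA : ∀ k, f k ∈ A := fun k => Algebra.subset_adjoin ⟨k, rfl⟩
  have hM : ∀ e : ℕ, ∀ p : Rp n, p.totalDegree ≤ e → p ∈ M := by
    intro e
    induction e using Nat.strong_induction_on with
    | _ e ih =>
    intro p hp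
    rw [p.as_sum]
    refine Submodule.sum_mem _ fun α hα => ?_
    have hαe : α.degree ≤ e := by
      refine le_trans ?_ hp
      exact le_totalDegree hα
    have hc : monomial α (coeff α p) = (algebraMap ℂ A (coeff α p)) • monomial α (1:ℂ) := by
      rw [algebraMap_smul, smul_monomial, smul_eq_mul, mul_one]
    rw [hc]
    refine Submodule.smul_mem _ _ ?_
    by_cases hαT : α ∈ T
    · exact Submodule.subset_span ⟨α, hαT, rfl⟩
    have : ∃ j, N j < α j := by
      by_contra hcon
      push Not at hcon
      exact hαT hcon
    obtain ⟨j, hj⟩ := this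
    have h1 : (monomial α (1:ℂ)) ∈ Ideal.span (Set.range f) := by
      have : (monomial α (1:ℂ)) = monomial (α - Finsupp.single j (N j)) 1 * X j ^ (N j) := by
        rw [X_pow_eq_monomial, monomial_mul, mul_one, tsub_add_cancel_of_le]
        intro i
        by_cases h : i = j
        · subst h; simpa using hj.le
        · simp [Ne.symm h]
      rw [this]
      exact Ideal.mul_mem_left _ _ (hN j)
    rw [Ideal.mem_span_range_iff_exists_fun] at h1
    obtain ⟨h, hh⟩ := h1
    have hpos : 1 ≤ α.degree := by
      have : α j ≤ α.degree := Finsupp.le_degree j α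
      omega
    have h2 : monomial α (1:ℂ) =
        ∑ k, (if d k ≤ α.degree then homogeneousComponent (α.degree - d k) (h k) * f k else 0) := by
      have h3 := congrArg (homogeneousComponent α.degree) hh
      rw [homogeneousComponent_eq_self (isHomogeneous_monomial _ rfl), map_sum] at h3
      rw [← h3]
      exact Finset.sum_congr rfl fun k _ => (homComp_mul _ _ _ _ (hfh k))
    rw [h2]
    refine Submodule.sum_mem _ fun k _ => ?_
    split_ifs with hk
    · have : homogeneousComponent (α.degree - d k) (h k) ∈ M := by
        refine ih (α.degree - d k) (by have := hd k; omega) _ ?_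
        exact (homogeneousComponent_isHomogeneous _ _).totalDegree_le
      rw [mul_comm]
      exact Submodule.smul_mem M (⟨f k, hfA k⟩ : A) this
    · exact Submodule.zero_mem _
  have htop : M = ⊤ := by
    rw [eq_top_iff]
    exact fun p _ => hM _ p le_rfl
  have hfin : Module.Finite A (Rp n) := by
    refine ⟨?_⟩
    rw [← htop]
    exact Submodule.fg_span (hT.image _)
  exact Algebra.IsIntegral.isIntegral (R := A) P

lemma der_algebraic {L : Type} [Field L] [Algebra ℂ L] (D : Derivation ℂ L L)
    (A : Subalgebra ℂ L) (hA : ∀ a ∈ A, D a = 0) (x : L) (hx : IsIntegral A x) : D x = 0 := by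
  have : CharZero L := charZero_of_injective_algebraMap (algebraMap ℂ L).injective
  let K : Subfield L :=
    { carrier := {l | D l = 0}
      zero_mem' := map_zero D
      one_mem' := by simp
      add_mem' := by intro a b ha hb; simp_all
      neg_mem' := by intro a ha; simp_all
      mul_mem' := by intro a b ha hb; simp_all
      inv_mem' := by intro a ha; simp_all [Derivation.leibniz_inv] }
  have hK : ∀ k : K, D (k : L) = 0 := fun k => k.2
  let D' : Derivation K L L := Derivation.mk'
    { toFun := D, map_add' := D.map_add
      map_smul' := by
        intro k l
        change D ((k : L) * l) = (k : L) * D l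
        rw [Derivation.leibniz, hK]; simp } (fun a b => D.leibniz a b)
  have hxK : IsIntegral K x := by
    obtain ⟨p, hp, hp0⟩ := hx
    let φ : A →+* K := (Subring.inclusion (S := A.toSubring) (T := K.toSubring) (fun a ha => hA a ha))
    refine ⟨p.map φ, hp.map φ, ?_⟩
    rw [Polynomial.eval₂_map]
    exact hp0
  have h1 : D' (Polynomial.aeval x (minpoly K x)) = 0 := by rw [minpoly.aeval, map_zero]
  rw [Derivation.map_aeval, smul_eq_mul] at h1
  refine (mul_eq_zero.1 h1).resolve_left ?_
  have hsep : (minpoly K x).Separable := (minpoly.irreducible hxK).separable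
  exact hsep.aeval_derivative_ne_zero (minpoly.aeval K x)

end PartC3

section PartC4

lemma snc_card {n m : ℕ} (hn : 1 ≤ n) (f : Fin m → Rp n) (d : Fin m → ℕ)
    (hfh : ∀ i, (f i).IsHomogeneous (d i)) (hsnc : SNC n m f) (I : Finset (Fin m))
    (hI : n ≤ I.card) (p : Fin n → ℂ) (hp : ∀ i ∈ I, eval p (f i) = 0) : p = 0 := by
  classical
  by_contra hp0
  obtain ⟨I', hI', hc⟩ := Finset.exists_subset_card_eq hI
  have h := hsnc.2 I' (by omega) (by omega) p hp0 (fun i hi => hp i (hI' hi))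
  set A := (Matrix.of fun (i : I') (j : Fin n) => eval p (pderiv j (f i.1))) with hA
  have h2 := LinearMap.finrank_range_add_finrank_ker A.mulVecLin
  have h1 : Module.finrank ℂ (LinearMap.range A.mulVecLin) = n := h.trans hc
  rw [h1, Module.finrank_fin_fun] at h2
  have h3 : LinearMap.ker A.mulVecLin = ⊥ := Submodule.finrank_eq_zero.1 (by omega)
  apply hp0
  rw [← Submodule.mem_bot (R := ℂ), ← h3, LinearMap.mem_ker]
  ext i
  have he := congrArg (eval p) (hfh i.1).sum_X_mul_pderiv
  have h0 := hp i.1 (hI' i.2)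
  simp only [map_sum, map_mul, eval_X, nsmul_eq_mul, h0, mul_zero] at he
  rw [Matrix.mulVecLin_apply, Matrix.mulVec, dotProduct, Pi.zero_apply, ← he]
  exact Finset.sum_congr rfl fun j _ => mul_comm _ _

lemma snc_L {n m : ℕ} (hn : 1 ≤ n) (f : Fin m → Rp n) (d : Fin m → ℕ)
    (hfh : ∀ i, (f i).IsHomogeneous (d i)) (hsnc : SNC n m f)
    {L : Type} [Field L] [Algebra ℂ L] (x : Fin n → L) (hx : x ≠ 0) (v : Fin m → L)
    (hv : ∀ k, aeval x (f k) ≠ 0 → v k = 0)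
    (hsum : ∀ j, ∑ k, v k * aeval x (pderiv j (f k)) = 0) : v = 0 := by
  classical
  let φ : Rp n →ₐ[ℂ] L := aeval x
  let 𝔮 : Ideal (Rp n) := RingHom.ker φ
  have : 𝔮.IsPrime := RingHom.ker_isPrime _
  have hp : ∃ p ∈ zeroLocus ℂ 𝔮, p ≠ 0 := by
    by_contra hcon
    push Not at hcon
    apply hx
    ext j
    have h1 : (X j : Rp n) ∈ 𝔮 := by
      rw [← IsPrime.vanishingIdeal_zeroLocus (K := ℂ) 𝔮, mem_vanishingIdeal_iff]
      intro p hp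
      simp [hcon p hp]
    have h2 : φ (X j) = 0 := h1
    simpa [φ] using h2
  obtain ⟨p, hp, hp0⟩ := hp
  have hpe : ∀ g ∈ 𝔮, eval p g = 0 := by
    intro g hg
    simpa using mem_zeroLocus_iff.1 hp g hg
  let I : Finset (Fin m) := Finset.univ.filter fun k => φ (f k) = 0
  have hI : ∀ k, k ∈ I ↔ φ (f k) = 0 := by intro k; simp [I]
  have hpI : ∀ i ∈ I, eval p (f i) = 0 := fun i hi => hpe _ ((hI i).1 hi)
  have hIn : I.card < n := by
    by_contra hcon
    exact hp0 (snc_card hn f d hfh hsnc I (by omega) p hpI)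
  have hv' : ∀ k, k ∉ I → v k = 0 := fun k hk => hv k (fun h => hk ((hI k).2 h))
  by_cases hI0 : I.card = 0
  · ext k
    apply hv'
    rw [Finset.card_eq_zero.1 hI0]; simp
  have hr := hsnc.2 I (by omega) (by omega) p hp0 hpI
  set A := (Matrix.of fun (i : I) (j : Fin n) => eval p (pderiv j (f i.1))) with hA
  have hsurj : Function.Surjective A.mulVec := by
    have : LinearMap.range A.mulVecLin = ⊤ := by
      apply Submodule.eq_top_of_finrank_eq
      rw [Module.finrank_fintype_fun_eq_card, Fintype.card_coe, ← hr]; rfl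
    exact LinearMap.range_eq_top.1 this
  obtain ⟨B, hB⟩ := Matrix.mulVec_surjective_iff_exists_right_inverse.1 hsurj
  let M0 : Matrix I (Fin n) (Rp n) := Matrix.of fun (i : I) (j : Fin n) => pderiv j (f i.1)
  let B0 : Matrix (Fin n) I (Rp n) := B.map C
  let M : Matrix I I (Rp n) := M0 * B0
  have hMp : M.map (eval p) = 1 := by
    change (M0 * B0).map (eval p) = 1
    rw [Matrix.map_mul, ← hB]
    congr 1
    ext i j; simp [B0]
  have hdet : M.det ∉ 𝔮 := by
    intro h
    have := hpe _ h
    rw [RingHom.map_det, RingHom.mapMatrix_apply, hMp, Matrix.det_one] at this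
    exact one_ne_zero this
  have hdet' : (M.map φ).det ≠ 0 := by
    intro h
    apply hdet
    change φ M.det = 0
    rw [AlgHom.map_det]; exact h
  have hw := Matrix.eq_zero_of_vecMul_eq_zero hdet' (v := fun i : I => v i) (by
    have : M.map φ = (Matrix.of fun (i : I) (j : Fin n) => φ (pderiv j (f i.1))) *
        B0.map φ := by
      change (M0 * B0).map φ = _
      rw [Matrix.map_mul]; rfl
    rw [this, ← Matrix.vecMul_vecMul]
    have hzero : Matrix.vecMul (fun i : I => v i)
        (Matrix.of fun (i : I) (j : Fin n) => φ (pderiv j (f i.1))) = 0 := ?_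
    · rw [hzero, Matrix.zero_vecMul]
    ext j
    have h1 := hsum j
    rw [← Finset.sum_subset (Finset.subset_univ I)
      (fun k _ hk => by rw [hv' k hk, zero_mul])] at h1
    rw [← Finset.sum_coe_sort] at h1
    exact h1)
  ext k
  by_cases hk : k ∈ I
  · exact congrFun hw ⟨k, hk⟩
  · exact hv' k hk

lemma der_chain {n : ℕ} {L : Type} [Field L] [Algebra ℂ L] (D : Derivation ℂ L L)
    (x : Fin n → L) (g : Rp n) : D (aeval x g) = ∑ j, aeval x (pderiv j g) * D (x j) := by
  induction g using MvPolynomial.induction_on with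
  | C a => simp
  | add p q hp hq => simp [hp, hq, add_mul, Finset.sum_add_distrib]
  | mul_X p i hp =>
    simp only [map_mul, aeval_X, Derivation.leibniz, hp, smul_eq_mul, map_add, add_mul,
      Finset.sum_add_distrib, pderiv_X, Pi.single_apply]
    congr 1
    · rw [Finset.sum_eq_single i]
      · simp
      · intro b _ hb; simp [hb.symm]
      · simp
    · rw [Finset.mul_sum]
      exact Finset.sum_congr rfl fun _ _ => by ring

theorem dim_bound {n m : ℕ} (hn : 1 ≤ n) (hm : n ≤ m) (f : Fin m → Rp n) (d : Fin m → ℕ)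
    (hfh : ∀ i, (f i).IsHomogeneous (d i)) (hd : ∀ i, 1 ≤ d i) (hsnc : SNC n m f)
    {L : Type} [Field L] [Algebra ℂ L] (x : Fin n → L) (s : Fin m → L)
    (hgen : ∀ D : Derivation ℂ L L, (∀ j, D (x j) = 0) → (∀ i, D (s i) = 0) → D = 0)
    (i i0 : Fin m) (hi : aeval x (f i) = 0)
    (hdep : x ≠ 0 → ∃ c : Fin m → L, (∀ j, ∑ k, c k * aeval x (pderiv j (f k)) = 0) ∧
      ∀ k, k ≠ i0 → s k = c k * aeval x (f k))
    {ι : Type} [Fintype ι] {z : ι → L} (hz : AlgebraicIndependent ℂ z) :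
    Fintype.card ι ≤ m := by
  classical
  by_cases hx : x = 0
  · have := der_bound_inj hz s (fun D hD => hgen D (fun j => by simp [hx]) hD)
    simpa using this
  obtain ⟨c, hc1, hc2⟩ := hdep hx
  have hz0 : ∀ p : Fin n → ℂ, (∀ k, eval p (f k) = 0) → p = 0 := fun p hp =>
    snc_card hn f d hfh hsnc Finset.univ (by simpa using hm) p (fun k _ => hp k)
  have hsub : ∀ g : Fin m → L, g i = 0 → ∑ k : {k // k ≠ i}, g k = ∑ k, g k := by
    intro g hg
    rw [← Finset.sum_erase _ hg]
    exact (Finset.sum_subtype _ (by simp) g).symm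
  have key := der_bound hz (κ := {k // k ≠ i}) (fun k => c k) (fun k => aeval x (f k)) (s i0) ?_ ?_
  · have h1 : Fintype.card {k // k ≠ i} = m - 1 := by simp
    have h2 : 0 < m := i.pos
    omega
  · intro D
    rw [hsub (fun k => c k * D (aeval x (f k))) (by simp [hi])]
    simp only [der_chain, Finset.mul_sum]
    rw [Finset.sum_comm]
    refine Finset.sum_eq_zero fun j _ => ?_
    have := congrArg (· * D (x j)) (hc1 j)
    simpa [Finset.sum_mul, mul_assoc] using this
  · intro D hDc hDy hDs
    have hDy' : ∀ k, D (aeval x (f k)) = 0 := by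
      intro k
      by_cases h : k = i
      · rw [h, hi, map_zero]
      · exact hDy ⟨k, h⟩
    have hDx : ∀ j, D (x j) = 0 := by
      intro j
      let φ : Rp n →ₐ[ℂ] L := aeval x
      have h1 := int_X f d hfh hd hz0 (X j)
      refine der_algebraic D ((Algebra.adjoin ℂ (Set.range f)).map φ) ?_ _ ?_
      · intro a ha
        rw [AlgHom.map_adjoin] at ha
        induction ha using Algebra.adjoin_induction with
        | mem a ha =>
          obtain ⟨_, ⟨k, rfl⟩, rfl⟩ := ha
          exact hDy' k
        | algebraMap r => simp
        | add a b _ _ ha hb => simp [ha, hb]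
        | mul a b _ _ ha hb => simp [ha, hb]
      · obtain ⟨p, hp, hp0⟩ := h1
        let A := Algebra.adjoin ℂ (Set.range f)
        let ψ : A →+* (A.map φ) :=
          ((φ.comp A.val).codRestrict (A.map φ) (fun a => ⟨a, a.2, rfl⟩)).toRingHom
        refine ⟨p.map ψ, hp.map ψ, ?_⟩
        rw [Polynomial.eval₂_map]
        have := congrArg φ hp0
        rw [map_zero] at this
        change φ.toRingHom (Polynomial.eval₂ _ _ _) = 0 at this
        rw [Polynomial.hom_eval₂] at this
        have hX : φ.toRingHom (X j) = x j := aeval_X _ _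
        rw [hX] at this
        exact this
    have hDg : ∀ g : Rp n, D (aeval x g) = 0 := by
      intro g; rw [der_chain]; simp [hDx]
    have hDci : D (c i) = 0 := by
      have := snc_L hn f d hfh hsnc x hx (Pi.single i (D (c i))) (by
        intro k hk
        rw [Pi.single_apply, if_neg]
        rintro rfl; exact hk hi) (by
        intro j
        have h1 := congrArg D (hc1 j)
        simp only [map_sum, Derivation.leibniz, hDg, smul_eq_mul, mul_zero, zero_add, map_zero] at h1
        rw [← h1]
        refine Finset.sum_congr rfl fun k _ => ?_
        by_cases hk : k = i
        · subst hk; simp [mul_comm]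
        · have : D (c k) = 0 := hDc ⟨k, hk⟩
          simp [hk, this])
      simpa using congrFun this i
    refine hgen D hDx fun k => ?_
    by_cases hk : k = i0
    · rw [hk, hDs]
    rw [hc2 k hk, Derivation.leibniz, hDy']
    by_cases hki : k = i
    · rw [hki, hDci]; simp
    · have : D (c k) = 0 := hDc ⟨k, hki⟩
      rw [this]; simp

end PartC4

section PartD1
variable {S : Type*} [CommRing S] {κ : Type*} [Fintype κ] [DecidableEq κ] {N : ℕ}

/-- The determinant as an alternating map. -/
def exD (e : Fin N ≃ κ) : (κ → S) [⋀^Fin N]→ₗ[S] S :=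
  Matrix.detRowAlternating.compLinearMap (LinearMap.funLeft S S e)

lemma exD_apply (e : Fin N ≃ κ) (v : Fin N → κ → S) :
    exD e v = (Matrix.of fun i j => v i (e j)).det := rfl

/-- The top form. -/
def exTop (e : Fin N ≃ κ) : ExteriorAlgebra S (κ → S) →ₗ[S] S :=
  ExteriorAlgebra.liftAlternating (Pi.single N (exD e))

lemma exTop_ιMulti (e : Fin N ≃ κ) (v : Fin N → κ → S) :
    exTop e (ExteriorAlgebra.ιMulti S N v) = (Matrix.of fun i j => v i (e j)).det := by
  rw [exTop, ExteriorAlgebra.liftAlternating_apply_ιMulti, Pi.single_eq_same, exD_apply]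

lemma ιMulti_top (e : Fin N ≃ κ) (v : Fin N → κ → S) :
    ExteriorAlgebra.ιMulti S N v = exTop e (ExteriorAlgebra.ιMulti S N v) •
      ExteriorAlgebra.ιMulti S N (fun i => Pi.single (e i) (1 : S)) := by
  have : ExteriorAlgebra.ιMulti S N = (LinearMap.toSpanSingleton S (ExteriorAlgebra S (κ → S))
      (ExteriorAlgebra.ιMulti S N (fun i => Pi.single (e i) (1 : S)))).compAlternatingMap
        (exD e) := by
    refine Module.Basis.ext_alternating (Pi.basisFun S κ) ?_
    intro v hv
    have hv2 : Function.Bijective (e.symm ∘ v) :=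
      Finite.injective_iff_bijective.1 (e.symm.injective.comp hv)
    have hb : (fun i => Pi.basisFun S κ (v i)) =
        (fun i => Pi.single (e i) (1 : S)) ∘ (Equiv.ofBijective _ hv2) := by
      funext i; simp
    rw [hb, AlternatingMap.map_perm, LinearMap.compAlternatingMap_apply, AlternatingMap.map_perm,
      LinearMap.toSpanSingleton_apply, exD_apply]
    have : (Matrix.of fun i j => (Pi.single (e i) (1 : S) : κ → S) (e j)) = 1 := by
      ext i j
      simp [Matrix.one_apply, Pi.single_apply, eq_comm]
    rw [this]; simp
  conv_lhs => rw [this]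
  rw [exTop_ιMulti]; rfl

lemma ex_top_eq (e : Fin N ≃ κ) {w : ExteriorAlgebra S (κ → S)} (hw : w ∈ ⋀[S]^N (κ → S)) :
    w = exTop e w • ExteriorAlgebra.ιMulti S N (fun i => Pi.single (e i) (1 : S)) := by
  rw [← ExteriorAlgebra.ιMulti_span_fixedDegree] at hw
  induction hw using Submodule.span_induction with
  | mem x h => obtain ⟨v, rfl⟩ := h; exact ιMulti_top e v
  | zero => simp
  | add x y _ _ hx hy => rw [map_add, add_smul, ← hx, ← hy]
  | smul a x _ hx => rw [map_smul, smul_eq_mul, mul_smul, ← hx]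

lemma ex_top_ideal (e : Fin N ≃ κ) (w : ExteriorAlgebra S (κ → S)) (hw : w ∈ ⋀[S]^N (κ → S))
    (𝔟 : Ideal S) (h : exTop e w ∈ 𝔟) : w ∈ 𝔟 • ⋀[S]^N (κ → S) := by
  rw [ex_top_eq e hw]
  exact Submodule.smul_mem_smul h (ExteriorAlgebra.ιMulti_range S N ⟨_, rfl⟩)

lemma ex_above (e : Fin N ≃ κ) {w : ExteriorAlgebra S (κ → S)}
    (hw : w ∈ ⋀[S]^(N+1) (κ → S)) : w = 0 := by
  have h0 : (ExteriorAlgebra.ιMulti S (N+1) : (κ → S) [⋀^Fin (N+1)]→ₗ[S] _) = 0 := by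
    refine Module.Basis.ext_alternating (Pi.basisFun S κ) ?_
    intro v hv
    have := Fintype.card_le_of_injective v hv
    rw [← Fintype.card_congr e] at this
    simp at this
  rw [← ExteriorAlgebra.ιMulti_span_fixedDegree, h0] at hw
  induction hw using Submodule.span_induction with
  | mem x h => obtain ⟨v, rfl⟩ := h; rfl
  | zero => rfl
  | add x y _ _ hx hy => rw [hx, hy, add_zero]
  | smul a x _ hx => rw [hx, smul_zero]

lemma ex_basis_span (q : ℕ) {w : ExteriorAlgebra S (κ → S)} (hw : w ∈ ⋀[S]^q (κ → S)) :
    w ∈ Submodule.span S (Set.range fun c : Fin q → κ =>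
      ExteriorAlgebra.ιMulti S q (fun i => (Pi.single (c i) (1 : S) : κ → S))) := by
  induction q generalizing w with
  | zero =>
    rw [ExteriorAlgebra.exteriorPower, pow_zero, Submodule.mem_one] at hw
    obtain ⟨r, rfl⟩ := hw
    rw [Algebra.algebraMap_eq_smul_one]
    refine Submodule.smul_mem _ _ (Submodule.subset_span ⟨Fin.elim0, ?_⟩)
    exact ExteriorAlgebra.ιMulti_zero_apply _
  | succ q ih =>
    suffices h1 : ∀ v : κ → S, ∀ w ∈ ⋀[S]^q (κ → S), ExteriorAlgebra.ι S v * w ∈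
        Submodule.span S (Set.range fun c : Fin (q+1) → κ =>
          ExteriorAlgebra.ιMulti S (q+1) (fun i => (Pi.single (c i) (1 : S) : κ → S))) from
      ex_succ_induction h1 (fun x y hx hy => Submodule.add_mem _ hx hy) hw
    intro v w hw
    have := ih hw
    induction this using Submodule.span_induction with
    | mem x h =>
      obtain ⟨c, rfl⟩ := h
      have hv : v = ∑ k, v k • (Pi.single k (1:S) : κ → S) := by
        conv_lhs => rw [← Finset.univ_sum_single v]
        refine Finset.sum_congr rfl fun k _ => ?_
        rw [← Pi.single_smul]; simp
      rw [hv, map_sum, Finset.sum_mul]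
      refine Submodule.sum_mem _ fun k _ => ?_
      rw [map_smul, smul_mul_assoc]
      refine Submodule.smul_mem _ _ (Submodule.subset_span ⟨Fin.cons k c, ?_⟩)
      dsimp only
      rw [ExteriorAlgebra.ιMulti_succ_apply]
      rfl
    | zero => rw [mul_zero]; exact Submodule.zero_mem _
    | add x y hx' hy' hx hy =>
      rw [mul_add]
      exact Submodule.add_mem _ (hx (by rw [← ExteriorAlgebra.ιMulti_span_fixedDegree]; exact Submodule.span_mono (by rintro _ ⟨c, rfl⟩; exact ⟨_, rfl⟩) hx')) (hy (by rw [← ExteriorAlgebra.ιMulti_span_fixedDegree]; exact Submodule.span_mono (by rintro _ ⟨c, rfl⟩; exact ⟨_, rfl⟩) hy'))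
    | smul a x hx' hx =>
      rw [mul_smul_comm]
      exact Submodule.smul_mem _ _ (hx (by rw [← ExteriorAlgebra.ιMulti_span_fixedDegree]; exact Submodule.span_mono (by rintro _ ⟨c, rfl⟩; exact ⟨_, rfl⟩) hx'))

/-- completing independent families by standard basis vectors. -/
lemma exists_completion {L : Type*} [Field L] {G : ℕ} (v : Fin G → κ → L)
    (hv : LinearIndependent L v) : ∀ p, G + p ≤ Fintype.card κ →
    ∃ c : Fin p → κ, LinearIndependent L (Fin.append v (fun i => (Pi.single (c i) (1:L) : κ → L))) := by
  intro p
  induction p with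
  | zero =>
    intro _
    refine ⟨Fin.elim0, ?_⟩
    rw [Fin.append_right_nil _ _ rfl]
    exact hv
  | succ q ih =>
    intro hq
    obtain ⟨c, hc⟩ := ih (by omega)
    set u := Fin.append v (fun i => (Pi.single (c i) (1:L) : κ → L)) with hu
    have : ∃ k, (Pi.single k (1:L) : κ → L) ∉ Submodule.span L (Set.range u) := by
      by_contra hcon
      push Not at hcon
      have htop : Submodule.span L (Set.range u) = ⊤ := by
        rw [eq_top_iff, ← (Pi.basisFun L κ).span_eq, Submodule.span_le]
        rintro _ ⟨k, rfl⟩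
        rw [Pi.basisFun_apply]; exact hcon k
      have h1 := finrank_span_eq_card hc
      rw [htop, finrank_top, Module.finrank_fintype_fun_eq_card, Fintype.card_fin] at h1
      omega
    obtain ⟨k, hk⟩ := this
    refine ⟨Fin.snoc c k, ?_⟩
    have h2 := linearIndependent_finSnoc.2 ⟨hc, hk⟩
    have h3 : (Fin.append v (fun i => (Pi.single ((Fin.snoc c k : Fin (q+1) → κ) i) (1:L) : κ → L))) =
        Fin.snoc (α := fun _ => κ → L) u (Pi.single k (1:L)) := by
      rw [hu, ← Fin.append_snoc]
      congr 1
      funext i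
      refine Fin.lastCases ?_ (fun i => ?_) i <;> simp
    rw [h3]
    exact h2

end PartD1

section PartD2

lemma exTop_ιMulti' {S : Type*} [CommRing S] {κ : Type*} {N M : ℕ}
    (h : M = N) (e : Fin N ≃ κ) (v : Fin M → κ → S) [Fintype κ] [DecidableEq κ] :
    exTop e (ExteriorAlgebra.ιMulti S M v) =
      (Matrix.of fun i j => v i (e (Fin.cast h j))).det := by
  subst h
  exact exTop_ιMulti e v

lemma rows_dependent {S : Type*} [CommRing S] {κ : Type*} [Fintype κ] [DecidableEq κ]
    {G p : ℕ} (e : Fin (p + G) ≃ κ) (ρ : ℕ → κ → S) {L : Type*} [Field L] (φ : S →+* L)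
    (h : ∀ u ∈ exI ρ G p (exTop e), φ u = 0) :
    ¬ LinearIndependent L (fun (i : Fin G) (k : κ) => φ (ρ i k)) := by
  intro hli
  have hcard : Fintype.card κ = p + G := by rw [← Fintype.card_congr e, Fintype.card_fin]
  obtain ⟨c, hc⟩ := exists_completion _ hli p (by omega)
  have h1 := h (exTop e (exPr ρ 0 G * ExteriorAlgebra.ιMulti S p
    (fun i => (Pi.single (c i) (1 : S) : κ → S)))) ((mem_exI _ _ _ _ _).2
      ⟨_, ExteriorAlgebra.ιMulti_range S p ⟨_, rfl⟩, rfl⟩)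
  rw [exPr_eq_ιMulti, ExteriorAlgebra.ιMulti_mul_ιMulti, exTop_ιMulti' (by omega), RingHom.map_det] at h1
  have h2 : LinearIndependent L (fun (i : Fin (G + p)) => ((LinearEquiv.funCongrLeft L L
      ((finCongr (by omega)).trans e : Fin (G + p) ≃ κ)) ((Fin.append (fun (i : Fin G) (k : κ) => φ (ρ i k))
        (fun i => (Pi.single (c i) (1:L) : κ → L))) i))) :=
    hc.map' _ (LinearEquiv.ker _)
  have h3 : IsUnit (φ.mapMatrix (Matrix.of fun (i : Fin (G + p)) (j : Fin (G + p)) =>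
      (Fin.append (fun i : Fin G => ρ (0 + i)) (fun i => (Pi.single (c i) (1 : S) : κ → S)))
        i (e (Fin.cast (by omega) j)))) := by
    rw [← Matrix.linearIndependent_rows_iff_isUnit]
    convert h2 using 1
    funext i j
    simp only [Matrix.row, RingHom.mapMatrix_apply, Matrix.map_apply, Matrix.of_apply]
    rw [LinearEquiv.funCongrLeft_apply, LinearMap.funLeft_apply]
    simp only [Equiv.trans_apply, finCongr_apply]
    refine Fin.addCases (fun i => ?_) (fun i => ?_) i
    · simp
    · rw [Fin.append_right, Fin.append_right, Pi.single_apply, Pi.single_apply]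
      split_ifs <;> simp
  rw [Matrix.isUnit_iff_isUnit_det, h1] at h3
  exact not_isUnit_zero h3

variable {n m : ℕ}

/-- The rows of the matrix. -/
def grow (f : Fin (m+1) → Rp n) (i : Fin (m+1)) : Fin m ⊕ Fin n → Sp n (m+1) :=
  Sum.elim (fun k => if i = k.succ then toS n (m+1) (f i) else 0)
    (fun j => toS n (m+1) (pderiv j (f i)))

/-- The last row. -/
def gs (n m : ℕ) : Fin m ⊕ Fin n → Sp n (m+1) :=
  Sum.elim (fun k => X (Sum.inl k.succ)) (fun _ => 0)

/-- All the rows. -/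
def gρ (f : Fin (m+1) → Rp n) (i : ℕ) : Fin m ⊕ Fin n → Sp n (m+1) :=
  if h : i < m+1 then grow f ⟨i, h⟩ else gs n m

lemma gρ_last (f : Fin (m+1) → Rp n) : gρ f (m+1) = gs n m := by simp [gρ]

lemma gρ_lt (f : Fin (m+1) → Rp n) (i : Fin (m+1)) : gρ f i = grow f i := by
  rw [gρ, dif_pos i.2]

lemma toS_eq_aeval (n m : ℕ) {L : Type*} [Field L] [Algebra ℂ L] (φ : Sp n m →ₐ[ℂ] L) (g : Rp n) :
    φ (toS n m g) = aeval (fun j => φ (X (Sum.inr j))) g := by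
  have : φ.comp (toS n m) = aeval (fun j => φ (X (Sum.inr j))) := by
    ext j; simp [toS]
  exact DFunLike.congr_fun this g

lemma dep_coeffs (hn : 1 ≤ n) (f : Fin (m+1) → Rp n) (d : Fin (m+1) → ℕ)
    (hfh : ∀ i, (f i).IsHomogeneous (d i)) (hd : ∀ i, 1 ≤ d i) (hsnc : SNC n (m+1) f)
    {p : ℕ} (e : Fin (p + (m+2)) ≃ Fin m ⊕ Fin n) {L : Type} [Field L] [Algebra ℂ L]
    (φ : Sp n (m+1) →ₐ[ℂ] L)
    (h : ∀ u ∈ exI (gρ f) (m+2) p (exTop e), φ u = 0)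
    (hx : (fun j => φ (X (Sum.inr j))) ≠ 0) :
    ∃ c : Fin (m+1) → L,
      (∀ j, ∑ k, c k * aeval (fun j => φ (X (Sum.inr j))) (pderiv j (f k)) = 0) ∧
      ∀ k, k ≠ 0 → φ (X (Sum.inl k)) = c k * aeval (fun j => φ (X (Sum.inr j))) (f k) := by
  have : CharZero L := charZero_of_injective_algebraMap (algebraMap ℂ L).injective
  set x := fun j => φ (X (Sum.inr j)) with hxdef
  have hdep := rows_dependent e (gρ f) (φ : Sp n (m+1) →+* L) h
  set r : Fin (m+2) → (Fin m ⊕ Fin n → L) := fun i k => φ (gρ f i k) with hr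
  have hr' : r = Fin.snoc (α := fun _ => Fin m ⊕ Fin n → L)
      (fun (i : Fin (m+1)) k => φ (grow f i k)) (fun k => φ (gs n m k)) := by
    funext i
    refine Fin.lastCases ?_ (fun i => ?_) i
    · rw [Fin.snoc_last]; simp [hr, gρ_last]
    · rw [Fin.snoc_castSucc]; simp only [hr, Fin.val_castSucc, gρ_lt]
  have hdep' : ¬ LinearIndependent L r := hdep
  rw [hr', linearIndependent_finSnoc, not_and, not_not] at hdep'
  have hin : φ ∘ gs n m ∈ Submodule.span L (Set.range (fun (i : Fin (m+1)) k => φ (grow f i k))) := by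
    apply hdep'
    rw [Fintype.linearIndependent_iff]
    intro c hc
    have h1 : ∀ j, ∑ k, c k * aeval x (pderiv j (f k)) = 0 := by
      intro j
      have := congrFun hc (Sum.inr j)
      simpa [grow, toS_eq_aeval] using this
    have h2 : ∀ k : Fin m, c k.succ * aeval x (f k.succ) = 0 := by
      intro k
      have := congrFun hc (Sum.inl k)
      rw [Finset.sum_apply, Finset.sum_eq_single k.succ] at this
      · simpa [grow, toS_eq_aeval] using this
      · intro b _ hb
        simp [grow, hb]
      · simp
    have h3 : ∑ k, c k * ((d k : L) * aeval x (f k)) = 0 := by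
      have : ∀ k, (d k : L) * aeval x (f k) = ∑ j, x j * aeval x (pderiv j (f k)) := by
        intro k
        have := congrArg (aeval x) (hfh k).sum_X_mul_pderiv
        simpa using this.symm
      simp_rw [this, Finset.mul_sum]
      rw [Finset.sum_comm]
      refine Finset.sum_eq_zero fun j _ => ?_
      have := congrArg (fun t => x j * t) (h1 j)
      simp only [Finset.mul_sum, mul_zero] at this
      rw [← this]
      exact Finset.sum_congr rfl fun k _ => by ring
    rw [Fin.sum_univ_succ, Finset.sum_eq_zero, add_zero] at h3
    · have hall : c = 0 := by
        refine snc_L hn f d hfh hsnc x hx c ?_ h1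
        intro k hk
        refine Fin.cases (fun hk => ?_) (fun k hk => ?_) k hk
        · have : (d 0 : L) ≠ 0 := Nat.cast_ne_zero.2 (by have := hd 0; omega)
          have h4 : (d 0 : L) * aeval x (f 0) ≠ 0 := mul_ne_zero this hk
          exact (mul_eq_zero.1 h3).resolve_right h4
        · exact (mul_eq_zero.1 (h2 k)).resolve_right hk
      intro i; rw [hall]; rfl
    · intro k _
      have := congrArg (fun t => (d k.succ : L) * t) (h2 k)
      simp only [mul_zero] at this
      rw [← this]; ring
  rw [Submodule.mem_span_range_iff_exists_fun] at hin
  obtain ⟨c, hc⟩ := hin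
  refine ⟨c, ?_, ?_⟩
  · intro j
    have := congrFun hc (Sum.inr j)
    simpa [grow, gs, toS_eq_aeval] using this
  · intro k
    refine Fin.cases (fun h => absurd rfl h) (fun k _ => ?_) k
    have := congrFun hc (Sum.inl k)
    rw [Finset.sum_apply, Finset.sum_eq_single k.succ] at this
    · simp [grow, gs, toS_eq_aeval] at this
      exact this.symm
    · intro b _ hb
      simp [grow, hb]
    · simp

lemma gI_dim (hn : 1 ≤ n) (hm : n ≤ m+1) (f : Fin (m+1) → Rp n) (d : Fin (m+1) → ℕ)
    (hfh : ∀ i, (f i).IsHomogeneous (d i)) (hd : ∀ i, 1 ≤ d i) (hsnc : SNC n (m+1) f)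
    {p : ℕ} (e : Fin (p + (m+2)) ≃ Fin m ⊕ Fin n) (i : Fin (m+1)) (𝔮 : Ideal (Sp n (m+1)))
    (h𝔮 : 𝔮.IsPrime) (hi : toS n (m+1) (f i) ∈ 𝔮) (hle : exI (gρ f) (m+2) p (exTop e) ≤ 𝔮)
    (c : ℕ) (hc : TD 𝔮 c) : c ≤ m+1 := by
  obtain ⟨ι, _, z, rfl, hz⟩ := hc
  let L := FractionRing (Sp n (m+1) ⧸ 𝔮)
  let φ : Sp n (m+1) →ₐ[ℂ] L := (IsScalarTower.toAlgHom ℂ (Sp n (m+1) ⧸ 𝔮) L).comp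
    (Ideal.Quotient.mkₐ ℂ 𝔮)
  have hφ : ∀ u ∈ 𝔮, φ u = 0 := by
    intro u hu
    have : Ideal.Quotient.mkₐ ℂ 𝔮 u = 0 := Ideal.Quotient.eq_zero_iff_mem.2 hu
    rw [AlgHom.comp_apply, this, map_zero]
  have hinj : Function.Injective (IsScalarTower.toAlgHom ℂ (Sp n (m+1) ⧸ 𝔮) L) :=
    IsFractionRing.injective (Sp n (m+1) ⧸ 𝔮) L
  have hz' : AlgebraicIndependent ℂ ((IsScalarTower.toAlgHom ℂ (Sp n (m+1) ⧸ 𝔮) L) ∘ z) :=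
    hz.map' hinj
  refine dim_bound hn hm f d hfh hd hsnc (fun j => φ (X (Sum.inr j))) (fun k => φ (X (Sum.inl k)))
    ?_ i 0 ?_ ?_ hz'
  · intro D h1 h2
    have hD : ∀ u, D (φ u) = 0 := by
      intro u
      induction u using MvPolynomial.induction_on with
      | C a =>
        have : φ (C a) = algebraMap ℂ L a := φ.commutes a
        rw [this, D.map_algebraMap]
      | add a b ha hb => rw [map_add, map_add, ha, hb, add_zero]
      | mul_X a k ha =>
        have hk : D (φ (X k)) = 0 := by
          cases k with
          | inl k => exact h2 k
          | inr k => exact h1 k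
        rw [map_mul, D.leibniz, ha, hk]; simp
    ext y
    obtain ⟨a, b, hb, rfl⟩ := IsFractionRing.div_surjective (A := Sp n (m+1) ⧸ 𝔮) y
    obtain ⟨a, rfl⟩ := Ideal.Quotient.mk_surjective a
    obtain ⟨b, rfl⟩ := Ideal.Quotient.mk_surjective b
    have ha : D (algebraMap _ L (Ideal.Quotient.mk 𝔮 a)) = 0 := hD a
    have hb : D (algebraMap _ L (Ideal.Quotient.mk 𝔮 b)) = 0 := hD b
    rw [div_eq_mul_inv, D.leibniz, D.leibniz_inv, ha, hb]
    simp
  · rw [← toS_eq_aeval]; exact hφ _ hi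
  · intro hx
    exact dep_coeffs hn f d hfh hd hsnc e φ (fun u hu => hφ u (hle hu)) hx

end PartD2

section PartD3

section gen
variable {S : Type*} [CommRing S] {V : Type*} [AddCommGroup V] [Module S V]

lemma exPr_succ_right (ρ : ℕ → V) : ∀ r h, exPr (S := S) ρ h (r+1) =
    exPr ρ h r * ExteriorAlgebra.ι S (ρ (h + r)) := by
  intro r
  induction r with
  | zero => intro h; simp [exPr]
  | succ r ih =>
    intro h
    rw [exPr, ih, exPr, mul_assoc]
    congr 4
    omega

lemma exPr_comm (ρ : ℕ → V) (v : V) : ∀ r h w, ExteriorAlgebra.ι S v * (exPr ρ h r * w) =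
    (-1 : S)^r • (exPr ρ h r * (ExteriorAlgebra.ι S v * w)) := by
  intro r
  induction r with
  | zero => intro h w; simp [exPr]
  | succ r ih =>
    intro h w
    rw [exPr, mul_assoc, ex_anticomm, ih, mul_smul_comm, pow_succ, mul_assoc]
    simp

lemma exCon_exPr (ρ : ℕ → V) (φ : Module.Dual S V) : ∀ r h, (∀ i, h ≤ i → i < h + r → φ (ρ i) = 0) →
    ∀ w, exCon φ (exPr ρ h r * w) = (-1 : S)^r • (exPr ρ h r * exCon φ w) := by
  intro r
  induction r with
  | zero => intro h _ w; simp [exPr]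
  | succ r ih =>
    intro h hh w
    rw [exPr, mul_assoc, exCon_mul, hh h le_rfl (by omega), ih (h+1) (fun i h1 h2 => hh i (by omega) (by omega)),
      mul_smul_comm, pow_succ, mul_assoc]
    simp

end gen

variable {p m : ℕ}

/-- The ordering of the columns. -/
def ge (p m : ℕ) : Fin (p + (m+2)) ≃ Fin m ⊕ Fin (p+2) :=
  (finCongr (by omega)).trans finSumFinEquiv.symm

/-- The ideal of minors. -/
def gI (f : Fin (m+1) → Rp (p+2)) : Ideal (Sp (p+2) (m+1)) :=
  exI (gρ f) (m+2) p (exTop (ge p m))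

lemma toS_injective (n m : ℕ) : Function.Injective (toS n m) :=
  rename_injective _ Sum.inr_injective

lemma gI_sat (hm : p + 2 ≤ m+1) (f : Fin (m+1) → Rp (p+2)) (d : Fin (m+1) → ℕ)
    (hf0 : ∀ i, f i ≠ 0)
    (hfh : ∀ i, (f i).IsHomogeneous (d i)) (hd : ∀ i, 1 ≤ d i) (hsnc : SNC (p+2) (m+1) f)
    (i : Fin (m+1)) (u : Sp (p+2) (m+1)) (hu : toS (p+2) (m+1) (f i) * u ∈ gI f) : u ∈ gI f := by
  have hF : toS (p+2) (m+1) (f i) ≠ 0 := fun h => hf0 i (toS_injective _ _ (by rw [h, map_zero]))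
  obtain ⟨l, hl, hlJ, hreg⟩ := exists_regular_list' (gI f) (toS (p+2) (m+1) (f i)) hF (m+1) (p+1)
    (fun 𝔮 h𝔮 hi hle c hc => gI_dim (by omega) hm f d hfh hd hsnc (ge p m) i 𝔮 h𝔮 hi hle c hc)
    (by simp; omega)
  refine ex_saturation (gρ f) (m+2) p (exTop (ge p m)) ?_ _ l hl hlJ ?_ hreg u hu
  · intro w hw 𝔟 h
    exact ex_top_ideal (ge p m) w hw 𝔟 h
  · intro u hu
    exact (mul_eq_zero.1 hu).resolve_left hF

lemma gI_sat_prod (hm : p + 2 ≤ m+1) (f : Fin (m+1) → Rp (p+2)) (d : Fin (m+1) → ℕ)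
    (hf0 : ∀ i, f i ≠ 0)
    (hfh : ∀ i, (f i).IsHomogeneous (d i)) (hd : ∀ i, 1 ≤ d i) (hsnc : SNC (p+2) (m+1) f)
    (k : ℕ) (u : Sp (p+2) (m+1)) (hu : toS (p+2) (m+1) (∏ i, f i) ^ k * u ∈ gI f) : u ∈ gI f := by
  have h1 : ∀ s : Finset (Fin (m+1)), ∀ u, toS (p+2) (m+1) (∏ i ∈ s, f i) * u ∈ gI f → u ∈ gI f := by
    classical
    intro s
    induction s using Finset.induction_on with
    | empty => intro u hu; simpa using hu
    | insert a s ha ih =>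
      intro u hu
      rw [Finset.prod_insert ha, map_mul, mul_assoc] at hu
      exact ih u (gI_sat hm f d hf0 hfh hd hsnc a _ hu)
  induction k generalizing u with
  | zero => simpa using hu
  | succ k ih =>
    apply h1 Finset.univ
    apply ih
    rw [← mul_assoc, ← pow_succ]; exact hu

lemma toS_det {n m N : ℕ} (M : Matrix (Fin N) (Fin N) (Sp n m))
    (h : ∀ i j, ∃ r, toS n m r = M i j) : ∃ r, toS n m r = M.det := by
  choose r hr using h
  refine ⟨(Matrix.of r).det, ?_⟩
  rw [AlgHom.map_det]
  congr 1
  ext1 i j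
  exact hr i j

lemma gI_le_preI (f : Fin (m+1) → Rp (p+2)) : gI f ≤ preI (p+2) (m+1) f := by
  intro u hu
  obtain ⟨w, hw, rfl⟩ := (mem_exI _ _ _ _ _).1 hu
  have hw' := ex_basis_span p hw
  clear hu hw
  induction hw' using Submodule.span_induction with
  | zero => simp
  | add x y _ _ hx hy => rw [mul_add, map_add]; exact Ideal.add_mem _ hx hy
  | smul a x _ hx => rw [mul_smul_comm, map_smul]; exact Ideal.mul_mem_left _ _ hx
  | mem x h =>
    obtain ⟨c, rfl⟩ := h
    set ω := ExteriorAlgebra.ιMulti (Sp (p+2) (m+1)) p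
      (fun i => (Pi.single (c i) 1 : Fin m ⊕ Fin (p+2) → Sp (p+2) (m+1))) with hω
    let φ : (Fin m ⊕ Fin (p+2) → Sp (p+2) (m+1)) →ₗ[Sp (p+2) (m+1)] Sp (p+2) (m+1) :=
      (exTop (ge p m)).comp ((LinearMap.mulLeft _ (exPr (gρ f) 0 (m+1))).comp
        ((LinearMap.mulRight _ ω).comp (ExteriorAlgebra.ι _)))
    have hφ : ∀ v, φ v = exTop (ge p m) (exPr (gρ f) 0 (m+1) * (ExteriorAlgebra.ι _ v * ω)) :=
      fun v => rfl
    have hφsum : ∀ v, φ v = ∑ k, v k * φ (Pi.single k 1) := by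
      intro v
      conv_lhs => rw [← Finset.univ_sum_single v, map_sum]
      refine Finset.sum_congr rfl fun k _ => ?_
      rw [← smul_eq_mul, ← map_smul, ← Pi.single_smul]; simp
    have hrow : ∀ i, φ (grow f i) = 0 := by
      intro i
      rw [hφ, ← gρ_lt, exPr_mul_row _ _ _ _ (by omega) (by omega), map_zero]
    have hval : ∀ k, ∃ r, toS (p+2) (m+1) r = φ (Pi.single k 1) := by
      intro k
      rw [hφ, hω, exPr_eq_ιMulti]
      have h1 : ExteriorAlgebra.ι _ (Pi.single k 1 : Fin m ⊕ Fin (p+2) → Sp (p+2) (m+1)) *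
          ExteriorAlgebra.ιMulti (Sp (p+2) (m+1)) p
            (fun i => (Pi.single (c i) 1 : Fin m ⊕ Fin (p+2) → Sp (p+2) (m+1))) =
          ExteriorAlgebra.ιMulti (Sp (p+2) (m+1)) (p+1) (fun i =>
            (Pi.single ((Fin.cons k c : Fin (p+1) → _) i) 1 : Fin m ⊕ Fin (p+2) → Sp (p+2) (m+1))) := by
        rw [ExteriorAlgebra.ιMulti_succ_apply]; rfl
      rw [h1, ExteriorAlgebra.ιMulti_mul_ιMulti, exTop_ιMulti' (by omega)]
      apply toS_det
      intro i j
      rw [Matrix.of_apply]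
      refine Fin.addCases (fun i => ?_) (fun i => ?_) i
      · rw [Fin.append_left, zero_add, gρ_lt, grow]
        rcases (ge p m) (Fin.cast (by omega) j) with k | k
        · simp only [Sum.elim_inl]
          split_ifs
          · exact ⟨_, rfl⟩
          · exact ⟨0, map_zero _⟩
        · exact ⟨_, rfl⟩
      · rw [Fin.append_right, Pi.single_apply]
        split_ifs
        · exact ⟨1, map_one _⟩
        · exact ⟨0, map_zero _⟩
    choose r hr using hval
    refine Ideal.subset_span ⟨Fin.cons 0 (fun k => r (Sum.inl k)), fun j => r (Sum.inr j), ?_, ?_⟩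
    · intro i
      apply toS_injective (p+2) (m+1)
      have h1 := hrow i
      rw [hφsum, Fintype.sum_sum_type] at h1
      rw [map_zero, ← h1, map_add, map_mul, map_sum]
      congr 1
      · refine Fin.cases ?_ (fun i => ?_) i
        · simp only [Fin.cons_zero, map_zero, mul_zero]
          symm
          refine Finset.sum_eq_zero fun k _ => ?_
          simp [grow, (Fin.succ_ne_zero k).symm]
        · rw [Finset.sum_eq_single i]
          · simp [grow, hr]
          · intro b _ hb
            simp [grow, hb.symm]
          · simp
      · refine Finset.sum_congr rfl fun j _ => ?_
        rw [map_mul, hr, mul_comm]; rfl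
    · rw [exPr_succ_right, mul_assoc, zero_add, gρ_last, ← hφ, hφsum, Fintype.sum_sum_type]
      conv_rhs => rw [Fin.sum_univ_succ]
      simp [gs, hr]

end PartD3

section PartD4
variable {p m : ℕ}

/-- functional with given coefficients. -/
def exφ {S : Type*} [CommRing S] {κ : Type*} [Fintype κ] (ξ : κ → S) : Module.Dual S (κ → S) :=
  ∑ c, ξ c • LinearMap.proj c

lemma exφ_apply {S : Type*} [CommRing S] {κ : Type*} [Fintype κ] (ξ : κ → S) (v : κ → S) :
    exφ ξ v = ∑ c, ξ c * v c := by
  simp [exφ]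

lemma ge_above {w : ExteriorAlgebra (Sp (p+2) (m+1)) (Fin m ⊕ Fin (p+2) → Sp (p+2) (m+1))} {q : ℕ}
    (hq : q = p + (m + 2) + 1) (hw : w ∈ ⋀[Sp (p+2) (m+1)]^q (Fin m ⊕ Fin (p+2) → Sp (p+2) (m+1))) :
    w = 0 := by
  subst hq
  exact ex_above (ge p m) hw

lemma toS_euler (f : Fin (m+1) → Rp (p+2)) (d : Fin (m+1) → ℕ)
    (hfh : ∀ i, (f i).IsHomogeneous (d i)) (i : Fin (m+1)) :
    ∑ j, X (Sum.inr j) * toS (p+2) (m+1) (pderiv j (f i)) =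
      (d i : Sp (p+2) (m+1)) * toS (p+2) (m+1) (f i) := by
  have := congrArg (toS (p+2) (m+1)) (hfh i).sum_X_mul_pderiv
  simpa [toS] using this

lemma step_i (f : Fin (m+1) → Rp (p+2)) (d : Fin (m+1) → ℕ)
    (hfh : ∀ i, (f i).IsHomogeneous (d i)) (hd : ∀ i, 1 ≤ d i) (t : Sp (p+2) (m+1))
    (ht : (d 0 : Sp (p+2) (m+1)) * t = - ∑ k : Fin m, (d k.succ : Sp (p+2) (m+1)) * X (Sum.inl k.succ))
    (ζ) (hζ : ζ ∈ ⋀[Sp (p+2) (m+1)]^(p+1) (Fin m ⊕ Fin (p+2) → Sp (p+2) (m+1))) :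
    exTop (ge p m) (ExteriorAlgebra.ι _ (toS (p+2) (m+1) (f 0) • gs (p+2) m - t • grow f 0) *
      (exPr (gρ f) 1 m * ζ)) ∈ gI f := by
  set ψ : Module.Dual (Sp (p+2) (m+1)) (Fin m ⊕ Fin (p+2) → (Sp (p+2) (m+1))) :=
    exφ (Sum.elim (fun k => - (d k.succ : (Sp (p+2) (m+1)))) (fun j => X (Sum.inr j))) with hψ
  have h0 : ψ (grow f 0) = d 0 * toS (p+2) (m+1) (f 0) := by
    rw [hψ, exφ_apply, Fintype.sum_sum_type]
    simp only [grow, Sum.elim_inl, Sum.elim_inr, toS_euler f d hfh]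
    rw [Finset.sum_eq_zero, zero_add]
    intro k _
    rw [if_neg (Fin.succ_ne_zero k).symm, mul_zero]
  have hk : ∀ k : Fin m, ψ (grow f k.succ) = 0 := by
    intro k
    rw [hψ, exφ_apply, Fintype.sum_sum_type]
    simp only [grow, Sum.elim_inl, Sum.elim_inr, toS_euler f d hfh]
    rw [Finset.sum_eq_single k]
    · simp only [if_true]; ring
    · intro b _ hb; simp [hb.symm]
    · simp
  have hs : ψ (gs (p+2) m) = d 0 * t := by
    rw [hψ, exφ_apply, Fintype.sum_sum_type, ht]
    simp [gs]
  have hkill : ∀ i, 1 ≤ i → i < 1 + m → ψ (gρ f i) = 0 := by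
    intro i h1 h2
    have := hk ⟨i - 1, by omega⟩
    rw [← gρ_lt] at this
    simpa [Nat.sub_add_cancel h1] using this
  have hz : ExteriorAlgebra.ι (Sp (p+2) (m+1)) (grow f 0) * (ExteriorAlgebra.ι (Sp (p+2) (m+1)) (gs (p+2) m) * (exPr (gρ f) 1 m * ζ)) = 0 :=
    ge_above (by omega) (ex_mul_mem _ (ex_mul_mem _ (exPr_mul_mem (gρ f) _ ζ hζ m 1)))
  have hc := congrArg (fun w => exTop (ge p m) (exCon ψ w)) hz
  simp only [exCon_mul, h0, hs, exCon_exPr _ _ _ _ hkill, map_zero, map_sub, mul_sub, map_smul,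
    mul_smul_comm, smul_eq_mul] at hc
  have hmem : exTop (ge p m) (ExteriorAlgebra.ι (Sp (p+2) (m+1)) (grow f 0) * (exPr (gρ f) 1 m *
      (ExteriorAlgebra.ι (Sp (p+2) (m+1)) (gs (p+2) m) * exCon ψ ζ))) ∈ gI f := by
    refine (mem_exI _ _ _ _ _).2 ⟨exCon ψ ζ, exCon_mem ψ hζ, ?_⟩
    rw [exPr, exPr_succ_right, show 0 + 1 + m = m + 1 by omega, gρ_last]
    have : gρ f 0 = grow f 0 := gρ_lt f 0
    rw [this]
    simp only [mul_assoc, zero_add]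
  have hd0 : IsUnit (d 0 : (Sp (p+2) (m+1))) := by
    have h1 : (d 0 : ℂ) ≠ 0 := Nat.cast_ne_zero.2 (by have := hd 0; omega)
    have := (IsUnit.mk0 _ h1).map (C : ℂ →+* (Sp (p+2) (m+1)))
    rwa [map_natCast] at this
  have hmem2 : exTop (ge p m) (ExteriorAlgebra.ι (Sp (p+2) (m+1)) (grow f 0) *
      (ExteriorAlgebra.ι (Sp (p+2) (m+1)) (gs (p+2) m) * (exPr (gρ f) 1 m * exCon ψ ζ))) ∈ gI f := by
    rw [exPr_comm, mul_smul_comm, map_smul, smul_eq_mul]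
    exact Ideal.mul_mem_left _ _ hmem
  have hd1 := Ideal.unit_mul_mem_iff_mem (gI f) hd0 (x := exTop (ge p m) (ExteriorAlgebra.ι _
    (toS (p+2) (m+1) (f 0) • gs (p+2) m - t • grow f 0) * (exPr (gρ f) 1 m * ζ)))
  rw [← hd1]
  have := Ideal.mul_mem_left (gI f) (-(-1)^m) hmem2
  convert this using 1
  simp only [map_sub, map_smul, sub_mul, smul_mul_assoc, smul_eq_mul]
  linear_combination hc

lemma grow_mul_zero (f : Fin (m+1) → Rp (p+2)) (k : Fin m) (ζ) :
    ExteriorAlgebra.ι (Sp (p+2) (m+1)) (grow f k.succ) * (exPr (gρ f) 1 m * ζ) = 0 := by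
  rw [exPr_comm, ← gρ_lt, exPr_mul_row _ _ _ _ (by simp) (by simp; omega), smul_zero]

/-- The image of the vector of the `h_j`. -/
def gh (f : Fin (m+1) → Rp (p+2)) (t : Sp (p+2) (m+1)) (j : Fin (p+2)) : Sp (p+2) (m+1) :=
  t * toS (p+2) (m+1) ((∏ k : Fin m, f k.succ) * pderiv j (f 0)) +
    ∑ k : Fin m, X (Sum.inl k.succ) * toS (p+2) (m+1)
      (f 0 * ((Finset.univ.erase k).prod fun l => f l.succ) * pderiv j (f k.succ))

lemma step_ii (f : Fin (m+1) → Rp (p+2)) (d : Fin (m+1) → ℕ)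
    (hfh : ∀ i, (f i).IsHomogeneous (d i)) (hd : ∀ i, 1 ≤ d i) (t : Sp (p+2) (m+1))
    (ht : (d 0 : Sp (p+2) (m+1)) * t = - ∑ k : Fin m, (d k.succ : Sp (p+2) (m+1)) * X (Sum.inl k.succ))
    (ζ) (hζ : ζ ∈ ⋀[Sp (p+2) (m+1)]^(p+1) (Fin m ⊕ Fin (p+2) → Sp (p+2) (m+1))) :
    exTop (ge p m) (ExteriorAlgebra.ι _ (Sum.elim (fun _ => 0) (gh f t)) *
      (exPr (gρ f) 1 m * ζ)) ∈ gI f := by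
  have hv : (Sum.elim (fun _ => 0) (gh f t) : Fin m ⊕ Fin (p+2) → Sp (p+2) (m+1)) =
      ∑ k : Fin m, (X (Sum.inl k.succ) * toS (p+2) (m+1)
        (f 0 * ((Finset.univ.erase k).prod fun l => f l.succ))) • grow f k.succ -
      toS (p+2) (m+1) (∏ k : Fin m, f k.succ) •
        (toS (p+2) (m+1) (f 0) • gs (p+2) m - t • grow f 0) := by
    funext c
    rcases c with k | j
    · simp only [Sum.elim_inl, Pi.sub_apply, Finset.sum_apply, Pi.smul_apply, smul_eq_mul, grow, gs]
      rw [Finset.sum_eq_single k]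
      · rw [← Finset.mul_prod_erase _ _ (Finset.mem_univ k)]
        simp only [if_true, if_neg (Fin.succ_ne_zero k).symm, map_mul]
        ring
      · intro b _ hb; simp [hb]
      · simp
    · simp only [Sum.elim_inr, Pi.sub_apply, Finset.sum_apply, Pi.smul_apply, smul_eq_mul, grow, gs, gh,
        map_mul, mul_assoc]
      ring
  rw [hv, map_sub, map_sum, sub_mul, Finset.sum_mul, map_sub]
  refine Ideal.sub_mem _ ?_ ?_
  · rw [Finset.sum_eq_zero, map_zero]
    · exact Ideal.zero_mem _
    · intro k _
      rw [map_smul, smul_mul_assoc, grow_mul_zero, smul_zero]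
  · rw [map_smul, smul_mul_assoc, map_smul]
    exact Ideal.mul_mem_left _ _ (step_i f d hfh hd t ht ζ hζ)

lemma top_jac (f : Fin (m+1) → Rp (p+2)) :
    exTop (ge p m) (exPr (gρ f) 1 m * ExteriorAlgebra.ιMulti _ (p+2)
      (fun j => (Pi.single (Sum.inr j) 1 : Fin m ⊕ Fin (p+2) → Sp (p+2) (m+1)))) =
    toS (p+2) (m+1) (∏ k : Fin m, f k.succ) := by
  rw [exPr_eq_ιMulti, ExteriorAlgebra.ιMulti_mul_ιMulti, exTop_ιMulti' (by omega)]
  let M : Matrix (Fin m ⊕ Fin (p+2)) (Fin m ⊕ Fin (p+2)) (Sp (p+2) (m+1)) :=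
    Matrix.fromBlocks (Matrix.diagonal fun k => toS (p+2) (m+1) (f k.succ))
      (Matrix.of fun k j => toS (p+2) (m+1) (pderiv j (f k.succ))) 0 1
  have hM : M.det = toS (p+2) (m+1) (∏ k : Fin m, f k.succ) := by
    rw [Matrix.det_fromBlocks_zero₂₁, Matrix.det_diagonal, Matrix.det_one, mul_one, map_prod]
  rw [← hM, ← Matrix.det_submatrix_equiv_self finSumFinEquiv.symm M]
  congr 1
  ext1 i j
  rw [Matrix.of_apply, Matrix.submatrix_apply]
  have hj : ge p m (Fin.cast (by omega) j) = finSumFinEquiv.symm j := rfl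
  rw [hj]
  generalize finSumFinEquiv.symm j = c
  refine Fin.addCases (fun i => ?_) (fun i => ?_) i
  · rw [Fin.append_left, finSumFinEquiv_symm_apply_castAdd]
    have : gρ f (1 + i) = grow f i.succ := by
      rw [← gρ_lt, Fin.val_succ, add_comm 1 (i : ℕ)]
    rw [this]
    rcases c with k | k
    · simp only [grow, Sum.elim_inl, M, Matrix.fromBlocks_apply₁₁, Matrix.diagonal_apply, Fin.succ_inj]
    · rfl
  · rw [Fin.append_right, finSumFinEquiv_symm_apply_natAdd]
    rcases c with k | k
    · simp [M]
    · simp [M, Matrix.one_apply, Pi.single_apply, eq_comm]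

lemma step_iii (f : Fin (m+1) → Rp (p+2)) (d : Fin (m+1) → ℕ)
    (hfh : ∀ i, (f i).IsHomogeneous (d i)) (hd : ∀ i, 1 ≤ d i) (t : Sp (p+2) (m+1))
    (ht : (d 0 : Sp (p+2) (m+1)) * t = - ∑ k : Fin m, (d k.succ : Sp (p+2) (m+1)) * X (Sum.inl k.succ))
    (j : Fin (p+2)) :
    toS (p+2) (m+1) (∏ k : Fin m, f k.succ) ^ 2 * gh f t j ∈ gI f := by
  set F := toS (p+2) (m+1) (∏ k : Fin m, f k.succ) with hF
  set ψ : Module.Dual (Sp (p+2) (m+1)) (Fin m ⊕ Fin (p+2) → (Sp (p+2) (m+1))) :=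
    exφ (Sum.elim (fun k => - toS (p+2) (m+1)
      (((Finset.univ.erase k).prod fun l => f l.succ) * pderiv j (f k.succ)))
      (fun l => if j = l then F else 0)) with hψ
  have hk : ∀ k : Fin m, ψ (grow f k.succ) = 0 := by
    intro k
    rw [hψ, exφ_apply, Fintype.sum_sum_type]
    simp only [grow, Sum.elim_inl, Sum.elim_inr]
    rw [Finset.sum_eq_single k]
    · simp only [if_true, ite_mul, zero_mul, Finset.sum_ite_eq, Finset.mem_univ]
      rw [hF, ← Finset.mul_prod_erase _ _ (Finset.mem_univ k)]
      simp only [map_mul]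
      ring
    · intro b _ hb; simp [hb.symm]
    · simp
  have hh : ψ (Sum.elim (fun _ => 0) (gh f t)) = F * gh f t j := by
    rw [hψ, exφ_apply, Fintype.sum_sum_type]
    simp
  have hkill : ∀ i, 1 ≤ i → i < 1 + m → ψ (gρ f i) = 0 := by
    intro i h1 h2
    have := hk ⟨i - 1, by omega⟩
    rw [← gρ_lt] at this
    simpa [Nat.sub_add_cancel h1] using this
  set ζ := ExteriorAlgebra.ιMulti (Sp (p+2) (m+1)) (p+2)
      (fun j => (Pi.single (Sum.inr j) 1 : Fin m ⊕ Fin (p+2) → Sp (p+2) (m+1))) with hζdef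
  have hζ : ζ ∈ ⋀[Sp (p+2) (m+1)]^(p+2) (Fin m ⊕ Fin (p+2) → Sp (p+2) (m+1)) :=
    ExteriorAlgebra.ιMulti_range _ _ ⟨_, rfl⟩
  have hz : ExteriorAlgebra.ι (Sp (p+2) (m+1)) (Sum.elim (fun _ => 0) (gh f t)) * (exPr (gρ f) 1 m * ζ) = 0 :=
    ge_above (by omega) (ex_mul_mem _ (exPr_mul_mem (gρ f) _ ζ hζ m 1))
  have hc := congrArg (fun w => exTop (ge p m) (exCon ψ w)) hz
  simp only [exCon_mul, hh, exCon_exPr _ _ _ _ hkill, map_zero, map_sub, map_smul,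
    mul_smul_comm, smul_eq_mul, hζdef, top_jac] at hc
  have h2 := step_ii f d hfh hd t ht _ (exCon_mem ψ hζ)
  have h3 := Ideal.mul_mem_left (gI f) ((-1)^m) h2
  convert h3 using 1
  linear_combination hc

end PartD4

section PartD5

lemma preI_rel (n m : ℕ) (f : Fin m → Rp n) (a : Fin m → Rp n) (b : Fin n → Rp n)
    (hab : ∀ i, f i * a i + ∑ j, b j * pderiv j (f i) = 0) :
    toS n m (∏ i, f i) * ∑ i, X (Sum.inl i) * toS n m (a i) =
      - ∑ j, toS n m (b j) * hpoly n m f j := by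
  simp only [hpoly, Finset.mul_sum]
  rw [Finset.sum_comm, ← Finset.sum_neg_distrib]
  refine Finset.sum_congr rfl fun i _ => ?_
  have h2 := congrArg (fun g => X (Sum.inl i) * toS n m (((Finset.univ.erase i).prod f) * g)) (hab i)
  rw [← Finset.mul_prod_erase _ _ (Finset.mem_univ i)]
  simp only [map_mul, map_add, map_sum, mul_add, mul_zero, map_zero, Finset.mul_sum] at h2 ⊢
  rw [← sub_eq_zero, sub_neg_eq_add, ← h2]
  refine congrArg₂ (· + ·) ?_ ?_
  · ring
  · exact Finset.sum_congr rfl fun j _ => by ring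

lemma preI_le_IA (n m : ℕ) (f : Fin m → Rp n) : preI n m f ≤ IA n m f := by
  rw [preI, Ideal.span_le]
  rintro P ⟨a, b, hab, rfl⟩
  change _ ∈ Ideal.comap _ _
  rw [Ideal.mem_comap]
  have hu : IsUnit (algebraMap (Sp n m) (Localization.Away (toS n m (∏ i, f i))) (toS n m (∏ i, f i))) :=
    IsLocalization.Away.algebraMap_isUnit _
  rw [← Ideal.unit_mul_mem_iff_mem _ hu, ← map_mul]
  have h1 := preI_rel n m f a b hab
  rw [h1, map_neg, map_sum]
  refine neg_mem (Ideal.sum_mem _ fun j _ => ?_)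
  rw [map_mul]
  exact Ideal.mul_mem_left _ _ (Ideal.subset_span ⟨j, rfl⟩)

lemma IA_mem (n m : ℕ) (f : Fin m → Rp n) (P : Sp n m) (hP : P ∈ IA n m f) :
    ∃ k : ℕ, toS n m (∏ i, f i) ^ k * P ∈ Ideal.span (Set.range (hpoly n m f)) := by
  rw [IA, Ideal.mem_comap] at hP
  have h1 : Ideal.span (Set.range fun j =>
      algebraMap (Sp n m) (Localization.Away (toS n m (∏ i, f i))) (hpoly n m f j)) =
      (Ideal.span (Set.range (hpoly n m f))).map
        (algebraMap (Sp n m) (Localization.Away (toS n m (∏ i, f i)))) := by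
    rw [Ideal.map_span, ← Set.range_comp]; rfl
  rw [h1, IsLocalization.algebraMap_mem_map_algebraMap_iff (Submonoid.powers (toS n m (∏ i, f i)))] at hP
  obtain ⟨_, ⟨k, rfl⟩, hk⟩ := hP
  exact ⟨k, hk⟩

lemma linForm_mem (n m : ℕ) (f : Fin m → Rp n) (d : Fin m → ℕ)
    (hfh : ∀ i, (f i).IsHomogeneous (d i)) : linForm n m d ∈ preI n m f := by
  refine Ideal.subset_span ⟨fun i => (d i : Rp n), fun j => - X j, ?_, ?_⟩
  · intro i
    have := (hfh i).sum_X_mul_pderiv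
    rw [nsmul_eq_mul] at this
    simp only [neg_mul, Finset.sum_neg_distrib, this]
    ring
  · rw [linForm]
    refine Finset.sum_congr rfl fun i _ => ?_
    rw [map_natCast, mul_comm]

variable {p m : ℕ}

/-- Substitution for the first variable. -/
def gπ (t : Sp (p+2) (m+1)) : Sp (p+2) (m+1) →ₐ[ℂ] Sp (p+2) (m+1) :=
  aeval (Sum.elim (Fin.cons t (fun k => X (Sum.inl k.succ))) (fun j => X (Sum.inr j)))

lemma gπ_toS (t : Sp (p+2) (m+1)) (g : Rp (p+2)) :
    gπ t (toS (p+2) (m+1) g) = toS (p+2) (m+1) g := by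
  have : (gπ t).comp (toS (p+2) (m+1)) = toS (p+2) (m+1) := by
    ext j; simp [toS, gπ]
  exact DFunLike.congr_fun this g

lemma gπ_h (f : Fin (m+1) → Rp (p+2)) (hf0 : ∀ i, f i ≠ 0) (t : Sp (p+2) (m+1)) (j : Fin (p+2)) :
    gπ t (hpoly (p+2) (m+1) f j) = gh f t j := by
  have h0 : (Finset.univ.erase 0).prod f = ∏ k : Fin m, f k.succ := by
    apply mul_left_cancel₀ (hf0 0)
    rw [Finset.mul_prod_erase _ _ (Finset.mem_univ _), Fin.prod_univ_succ]
  have hk : ∀ k : Fin m, (Finset.univ.erase k.succ).prod f =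
      f 0 * (Finset.univ.erase k).prod fun l => f l.succ := by
    intro k
    apply mul_left_cancel₀ (hf0 k.succ)
    rw [Finset.mul_prod_erase _ _ (Finset.mem_univ _), Fin.prod_univ_succ,
      ← Finset.mul_prod_erase _ _ (Finset.mem_univ k)]
    ring
  rw [hpoly, map_sum, Fin.sum_univ_succ, gh]
  simp only [map_mul (gπ t), gπ_toS, h0, hk]
  simp [gπ]

lemma gentle_aux (hm : p + 2 ≤ m+1) (f : Fin (m+1) → Rp (p+2)) (d : Fin (m+1) → ℕ)
    (hf0 : ∀ i, f i ≠ 0)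
    (hfh : ∀ i, (f i).IsHomogeneous (d i)) (hd : ∀ i, 1 ≤ d i) (hsnc : SNC (p+2) (m+1) f) :
    IA (p+2) (m+1) f ≤ preI (p+2) (m+1) f := by
  intro P hP
  obtain ⟨k, hk⟩ := IA_mem _ _ f P hP
  have h1 : (d 0 : ℂ) ≠ 0 := Nat.cast_ne_zero.2 (by have := hd 0; omega)
  set t : Sp (p+2) (m+1) := C ((d 0 : ℂ)⁻¹) *
    - ∑ k : Fin m, (d k.succ : Sp (p+2) (m+1)) * X (Sum.inl k.succ) with ht0
  have hdC : (d 0 : Sp (p+2) (m+1)) * C ((d 0 : ℂ)⁻¹) = 1 := by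
    rw [← map_natCast (C : ℂ →+* Sp (p+2) (m+1)), ← map_mul, mul_inv_cancel₀ h1, map_one]
  have ht : (d 0 : Sp (p+2) (m+1)) * t =
      - ∑ k : Fin m, (d k.succ : Sp (p+2) (m+1)) * X (Sum.inl k.succ) := by
    rw [ht0, ← mul_assoc, hdC, one_mul]
  set F := toS (p+2) (m+1) (∏ k : Fin m, f k.succ) with hF
  have h2 : F ^ 2 * gπ t (toS (p+2) (m+1) (∏ i, f i) ^ k * P) ∈ gI f := by
    generalize toS (p+2) (m+1) (∏ i, f i) ^ k * P = Y at hk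
    induction hk using Submodule.span_induction with
    | mem x h =>
      obtain ⟨j, rfl⟩ := h
      rw [gπ_h f hf0]
      exact step_iii f d hfh hd t ht j
    | zero => simp
    | add x y _ _ hx hy => rw [map_add, mul_add]; exact Ideal.add_mem _ hx hy
    | smul a x _ hx =>
      rw [smul_eq_mul, map_mul, mul_left_comm]
      exact Ideal.mul_mem_left _ _ hx
  have h3 : gπ t P ∈ gI f := by
    apply gI_sat_prod hm f d hf0 hfh hd hsnc (k+2)
    have := Ideal.mul_mem_left (gI f) (toS (p+2) (m+1) (f 0) ^ 2) h2
    convert this using 1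
    rw [map_mul, map_pow, gπ_toS, pow_add]
    conv_lhs => arg 1; arg 2; rw [Fin.prod_univ_succ, map_mul, ← hF]
    ring
  have h4 : P - gπ t P ∈ preI (p+2) (m+1) f := by
    rw [← Ideal.Quotient.eq_zero_iff_mem, map_sub, sub_eq_zero]
    have hcomp : (Ideal.Quotient.mkₐ ℂ (preI (p+2) (m+1) f)) =
        (Ideal.Quotient.mkₐ ℂ (preI (p+2) (m+1) f)).comp (gπ t) := by
      apply MvPolynomial.algHom_ext
      rintro (i | j)
      · refine Fin.cases ?_ (fun i => ?_) i
        · rw [AlgHom.comp_apply]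
          apply Ideal.Quotient.eq.2
          have hl := Ideal.mul_mem_left (preI (p+2) (m+1) f) (C ((d 0 : ℂ)⁻¹)) (linForm_mem _ _ f d hfh)
          convert hl using 1
          simp only [gπ, aeval_X, Sum.elim_inl, Fin.cons_zero, linForm]
          rw [Fin.sum_univ_succ, ht0]
          linear_combination (-X (Sum.inl 0)) * hdC
        · simp [gπ]
      · simp [gπ]
    exact DFunLike.congr_fun hcomp P
  have h5 := Ideal.add_mem _ h4 (gI_le_preI f h3)
  rwa [sub_add_cancel] at h5

theorem snc_is_gentle' (n m : ℕ) (hn : 2 ≤ n) (hm : n + 1 ≤ m)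
    (f : Fin m → Rp n) (d : Fin m → ℕ)
    (hf0 : ∀ i, f i ≠ 0) (hfh : ∀ i, (f i).IsHomogeneous (d i)) (hd : ∀ i, 1 ≤ d i)
    (hsnc : SNC n m f) :
    preI n m f = IA n m f := by
  obtain ⟨p, rfl⟩ : ∃ p, n = p + 2 := ⟨n - 2, by omega⟩
  obtain ⟨m, rfl⟩ : ∃ k, m = k + 1 := ⟨m - 1, by omega⟩
  exact le_antisymm (preI_le_IA _ _ f) (gentle_aux (by omega) f d hf0 hfh hd hsnc)

end PartD5

/-- Under the SNC hypothesis, the pre-likelihood ideal equals the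
likelihood ideal: every SNC arrangement is gentle. -/
theorem snc_is_gentle (n m : ℕ) (hn : 2 ≤ n) (hm : n + 1 ≤ m)
    (f : Fin m → Rp n) (d : Fin m → ℕ)
    (hf0 : ∀ i, f i ≠ 0) (hfh : ∀ i, (f i).IsHomogeneous (d i)) (hd : ∀ i, 1 ≤ d i)
    (hsnc : SNC n m f) :
    preI n m f = IA n m f := by
  exact snc_is_gentle' n m hn hm f d hf0 hfh hd hsnc
end
end
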